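/- arXiv:1403.7609 — 7 statements merged into one kernel-verified Lean document; each statement's English description precedes it below -/
import Mathlib

section
/- With the setup below for a translation invariant linear equation L in s variables: for all real numbers m_1, …, m_s > 0 with m_1 + ⋯ + m_s > 2 and all u_1, …, u_s ∈ (ℤ/Pℤ)^*, there exist a constant C > 0 and a threshold N_1, depending only on F, L, c_0 and m_1 + ⋯ + m_s, such that for N ≥ N_1 one has ∑_{t ∈ ℤ/Pℤ} ∏_{i=1}^s |f̂_{A'}(u_i t)|^{m_i} ≤ C·δ^{−(m_1+⋯+m_s)}. -/
/-- The primorial of a real number `z`: the product of all primes `p ≤ z`. -/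
noncomputable def primor (z : ℝ) : ℕ :=
  ∏ p ∈ (Finset.range (⌊z⌋₊ + 1)).filter Nat.Prime, p

/-- `S_F(N, z)`: the set of natural numbers `n ≤ N` with `gcd(F(n), P(z)) = 1`. -/
noncomputable def SFset (F : ℤ → ℤ) (N : ℕ) (z : ℝ) : Finset ℕ :=
  (Finset.Icc 1 N).filter (fun n => Int.gcd (F n) (primor z) = 1)

/-- `A_b = {n : b + nM ∈ A}` (automatically contained in `[0, N]`). -/
def Abset (A : Finset ℕ) (N M b : ℕ) : Finset ℕ :=
  (Finset.range (N + 1)).filter (fun n => b + n * M ∈ A)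

/-- `f_C = d(C)⁻¹ · 1_C`, where `d(C) = |C|/P`. -/
noncomputable def fCfun {P : ℕ} (C : Finset (ZMod P)) : ZMod P → ℝ :=
  fun n => ((P : ℝ) / (C.card : ℝ)) * (if n ∈ C then 1 else 0)

/-- The Fourier transform `f̂(t) = P⁻¹ ∑_y f(y) e^{2πity/P}`. -/
noncomputable def FTP {P : ℕ} [Fact P.Prime] (f : ZMod P → ℝ) : ZMod P → ℂ :=
  fun t => (1 / (P : ℂ)) * ∑ y : ZMod P, (f y : ℂ) *
    Complex.exp (2 * Real.pi * Complex.I * (t.val : ℂ) * (y.val : ℂ) / (P : ℂ))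


lemma mert_one (n : ℕ) (hn : 1 ≤ n) :
    ∑ p ∈ (Finset.range (n + 1)).filter Nat.Prime, Real.log p / p ≤ Real.log n + Real.log 4 := by
  set S := (Finset.range (n + 1)).filter Nat.Prime with hS
  have hdvd : ∏ p ∈ S, p ^ (n / p) ∣ n.factorial := by
    apply Finset.prod_dvd_of_isRelPrime
    · intro p hp q hq hpq
      simp only [hS, Finset.coe_filter, Finset.mem_range, Set.mem_ofPred_eq] at hp hq
      rw [Function.onFun, ← Nat.coprime_iff_isRelPrime]
      exact Nat.Coprime.pow _ _ ((Nat.coprime_primes hp.2 hq.2).2 hpq)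
    · intro p hp
      simp only [hS, Finset.mem_filter, Finset.mem_range] at hp
      rw [Nat.Prime.pow_dvd_factorial_iff hp.2 (b := max 2 (Nat.log p n + 1)) (by simp)]
      have : (1:ℕ) ∈ Finset.Ico 1 (max 2 (Nat.log p n + 1)) := by simp
      calc n / p = n / p ^ 1 := by simp
        _ ≤ _ := Finset.single_le_sum (f := fun i => n / p ^ i) (fun _ _ => Nat.zero_le _) this
  have hle : ∏ p ∈ S, p ^ (n / p) ≤ n ^ n :=
    (Nat.le_of_dvd (Nat.factorial_pos n) hdvd).trans (Nat.factorial_le_pow n)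
  have hlog : ∑ p ∈ S, ((n / p : ℕ) : ℝ) * Real.log p ≤ n * Real.log n := by
    have h1 : Real.log ((∏ p ∈ S, p ^ (n / p) : ℕ) : ℝ) ≤ Real.log ((n ^ n : ℕ) : ℝ) := by
      apply Real.log_le_log
      · have : 0 < ∏ p ∈ S, p ^ (n / p) := Finset.prod_pos (fun p hp => by
          simp only [hS, Finset.mem_filter, Finset.mem_range] at hp
          exact pow_pos hp.2.pos _)
        exact_mod_cast this
      · exact_mod_cast hle
    rw [Nat.cast_prod, Real.log_prod] at h1
    · simpa using h1
    · intro p hp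
      simp only [hS, Finset.mem_filter, Finset.mem_range] at hp
      have := hp.2.pos
      positivity
  have hth : ∑ p ∈ S, Real.log p ≤ Real.log 4 * n := by
    have h := Chebyshev.theta_le_log4_mul_x (x := (n:ℝ)) (by positivity)
    rw [Chebyshev.theta_eq_sum_Icc] at h
    refine le_trans (le_of_eq ?_) h
    apply Finset.sum_congr _ (fun _ _ => rfl)
    ext p; simp [hS]
  have hn0 : (0:ℝ) < n := by exact_mod_cast hn
  have : n * ∑ p ∈ S, Real.log p / p ≤ n * (Real.log n + Real.log 4) := by
    calc n * ∑ p ∈ S, Real.log p / p = ∑ p ∈ S, (n / p : ℝ) * Real.log p := by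
          rw [Finset.mul_sum]; exact Finset.sum_congr rfl (fun p _ => by ring)
      _ ≤ ∑ p ∈ S, (((n / p : ℕ) : ℝ) * Real.log p + Real.log p) := by
          apply Finset.sum_le_sum
          intro p hp
          simp only [hS, Finset.mem_filter, Finset.mem_range] at hp
          have h1 : (n / p : ℝ) ≤ ((n / p : ℕ) : ℝ) + 1 := by
            have := (Nat.lt_floor_add_one (n / p : ℝ)).le
            rwa [Nat.floor_div_eq_div] at this
          have h2 : 0 ≤ Real.log p := Real.log_natCast_nonneg p
          nlinarith
      _ ≤ _ := by rw [Finset.sum_add_distrib]; linarith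
  exact le_of_mul_le_mul_left this hn0

lemma zeta_fin (σ : ℝ) (hσ : 0 < σ) (n : ℕ) :
    ∑ i ∈ Finset.range n, ((i + 1 : ℕ) : ℝ) ^ (-1 - σ) ≤ 1 + 1 / σ := by
  have key : ∀ n : ℕ, ∑ i ∈ Finset.range (n + 1), ((i + 1 : ℕ) : ℝ) ^ (-1 - σ)
      ≤ 1 + 1 / σ - (1 / σ) * ((n + 1 : ℕ) : ℝ) ^ (-σ) := by
    intro n
    induction n with
    | zero => simp
    | succ n ih =>
      rw [Finset.sum_range_succ]
      have ha : (0:ℝ) < ((n + 1 : ℕ) : ℝ) := by positivity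
      have hb : (0:ℝ) < ((n + 1 + 1 : ℕ) : ℝ) := by positivity
      have h1 : ((n + 1 + 1 : ℕ) : ℝ) ^ (-1 - σ) ≤ (1 / σ) * (((n + 1 : ℕ) : ℝ) ^ (-σ) - ((n + 1 + 1 : ℕ) : ℝ) ^ (-σ)) := by
        have e1 : ((n + 1 + 1 : ℕ) : ℝ) ^ (-1 - σ) = ((n + 1 + 1 : ℕ) : ℝ) ^ (-σ) * (1 / ((n + 1 + 1 : ℕ) : ℝ)) := by
          rw [show -1 - σ = -σ + (-1) by ring, Real.rpow_add hb, Real.rpow_neg_one, one_div]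
        have e2 : ((n + 1 : ℕ) : ℝ) ^ (-σ) = ((n + 1 + 1 : ℕ) : ℝ) ^ (-σ) * Real.exp (σ * (Real.log ((n + 1 + 1 : ℕ) : ℝ) - Real.log ((n + 1 : ℕ) : ℝ))) := by
          rw [Real.rpow_def_of_pos ha, Real.rpow_def_of_pos hb, ← Real.exp_add]
          congr 1; ring
        have e3 : 1 / ((n + 1 + 1 : ℕ) : ℝ) ≤ Real.log ((n + 1 + 1 : ℕ) : ℝ) - Real.log ((n + 1 : ℕ) : ℝ) := by
          rw [← Real.log_div hb.ne' ha.ne']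
          have := Real.one_sub_inv_le_log_of_pos (div_pos hb ha)
          refine le_trans (le_of_eq ?_) this
          rw [inv_div]
          field_simp
          push_cast; ring
        have e4 := Real.add_one_le_exp (σ * (Real.log ((n + 1 + 1 : ℕ) : ℝ) - Real.log ((n + 1 : ℕ) : ℝ)))
        have hp : 0 < ((n + 1 + 1 : ℕ) : ℝ) ^ (-σ) := Real.rpow_pos_of_pos hb _
        rw [e1, e2]
        have : σ * (1 / ((n + 1 + 1 : ℕ) : ℝ)) ≤ Real.exp (σ * (Real.log ((n + 1 + 1 : ℕ) : ℝ) - Real.log ((n + 1 : ℕ) : ℝ))) - 1 := by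
          nlinarith [mul_le_mul_of_nonneg_left e3 hσ.le]
        calc ((n + 1 + 1 : ℕ) : ℝ) ^ (-σ) * (1 / ((n + 1 + 1 : ℕ) : ℝ)) = (1 / σ) * (((n + 1 + 1 : ℕ) : ℝ) ^ (-σ) * (σ * (1 / ((n + 1 + 1 : ℕ) : ℝ)))) := by
              field_simp
          _ ≤ (1 / σ) * (((n + 1 + 1 : ℕ) : ℝ) ^ (-σ) * (Real.exp (σ * (Real.log ((n + 1 + 1 : ℕ) : ℝ) - Real.log ((n + 1 : ℕ) : ℝ))) - 1)) := by
              gcongr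
          _ = _ := by ring
      linarith
  cases n with
  | zero => simp; positivity
  | succ n =>
    have := key n
    have h2 : 0 ≤ (1 / σ) * ((n + 1 : ℕ) : ℝ) ^ (-σ) := by positivity
    linarith

noncomputable def powHom (σ : ℝ) (hσ : -1 - σ ≠ 0) : ℕ →*₀ ℝ where
  toFun n := (n : ℝ) ^ (-1 - σ)
  map_zero' := by simp [Real.zero_rpow hσ]
  map_one' := by simp
  map_mul' a b := by
    simp only [Nat.cast_mul]
    exact Real.mul_rpow (by positivity) (by positivity)

lemma euler_fin (σ : ℝ) (hσ : 0 < σ) (n : ℕ) :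
    ∏ p ∈ (Finset.range (n + 1)).filter Nat.Prime, (1 - (p : ℝ) ^ (-1 - σ))⁻¹ ≤ 1 + 1 / σ := by
  have hne : -1 - σ ≠ 0 := by linarith
  have hs : Summable (powHom σ hne : ℕ → ℝ) := by
    change Summable (fun n : ℕ => (n : ℝ) ^ (-1 - σ))
    rw [Real.summable_nat_rpow]; linarith
  have h := EulerProduct.prod_filter_prime_geometric_eq_tsum_factoredNumbers
    (f := (powHom σ hne : ℕ →* ℝ)) hs (Finset.range (n + 1))
  have hnn : ∀ i, 0 ≤ (powHom σ hne) i := fun i => Real.rpow_nonneg (Nat.cast_nonneg i) _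
  have h2 : ∑' m : Nat.factoredNumbers (Finset.range (n + 1)), (powHom σ hne) m ≤ ∑' m, (powHom σ hne) m :=
    hs.tsum_subtype_le _ _ hnn 
  have h3 : ∑' m, (powHom σ hne) m ≤ 1 + 1 / σ := by
    apply hs.tsum_le_of_sum_range_le
    intro n
    cases n with
    | zero => simp; positivity
    | succ n =>
      rw [Finset.sum_range_succ']
      simp only [map_zero, add_zero]
      exact zeta_fin σ hσ n
  exact (h.le.trans h2).trans h3

/-- Mertens upper bound. -/
lemma mert_prod (n : ℕ) (hn : 3 ≤ n) :
    ∏ p ∈ (Finset.range (n + 1)).filter Nat.Prime, (1 - (p : ℝ)⁻¹)⁻¹ ≤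
      2 * Real.exp 6 * Real.log n := by
  have hlog : 1 ≤ Real.log n := by
    rw [Real.le_log_iff_exp_le (by positivity)]
    have : (3:ℝ) ≤ n := by exact_mod_cast hn
    linarith [Real.exp_one_lt_d9]
  set σ := 1 / Real.log n with hσd
  have hσ : 0 < σ := by positivity
  have hσ1 : σ ≤ 1 := by rw [hσd, div_le_one (by positivity)]; exact hlog
  have h1 := euler_fin σ hσ n
  have h2 : ∀ p ∈ (Finset.range (n + 1)).filter Nat.Prime, (1 - (p : ℝ)⁻¹)⁻¹ ≤
      (1 - (p : ℝ) ^ (-1 - σ))⁻¹ * Real.exp (2 * σ * (Real.log p / p)) := by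
    intro p hp
    simp only [Finset.mem_filter, Finset.mem_range] at hp
    have hp2 : (2:ℝ) ≤ p := by exact_mod_cast hp.2.two_le
    have hp0 : (0:ℝ) < p := by linarith
    have hinv : (p:ℝ)⁻¹ ≤ 1/2 := by rw [inv_le_comm₀ hp0 (by norm_num)]; linarith
    have hinv0 : 0 < (p:ℝ)⁻¹ := by positivity
    have e1 : (p : ℝ) ^ (-1 - σ) = (p:ℝ)⁻¹ * Real.exp (- (σ * Real.log p)) := by
      rw [show -1 - σ = -1 + (-σ) by ring, Real.rpow_add hp0, Real.rpow_neg_one, Real.rpow_def_of_pos hp0]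
      congr 2; ring
    have e2 := Real.add_one_le_exp (- (σ * Real.log p))
    have hlp : 0 ≤ Real.log p := Real.log_natCast_nonneg p
    have e3 : Real.exp (- (σ * Real.log p)) ≤ 1 := by
      rw [Real.exp_le_one_iff]; have : 0 ≤ σ * Real.log p := by positivity
      linarith
    have e4 := Real.add_one_le_exp (2 * σ * (Real.log p / p))
    set x := Real.exp (- (σ * Real.log p))
    set y := Real.exp (2 * σ * (Real.log p / p))
    rw [e1]
    have hpos : 0 < 1 - (p:ℝ)⁻¹ * x := by nlinarith
    rw [inv_le_comm₀ (by linarith) (by positivity), mul_inv, inv_inv]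
    rw [mul_inv_le_iff₀ (by positivity)]
    have e5 : 2 * σ * (Real.log p / p) = 2 * (σ * Real.log p) * (p:ℝ)⁻¹ := by ring
    rw [e5] at e4
    set w := σ * Real.log p
    have hw : 0 ≤ w := by positivity
    have a1 : 1 - (p:ℝ)⁻¹ * x ≤ 1 - (p:ℝ)⁻¹ + (p:ℝ)⁻¹ * w := by nlinarith
    have a2 : 1 - (p:ℝ)⁻¹ + (p:ℝ)⁻¹ * w ≤ (1 - (p:ℝ)⁻¹) * (2 * w * (p:ℝ)⁻¹ + 1) := by
      have : 0 ≤ w * (p:ℝ)⁻¹ := by positivity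
      nlinarith
    have a3 : (1 - (p:ℝ)⁻¹) * (2 * w * (p:ℝ)⁻¹ + 1) ≤ (1 - (p:ℝ)⁻¹) * y :=
      mul_le_mul_of_nonneg_left e4 (by linarith)
    linarith
  have h3 : ∀ p ∈ (Finset.range (n + 1)).filter Nat.Prime, 0 ≤ (1 - (p : ℝ)⁻¹)⁻¹ := by
    intro p hp
    simp only [Finset.mem_filter, Finset.mem_range] at hp
    have hp2 : (1:ℝ) ≤ p := by exact_mod_cast hp.2.one_lt.le
    have := inv_le_one_of_one_le₀ hp2
    rw [inv_nonneg]; linarith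
  calc _ ≤ ∏ p ∈ (Finset.range (n + 1)).filter Nat.Prime, ((1 - (p : ℝ) ^ (-1 - σ))⁻¹ * Real.exp (2 * σ * (Real.log p / p))) :=
        Finset.prod_le_prod h3 h2
    _ = (∏ p ∈ (Finset.range (n + 1)).filter Nat.Prime, (1 - (p : ℝ) ^ (-1 - σ))⁻¹) *
          Real.exp (2 * σ * ∑ p ∈ (Finset.range (n + 1)).filter Nat.Prime, (Real.log p / p)) := by
        rw [Finset.prod_mul_distrib, ← Real.exp_sum, Finset.mul_sum]
    _ ≤ (1 + 1 / σ) * Real.exp 6 := by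
        gcongr
        have hm := mert_one n (by omega)
        have hl4 : Real.log 4 ≤ 2 := by
          rw [show (4:ℝ) = 2 ^ 2 by norm_num, Real.log_pow]; push_cast
          linarith [Real.log_two_lt_d9]
        have : σ * Real.log n = 1 := by rw [hσd]; field_simp
        have : σ * ∑ p ∈ (Finset.range (n + 1)).filter Nat.Prime, (Real.log p / p) ≤ σ * (Real.log n + Real.log 4) := by gcongr
        nlinarith
    _ ≤ _ := by
        have : 1 / σ = Real.log n := by rw [hσd]; simp
        rw [this]
        have := Real.exp_pos 6
        nlinarith


noncomputable def Jsum (k : ℕ) (S : Finset ℕ) (R : ℕ) : ℝ :=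
  ∑ T ∈ S.powerset, if ∏ p ∈ T, p ≤ R then ∏ p ∈ T, ((k : ℝ) / (p - k)) else 0

def Nset (S : Finset ℕ) (R : ℕ) : Finset ℕ :=
  (Finset.Icc 1 R).filter (fun n => n.primeFactors ⊆ S)

noncomputable def Ksum (k : ℕ) (S : Finset ℕ) (R : ℕ) : ℝ :=
  ∑ n ∈ Nset S R, (k : ℝ) ^ (ArithmeticFunction.cardFactors n) / n

lemma Ksum_nonneg (k : ℕ) (S : Finset ℕ) (R : ℕ) : 0 ≤ Ksum k S R :=
  Finset.sum_nonneg (fun _ _ => by positivity)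

lemma Nset_mono {S S' : Finset ℕ} (h : S ⊆ S') {R R' : ℕ} (hR : R ≤ R') : Nset S R ⊆ Nset S' R' := by
  intro n hn
  simp only [Nset, Finset.mem_filter, Finset.mem_Icc] at hn ⊢
  exact ⟨⟨hn.1.1, hn.1.2.trans hR⟩, hn.2.trans h⟩

lemma Ksum_mono (k : ℕ) {S S' : Finset ℕ} (h : S ⊆ S') {R R' : ℕ} (hR : R ≤ R') :
    Ksum k S R ≤ Ksum k S' R' :=
  Finset.sum_le_sum_of_subset_of_nonneg (Nset_mono h hR) (fun _ _ _ => by positivity)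

lemma Ksum_insert (k : ℕ) (S : Finset ℕ) (p : ℕ) (hp : p.Prime) (R : ℕ) :
    Ksum k (insert p S) R ≤ Ksum k S R + (k / p : ℝ) * Ksum k (insert p S) (R / p) := by
  rw [Ksum, ← Finset.sum_filter_not_add_sum_filter (Nset (insert p S) R) (fun n => p ∣ n)]
  apply add_le_add
  · apply Finset.sum_le_sum_of_subset_of_nonneg
    · intro n hn
      simp only [Nset, Finset.mem_filter, Finset.mem_Icc] at hn ⊢
      refine ⟨hn.1.1, fun q hq => ?_⟩
      rcases Finset.mem_insert.1 (hn.1.2 hq) with h | h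
      · subst h; exact absurd (Nat.dvd_of_mem_primeFactors hq) hn.2
      · exact h
    · intros; positivity
  · rw [Ksum, Finset.mul_sum]
    have : ∑ n ∈ (Nset (insert p S) R).filter (fun n => p ∣ n), (k : ℝ) ^ (ArithmeticFunction.cardFactors n) / n
        = ∑ n ∈ ((Nset (insert p S) R).filter (fun n => p ∣ n)).image (fun n => n / p),
          (k / p : ℝ) * ((k : ℝ) ^ (ArithmeticFunction.cardFactors n) / n) := by
      rw [Finset.sum_image]
      · apply Finset.sum_congr rfl
        intro n hn
        simp only [Nset, Finset.mem_filter, Finset.mem_Icc] at hn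
        obtain ⟨m, rfl⟩ := hn.2
        have hm : m ≠ 0 := by rintro rfl; simp at hn
        rw [Nat.mul_div_cancel_left _ hp.pos, ArithmeticFunction.cardFactors_mul hp.ne_zero hm,
          ArithmeticFunction.cardFactors_apply_prime hp, pow_add, pow_one]
        push_cast
        rw [div_mul_div_comm]
      · intro a ha b hb hab
        simp only [Finset.coe_filter, Set.mem_ofPred_eq] at ha hb
        obtain ⟨m, rfl⟩ := ha.2
        obtain ⟨m', rfl⟩ := hb.2
        simp only [Nat.mul_div_cancel_left _ hp.pos] at hab
        rw [hab]
    rw [this]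
    apply Finset.sum_le_sum_of_subset_of_nonneg
    · intro m hm
      simp only [Finset.mem_image, Finset.mem_filter, Nset, Finset.mem_Icc] at hm ⊢
      obtain ⟨n, ⟨⟨⟨h1, h2⟩, h3⟩, h4⟩, rfl⟩ := hm
      obtain ⟨m, rfl⟩ := h4
      rw [Nat.mul_div_cancel_left _ hp.pos]
      have hm : m ≠ 0 := by rintro rfl; simp at h1
      refine ⟨⟨by omega, ?_⟩, ?_⟩
      · rw [Nat.le_div_iff_mul_le hp.pos, mul_comm]; exact h2
      · refine (Nat.primeFactors_mono (Dvd.intro_left p rfl) ?_).trans h3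
        exact mul_ne_zero hp.ne_zero hm
    · intros; positivity

lemma hh_nonneg {k p : ℕ} (h : k < p) : (0:ℝ) ≤ (k : ℝ) / (p - k) := by
  have : (k:ℝ) < p := by exact_mod_cast h
  apply div_nonneg (by positivity); linarith

lemma Jsum_insert (k : ℕ) (S : Finset ℕ) (p : ℕ) (hp : p.Prime) (hpS : p ∉ S) (R : ℕ) :
    Jsum k (insert p S) R = Jsum k S R + ((k : ℝ) / (p - k)) * Jsum k S (R / p) := by
  rw [Jsum, Finset.sum_powerset_insert hpS, Jsum, Jsum, Finset.mul_sum]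
  congr 1
  apply Finset.sum_congr rfl
  intro T hT
  have hpT : p ∉ T := fun h => hpS (Finset.mem_powerset.1 hT h)
  rw [Finset.prod_insert hpT, Finset.prod_insert hpT]
  have hiff : p * ∏ x ∈ T, x ≤ R ↔ ∏ x ∈ T, x ≤ R / p := by
    rw [Nat.le_div_iff_mul_le hp.pos, mul_comm p]
  by_cases hc : ∏ x ∈ T, x ≤ R / p
  · rw [if_pos hc, if_pos (hiff.2 hc)]
  · rw [if_neg hc, if_neg (fun h => hc (hiff.1 h)), mul_zero]

lemma Jsum_mono (k : ℕ) (S : Finset ℕ) (hS : ∀ p ∈ S, k < p) {R R' : ℕ} (h : R ≤ R') :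
    Jsum k S R ≤ Jsum k S R' := by
  apply Finset.sum_le_sum
  intro T hT
  have h0 : 0 ≤ ∏ p ∈ T, ((k : ℝ) / (p - k)) :=
    Finset.prod_nonneg (fun p hp => hh_nonneg (hS p (Finset.mem_powerset.1 hT hp)))
  split_ifs with h1 h2 h2
  · exact le_rfl
  · exact absurd (h1.trans h) h2
  · exact h0
  · exact le_rfl

lemma Ksum_le_Jsum (k : ℕ) (S : Finset ℕ) (hS : ∀ p ∈ S, p.Prime ∧ k < p) :
    ∀ R : ℕ, Ksum k S R ≤ Jsum k S R := by
  induction S using Finset.induction_on with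
  | empty =>
    intro R
    rcases Nat.eq_zero_or_pos R with h | h
    · subst h; simp [Ksum, Jsum, Nset]
    · have : Nset ∅ R = {1} := by
        ext n
        simp only [Nset, Finset.mem_filter, Finset.mem_Icc, Finset.subset_empty, Nat.primeFactors_eq_empty,
          Finset.mem_singleton]
        omega
      simp only [Ksum, this, Jsum]
      have : 1 ≤ R := h
      simp [this]
  | insert p S hpS ih =>
    have hS' : ∀ q ∈ S, q.Prime ∧ k < q := fun q hq => hS q (Finset.mem_insert_of_mem hq)
    obtain ⟨hp, hkp⟩ := hS p (Finset.mem_insert_self _ _)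
    have hkp' : (k:ℝ) < p := by exact_mod_cast hkp
    have hp0 : (0:ℝ) < p := by exact_mod_cast hp.pos
    have ih := ih hS'
    intro R
    induction R using Nat.strong_induction_on with
    | _ R IH =>
      rcases Nat.eq_zero_or_pos R with h | h
      · subst h
        have e : Ksum k (insert p S) 0 = 0 := by simp [Ksum, Nset]
        rw [e, Jsum]
        apply Finset.sum_nonneg
        intro T hT
        split_ifs
        · exact Finset.prod_nonneg (fun q hq => hh_nonneg (hS q (Finset.mem_powerset.1 hT hq)).2)
        · exact le_rfl
      · have h1 := Ksum_insert k S p hp R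
        have h2 := IH (R / p) (Nat.div_lt_self h hp.one_lt)
        rw [Jsum_insert k S p hp hpS] at h2 ⊢
        have h3 : Jsum k S (R / p / p) ≤ Jsum k S (R / p) :=
          Jsum_mono k S (fun q hq => (hS' q hq).2) (Nat.div_le_self _ _)
        have h4 : (k / p : ℝ) * Ksum k (insert p S) (R / p) ≤ ((k : ℝ) / (p - k)) * Jsum k S (R / p) := by
          calc (k / p : ℝ) * Ksum k (insert p S) (R / p)
              ≤ (k / p : ℝ) * (Jsum k S (R / p) + ((k : ℝ) / (p - k)) * Jsum k S (R / p)) := by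
                apply mul_le_mul_of_nonneg_left _ (by positivity)
                have := mul_le_mul_of_nonneg_left h3 (hh_nonneg hkp)
                linarith
            _ = _ := by
                have : (p:ℝ) - k ≠ 0 := by linarith
                field_simp
                ring
        linarith [ih R]

lemma sum_div_pow (j n : ℕ) (hn : n ≠ 0) :
    ∑ a ∈ n.divisors, j ^ (ArithmeticFunction.cardFactors a) ≤ (j + 1) ^ (ArithmeticFunction.cardFactors n) := by
  induction n using Nat.recOnMul with
  | zero => exact absurd rfl hn
  | one => simp
  | prime p hp =>
    rw [hp.sum_divisors]
    simp [ArithmeticFunction.cardFactors_apply_prime hp, add_comm]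
  | mul a b iha ihb =>
    have ha : a ≠ 0 := left_ne_zero_of_mul hn
    have hb : b ≠ 0 := right_ne_zero_of_mul hn
    rw [ArithmeticFunction.cardFactors_mul ha hb, pow_add]
    calc _ ≤ ∑ x ∈ a.divisors ×ˢ b.divisors, j ^ (ArithmeticFunction.cardFactors (x.1 * x.2)) := by
          rw [Nat.divisors_mul, Finset.mul_def]
          apply Finset.sum_image_le_of_nonneg 
          intros; positivity
      _ = (∑ x ∈ a.divisors, j ^ (ArithmeticFunction.cardFactors x)) * (∑ x ∈ b.divisors, j ^ (ArithmeticFunction.cardFactors x)) := by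
          rw [Finset.sum_mul_sum, Finset.sum_product]
          apply Finset.sum_congr rfl; intro x hx
          apply Finset.sum_congr rfl; intro y hy
          rw [ArithmeticFunction.cardFactors_mul (Nat.pos_of_mem_divisors hx).ne' (Nat.pos_of_mem_divisors hy).ne', pow_add]
      _ ≤ _ := Nat.mul_le_mul (iha ha) (ihb hb)

lemma Ksum_mul (j : ℕ) (S : Finset ℕ) (x y : ℕ) :
    Ksum j S x * Ksum 1 S y ≤ Ksum (j + 1) S (x * y) := by
  rw [Ksum, Ksum, Finset.sum_mul_sum, ← Finset.sum_product']
  have hmaps : ∀ z ∈ Nset S x ×ˢ Nset S y, z.1 * z.2 ∈ Nset S (x * y) := by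
    intro z hz
    simp only [Finset.mem_product, Nset, Finset.mem_filter, Finset.mem_Icc] at hz ⊢
    obtain ⟨⟨⟨h1, h2⟩, h3⟩, ⟨h4, h5⟩, h6⟩ := hz
    refine ⟨⟨Nat.mul_pos h1 h4, Nat.mul_le_mul h2 h5⟩, ?_⟩
    rw [Nat.primeFactors_mul (by omega) (by omega)]
    exact Finset.union_subset h3 h6
  rw [← Finset.sum_fiberwise_of_maps_to hmaps, Ksum]
  apply Finset.sum_le_sum
  intro n hn
  have hn0 : n ≠ 0 := by
    simp only [Nset, Finset.mem_filter, Finset.mem_Icc] at hn; omega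
  calc _ = ∑ z ∈ (Nset S x ×ˢ Nset S y).filter (fun z => z.1 * z.2 = n), (j:ℝ) ^ (ArithmeticFunction.cardFactors z.1) / n := by
        apply Finset.sum_congr rfl
        intro z hz
        have := (Finset.mem_filter.1 hz).2
        rw [← this]; push_cast
        rw [one_pow, div_mul_div_comm, mul_one]
    _ ≤ ∑ z ∈ n.divisorsAntidiagonal, (j:ℝ) ^ (ArithmeticFunction.cardFactors z.1) / n := by
        apply Finset.sum_le_sum_of_subset_of_nonneg
        · intro z hz
          rw [Nat.mem_divisorsAntidiagonal]
          exact ⟨(Finset.mem_filter.1 hz).2, hn0⟩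
        · intros; positivity
    _ = ∑ a ∈ n.divisors, (j:ℝ) ^ (ArithmeticFunction.cardFactors a) / n :=
        Nat.sum_divisorsAntidiagonal (fun a _ => (j:ℝ) ^ (ArithmeticFunction.cardFactors a) / (n:ℝ))
    _ ≤ _ := by
        rw [← Finset.sum_div]
        gcongr
        have := sum_div_pow j n hn0
        exact_mod_cast this

lemma Ksum_pow (k : ℕ) (S : Finset ℕ) (y : ℕ) : (Ksum 1 S y) ^ k ≤ Ksum k S (y ^ k) := by
  induction k with
  | zero =>
    have : Nset S 1 = {1} := by
      ext n
      simp only [Nset, Finset.mem_filter, Finset.mem_Icc, Finset.mem_singleton]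
      constructor
      · rintro ⟨h, _⟩; omega
      · rintro rfl; simp
    simp [Ksum, this]
  | succ k ih =>
    rw [pow_succ, pow_succ]
    exact (mul_le_mul_of_nonneg_right ih (Ksum_nonneg _ _ _)).trans (Ksum_mul k S _ _)

lemma Ksum_union (S T : Finset ℕ) (hT : ∀ p ∈ T, p.Prime) (R : ℕ) :
    Ksum 1 (T ∪ S) R ≤ (∏ p ∈ T, (1 - (p:ℝ)⁻¹)⁻¹) * Ksum 1 S R := by
  induction T using Finset.induction_on with
  | empty => simp
  | insert p T hpT ih =>
    have hp := hT p (Finset.mem_insert_self _ _)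
    have ih := ih (fun q hq => hT q (Finset.mem_insert_of_mem hq))
    rw [Finset.prod_insert hpT, Finset.insert_union]
    have h1 := Ksum_insert 1 (T ∪ S) p hp R
    have h2 : Ksum 1 (insert p (T ∪ S)) (R / p) ≤ Ksum 1 (insert p (T ∪ S)) R :=
      Ksum_mono 1 (Finset.Subset.refl _) (Nat.div_le_self _ _)
    have hp2 : (1:ℝ) < p := by exact_mod_cast hp.one_lt
    have hinv : (p:ℝ)⁻¹ < 1 := inv_lt_one_of_one_lt₀ hp2
    have hpos : (0:ℝ) < 1 - (p:ℝ)⁻¹ := by linarith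
    have hinv0 : 0 < (p:ℝ)⁻¹ := by positivity
    rw [mul_assoc, ← div_eq_inv_mul, le_div_iff₀ hpos]
    have h3 : ((1:ℕ) / p : ℝ) * Ksum 1 (insert p (T ∪ S)) (R / p) ≤ (p:ℝ)⁻¹ * Ksum 1 (insert p (T ∪ S)) R := by
      rw [Nat.cast_one, one_div]
      exact mul_le_mul_of_nonneg_left h2 hinv0.le
    linarith

lemma Jsum_lower (k z y R : ℕ) (hz : 3 ≤ z) (hkz : k ≤ z) (hy : 1 ≤ y) (hk : 1 ≤ k) (hR : y ^ k ≤ R) :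
    (Real.log y / (2 * Real.exp 6 * Real.log z)) ^ k ≤
      Jsum k ((Finset.Ioc z R).filter Nat.Prime) R := by
  set S := (Finset.Ioc z R).filter Nat.Prime with hS
  set T := (Finset.range (z + 1)).filter Nat.Prime with hT
  have hSp : ∀ p ∈ S, p.Prime ∧ k < p := by
    intro p hp
    simp only [hS, Finset.mem_filter, Finset.mem_Ioc] at hp
    exact ⟨hp.2, by omega⟩
  have hyR : y ≤ R := (Nat.le_self_pow (by omega) y).trans hR
  have h1 : Real.log y ≤ Ksum 1 (T ∪ S) y := by
    have h := log_add_one_le_harmonic y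
    have e : ((harmonic y : ℚ) : ℝ) = ∑ n ∈ Finset.Icc 1 y, (n:ℝ)⁻¹ := by
      rw [harmonic_eq_sum_Icc]; push_cast; rfl
    have e2 : Nset (T ∪ S) y = Finset.Icc 1 y := by
      apply Finset.filter_true_of_mem
      intro n hn p hp
      have hn := Finset.mem_Icc.1 hn
      have hpp := Nat.prime_of_mem_primeFactors hp
      have := Nat.le_of_mem_primeFactors hp
      simp only [hS, hT, Finset.mem_union, Finset.mem_filter, Finset.mem_range, Finset.mem_Ioc]
      by_cases hc : p ≤ z
      · left; exact ⟨by omega, hpp⟩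
      · right; exact ⟨by omega, hpp⟩
    have e3 : Ksum 1 (T ∪ S) y = ∑ n ∈ Finset.Icc 1 y, (n:ℝ)⁻¹ := by
      rw [Ksum, e2]; simp
    rw [e3, ← e]
    refine le_trans ?_ h
    apply Real.log_le_log
    · exact_mod_cast hy
    · push_cast; linarith
  have h2 := Ksum_union S T (fun p hp => (Finset.mem_filter.1 hp).2) y
  have h3 := mert_prod z hz
  have hlz : 0 < Real.log z := Real.log_pos (by exact_mod_cast (by omega : 1 < z))
  have h4 : Real.log y / (2 * Real.exp 6 * Real.log z) ≤ Ksum 1 S y := by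
    rw [div_le_iff₀ (by positivity), mul_comm]
    exact h1.trans (h2.trans (mul_le_mul_of_nonneg_right h3 (Ksum_nonneg _ _ _)))
  calc _ ≤ (Ksum 1 S y) ^ k := by
        apply pow_le_pow_left₀ _ h4
        have : 0 ≤ Real.log y := Real.log_natCast_nonneg y
        positivity
    _ ≤ Ksum k S (y ^ k) := Ksum_pow _ _ _
    _ ≤ Ksum k S R := Ksum_mono k (Finset.Subset.refl _) hR
    _ ≤ _ := Ksum_le_Jsum k S hSp R


noncomputable def ee (x : ℝ) : ℂ := Complex.exp (2 * Real.pi * Complex.I * x)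

lemma ee_add (x y : ℝ) : ee (x + y) = ee x * ee y := by
  rw [ee, ee, ee, ← Complex.exp_add]; congr 1; push_cast; ring

lemma ee_norm (x : ℝ) : ‖ee x‖ = 1 := by
  rw [ee, Complex.norm_exp]; simp

lemma ee_nat_mul (n : ℕ) (x : ℝ) : ee (n * x) = ee x ^ n := by
  rw [ee, ee, ← Complex.exp_nat_mul]; congr 1; push_cast; ring

lemma ee_int (n : ℤ) : ee n = 1 := by
  rw [ee, Complex.exp_eq_one_iff]; exact ⟨n, by push_cast; ring⟩

lemma ee_zero : ee 0 = 1 := by simp [ee]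

lemma ee_sub_one_norm (x κ : ℝ) (h : ∀ j : ℤ, κ ≤ |x + j|) : 4 * κ ≤ ‖ee x - 1‖ := by
  have h1 : ee x = ee (x + (-round x : ℤ)) := by rw [ee_add, ee_int, mul_one]
  set y := x + (-round x : ℤ) with hy
  have hyl : |y| ≤ 1 / 2 := by
    have := abs_sub_round x
    rw [hy]; push_cast; rwa [← sub_eq_add_neg]
  have hk : κ ≤ |y| := h _
  have h2 : ‖ee y - 1‖ = ‖2 * Real.sin (Real.pi * y)‖ := by
    have := Complex.norm_exp_I_mul_ofReal_sub_one (2 * Real.pi * y)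
    rw [show 2 * Real.pi * y / 2 = Real.pi * y by ring] at this
    rw [← this, ee]; congr 3; push_cast; ring
  have h3 := Real.mul_abs_le_abs_sin (x := Real.pi * y) (by
    rw [abs_mul, abs_of_pos Real.pi_pos]; nlinarith [Real.pi_pos])
  rw [h1, h2, norm_mul, Real.norm_eq_abs, Real.norm_eq_abs, abs_two]
  rw [abs_mul, abs_of_pos Real.pi_pos] at h3
  have : 2 / Real.pi * (Real.pi * |y|) = 2 * |y| := by
    field_simp
  linarith

lemma dir_bound (x κ : ℝ) (hκ : 0 < κ) (h : ∀ j : ℤ, κ ≤ |x + j|) (Y : ℕ) :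
    ‖∑ n ∈ Finset.range Y, ee (n * x)‖ ≤ 1 / κ := by
  have h1 := ee_sub_one_norm x κ h
  have hne : ee x - 1 ≠ 0 := by
    intro h0; rw [h0, norm_zero] at h1; linarith
  have h2 : ∑ n ∈ Finset.range Y, ee (n * x) = (ee x ^ Y - 1) / (ee x - 1) := by
    rw [← geom_sum_eq (sub_ne_zero.1 hne)]
    exact Finset.sum_congr rfl (fun n _ => ee_nat_mul n x)
  rw [h2, norm_div, div_le_div_iff₀ (by linarith) hκ]
  have h3 : ‖ee x ^ Y - 1‖ ≤ 2 := by
    refine (norm_sub_le _ _).trans ?_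
    rw [norm_pow, ee_norm, one_pow, norm_one]; norm_num
  nlinarith

lemma std_ee (d : ℕ) [NeZero d] (j : ZMod d) (n : ℕ) :
    ZMod.stdAddChar (j * (n : ZMod d)) = ee (n * ((j.val : ℝ) / d)) := by
  have : j * (n : ZMod d) = ((j.val * n : ℤ) : ZMod d) := by
    push_cast; rw [ZMod.natCast_zmod_val]
  rw [this, ZMod.stdAddChar_coe, ee]
  congr 1; push_cast; ring

lemma fourier_far (d : ℕ) [NeZero d] (g : ZMod d → ℂ) (hg : ∀ x, ‖g x‖ ≤ 1) (θ κ : ℝ) (hκ : 0 < κ)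
    (hfar : ∀ a : ℤ, ¬ ((d : ℤ) ∣ a) → κ ≤ |θ + a / d|) (Y : ℕ) :
    ‖∑ n ∈ Finset.range Y, g n * ee (n * θ) -
      ((∑ x, g x) / d) * ∑ n ∈ Finset.range Y, ee (n * θ)‖ ≤ d / κ := by
  have hd0 : (d:ℂ) ≠ 0 := by exact_mod_cast NeZero.ne d
  have hdr : (0:ℝ) < d := by exact_mod_cast Nat.pos_of_ne_zero (NeZero.ne d)
  set G := ZMod.dft g with hG
  have hinv : ∀ k, g k = (d : ℂ)⁻¹ * ∑ j, ZMod.stdAddChar (j * k) * G j := by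
    intro k
    have := ZMod.invDFT_apply G k
    rw [hG, LinearEquiv.symm_apply_apply] at this
    simpa [smul_eq_mul] using this
  have hGn : ∀ j, ‖G j‖ ≤ d := by
    intro j
    rw [hG, ZMod.dft_apply]
    refine (norm_sum_le _ _).trans ?_
    calc _ ≤ ∑ _x : ZMod d, (1:ℝ) := by
          apply Finset.sum_le_sum; intro x _
          rw [smul_eq_mul, norm_mul, ZMod.stdAddChar_apply, Circle.norm_coe, one_mul]
          exact hg x
      _ = d := by simp [ZMod.card]
  have h0 : G 0 = ∑ x, g x := ZMod.dft_apply_zero g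
  have e1 : ∑ n ∈ Finset.range Y, g n * ee (n * θ) =
      ∑ j, (d : ℂ)⁻¹ * G j * ∑ n ∈ Finset.range Y, ee (n * (θ + (j.val : ℝ) / d)) := by
    simp_rw [Finset.mul_sum]
    rw [Finset.sum_comm]
    apply Finset.sum_congr rfl
    intro n _
    rw [hinv n, Finset.mul_sum, Finset.sum_mul]
    apply Finset.sum_congr rfl
    intro j _
    rw [std_ee, mul_add, ee_add]; ring
  rw [e1, ← Finset.add_sum_erase _ _ (Finset.mem_univ (0 : ZMod d)), h0]
  have e2 : (d : ℂ)⁻¹ * (∑ x, g x) * ∑ n ∈ Finset.range Y, ee (n * (θ + ((0 : ZMod d).val : ℝ) / d)) =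
      ((∑ x, g x) / d) * ∑ n ∈ Finset.range Y, ee (n * θ) := by
    rw [ZMod.val_zero]; simp only [Nat.cast_zero, zero_div, add_zero]
    rw [div_eq_inv_mul]
  rw [e2, add_sub_cancel_left]
  refine (norm_sum_le _ _).trans ?_
  calc _ ≤ ∑ j ∈ Finset.univ.erase (0 : ZMod d), 1 / κ := by
        apply Finset.sum_le_sum
        intro j hj
        have hj0 : j ≠ 0 := Finset.ne_of_mem_erase hj
        have hb := dir_bound (θ + (j.val : ℝ) / d) κ hκ (by
          intro i
          have := hfar ((j.val : ℤ) + d * i) (by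
            intro h
            rw [Int.dvd_add_left (Dvd.intro _ rfl)] at h
            have h := Int.natCast_dvd_natCast.1 h
            have h2 := ZMod.val_lt j
            have h3 := Nat.eq_zero_of_dvd_of_lt h h2
            exact hj0 ((ZMod.val_eq_zero j).1 h3))
          refine this.trans (le_of_eq ?_)
          congr 1; push_cast; field_simp; ring) Y
        rw [norm_mul, norm_mul, norm_inv, Complex.norm_natCast]
        calc _ ≤ (d:ℝ)⁻¹ * d * (1 / κ) := by
              gcongr; exact hGn j
          _ = 1 / κ := by field_simp
    _ ≤ ∑ j : ZMod d, 1 / κ := Finset.sum_le_sum_of_subset_of_nonneg (Finset.erase_subset _ _) (fun _ _ _ => by positivity)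
    _ = d / κ := by simp [ZMod.card]; ring

lemma bad_prime (θ : ℝ) (Q : ℕ) :
    ∃ p₀ : ℕ, p₀.Prime ∧ ∀ d : ℕ, 1 ≤ d → d ≤ Q → ¬ p₀ ∣ d → ∀ a : ℤ, ¬ ((d : ℤ) ∣ a) →
      1 / (2 * (Q:ℝ) ^ 2) ≤ |θ + a / d| := by
  by_cases hbad : ∃ d : ℕ, 1 ≤ d ∧ d ≤ Q ∧ ∃ a : ℤ, ¬ ((d : ℤ) ∣ a) ∧ |θ + a / d| < 1 / (2 * (Q:ℝ) ^ 2)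
  · obtain ⟨d, hd1, hdQ, a, hda, hlt⟩ := hbad
    have hden : ((a : ℚ) / d).den ≠ 1 := by
      intro h
      have h1 : (((a : ℚ) / d).num : ℚ) = (a : ℚ) / d := Rat.coe_int_num_of_den_eq_one h
      have hdq : (d:ℚ) ≠ 0 := by exact_mod_cast (by omega : d ≠ 0)
      rw [eq_div_iff hdq] at h1
      apply hda
      refine ⟨((a : ℚ) / d).num, ?_⟩
      rw [mul_comm]
      exact_mod_cast h1.symm
    refine ⟨((a : ℚ) / d).den.minFac, Nat.minFac_prime hden, ?_⟩
    intro d' hd1' hdQ' hp a' hda'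
    by_contra hlt'
    push Not at hlt'
    have hQ : (0:ℝ) < Q := by exact_mod_cast (by omega : 0 < Q)
    have hd : (0:ℝ) < d := by exact_mod_cast hd1
    have hd' : (0:ℝ) < d' := by exact_mod_cast hd1'
    have h1 : |(a:ℝ) / d - a' / d'| < 1 / (Q:ℝ)^2 := by
      have : (a:ℝ) / d - a' / d' = (θ + a / d) - (θ + a' / d') := by ring
      rw [this]
      refine (abs_sub _ _).trans_lt ?_
      calc _ < 1 / (2 * (Q:ℝ) ^ 2) + 1 / (2 * (Q:ℝ) ^ 2) := add_lt_add hlt hlt'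
        _ = _ := by field_simp; norm_num
    have h2 : |((a * d' - a' * d : ℤ) : ℝ)| < 1 := by
      have e : ((a * d' - a' * d : ℤ) : ℝ) = ((a:ℝ) / d - a' / d') * (d * d') := by
        push_cast; field_simp
      rw [e, abs_mul, abs_of_pos (mul_pos hd hd')]
      have hQd : (d:ℝ) * d' ≤ Q ^ 2 := by
        rw [sq]; gcongr
      calc _ < 1 / (Q:ℝ)^2 * (d * d') := by gcongr
        _ ≤ 1 / (Q:ℝ)^2 * Q^2 := by gcongr
        _ = 1 := by field_simp
    have h3 : a * d' - a' * d = 0 := by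
      rw [← Int.cast_abs] at h2
      have : |a * d' - a' * d| < 1 := by exact_mod_cast h2
      exact Int.abs_lt_one_iff.1 this
    have h4 : (a : ℚ) / d = a' / d' := by
      have hdq : (d:ℚ) ≠ 0 := by exact_mod_cast (by omega : d ≠ 0)
      have hdq' : (d':ℚ) ≠ 0 := by exact_mod_cast (by omega : d' ≠ 0)
      rw [div_eq_div_iff hdq hdq']
      have : a * d' = a' * d := by linarith
      exact_mod_cast this
    have h5 : ((a : ℚ) / d).den ∣ d' := by
      rw [h4]
      have := Rat.den_dvd a' d'
      rw [Rat.divInt_eq_div] at this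
      exact_mod_cast this
    exact hp ((Nat.minFac_dvd _).trans h5)
  · push Not at hbad
    exact ⟨2, Nat.prime_two, fun d h1 h2 _ a ha => hbad d h1 h2 a ha⟩

lemma zmod_sum_range (p : ℕ) [NeZero p] (f : ℕ → ℝ) :
    ∑ y : ZMod p, f y.val = ∑ r ∈ Finset.range p, f r := by
  obtain ⟨q, rfl⟩ : ∃ q, p = q + 1 := ⟨p - 1, by have := NeZero.ne p; omega⟩
  exact Fin.sum_univ_eq_sum_range f (q + 1)

lemma far_prod (T : Finset ℕ) (hT : ∀ p ∈ T, p.Prime) (φ : ℕ → ℕ → ℝ)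
    (hper : ∀ p ∈ T, ∀ n, φ p (n % p) = φ p n) (hb : ∀ p ∈ T, ∀ n, |φ p n| ≤ 1)
    (θ κ : ℝ) (hκ : 0 < κ)
    (hfar : ∀ a : ℤ, ¬ (((∏ p ∈ T, p : ℕ) : ℤ) ∣ a) → κ ≤ |θ + a / (∏ p ∈ T, p : ℕ)|) (Y : ℕ) :
    ‖∑ n ∈ Finset.range Y, ((∏ p ∈ T, φ p n : ℝ) : ℂ) * ee (n * θ) -
      ((∏ p ∈ T, ((∑ r ∈ Finset.range p, φ p r) / p) : ℝ) : ℂ) * ∑ n ∈ Finset.range Y, ee (n * θ)‖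
      ≤ (∏ p ∈ T, p : ℕ) / κ := by
  have hprod : ∏ p ∈ T, p = ∏ i : T, (i : ℕ) := (Finset.prod_coe_sort T (fun p => p)).symm
  rw [hprod] at hfar ⊢
  set d := ∏ i : T, (i : ℕ) with hd
  have hne : ∀ i : T, NeZero (i : ℕ) := fun i => ⟨(hT i i.2).ne_zero⟩
  have : NeZero d := ⟨Finset.prod_ne_zero_iff.2 (fun i _ => (hT i i.2).ne_zero)⟩
  have hcop : Pairwise (Function.onFun Nat.Coprime (fun i : T => (i : ℕ))) := by
    intro i j hij
    exact (Nat.coprime_primes (hT i i.2) (hT j j.2)).2 (fun h => hij (Subtype.ext h))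
  let eqv := ZMod.prodEquivPi (fun i : T => (i : ℕ)) hcop
  let g : ZMod d → ℝ := fun x => ∏ i : T, φ i (eqv x i).val
  have hgn : ∀ n : ℕ, g (n : ZMod d) = ∏ p ∈ T, φ p n := by
    intro n
    rw [← Finset.prod_coe_sort T (fun p => φ p n)]
    apply Finset.prod_congr rfl
    intro i _
    have : eqv (n : ZMod d) i = (n : ZMod (i : ℕ)) := by
      rw [show eqv (n : ZMod d) = (n : ∀ i : T, ZMod (i : ℕ)) from map_natCast eqv n]; rfl
    rw [this, ZMod.val_natCast, hper i i.2]
  have hgs : ∑ x, g x = ∏ p ∈ T, (∑ r ∈ Finset.range p, φ p r) := by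
    rw [← Finset.prod_coe_sort T (fun p => ∑ r ∈ Finset.range p, φ p r)]
    have e1 : ∑ x, g x = ∑ y : (∀ i : T, ZMod (i : ℕ)), ∏ i : T, φ i (y i).val :=
      Equiv.sum_comp eqv.toEquiv (fun y => ∏ i : T, φ i (y i).val)
    rw [e1]
    have e2 := Finset.prod_univ_sum (fun i : T => (Finset.univ : Finset (ZMod (i : ℕ))))
      (fun i y => φ i y.val)
    rw [Fintype.piFinset_univ] at e2
    rw [← e2]
    apply Finset.prod_congr rfl
    intro i _
    exact zmod_sum_range (i : ℕ) (φ i)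
  have key := fourier_far d (fun x => (g x : ℂ)) (by
    intro x
    rw [Complex.norm_real, Real.norm_eq_abs, Finset.abs_prod]
    exact Finset.prod_le_one (fun _ _ => abs_nonneg _) (fun i _ => hb i i.2 _)) θ κ hκ hfar Y
  refine le_trans (le_of_eq ?_) key
  congr 2
  · exact Finset.sum_congr rfl (fun n _ => by rw [hgn])
  · congr 1
    rw [← Complex.ofReal_sum, hgs, Finset.prod_div_distrib]
    push_cast
    congr 1
    rw [← Nat.cast_prod, hprod]


/-- local sieve data -/
structure SieveData (S : Finset ℕ) (h : ℕ → ℝ) (ψ : ℕ → ℕ → ℝ) : Prop where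
  prime : ∀ p ∈ S, p.Prime
  per : ∀ p ∈ S, ∀ n, ψ p (n % p) = ψ p n
  bound : ∀ p ∈ S, ∀ n, |ψ p n| ≤ 1
  mean : ∀ p ∈ S, ∑ r ∈ Finset.range p, ψ p r = 0
  sq : ∀ p ∈ S, ∑ r ∈ Finset.range p, (ψ p r) ^ 2 = p * h p
  hnn : ∀ p ∈ S, 0 ≤ h p

lemma pair_far {S : Finset ℕ} {h : ℕ → ℝ} {ψ : ℕ → ℕ → ℝ} (D : SieveData S h ψ)
    (T T' : Finset ℕ) (hT : T ⊆ S) (hT' : T' ⊆ S) (θ κ : ℝ) (hκ : 0 < κ)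
    (hfar : ∀ a : ℤ, ¬ (((∏ p ∈ T ∪ T', p : ℕ) : ℤ) ∣ a) → κ ≤ |θ + a / (∏ p ∈ T ∪ T', p : ℕ)|) (Y : ℕ) :
    ‖∑ n ∈ Finset.range Y, (((∏ p ∈ T, ψ p n) * (∏ p ∈ T', ψ p n) : ℝ) : ℂ) * ee (n * θ) -
      ((if T = T' then ∏ p ∈ T, h p else 0 : ℝ) : ℂ) * ∑ n ∈ Finset.range Y, ee (n * θ)‖
      ≤ (∏ p ∈ T ∪ T', p : ℕ) / κ := by
  have hU : T ∪ T' ⊆ S := Finset.union_subset hT hT'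
  let φ : ℕ → ℕ → ℝ := fun p n => (if p ∈ T then ψ p n else 1) * (if p ∈ T' then ψ p n else 1)
  have key := far_prod (T ∪ T') (fun p hp => D.prime p (hU hp)) φ
    (fun p hp n => by simp only [φ, D.per p (hU hp)])
    (fun p hp n => by
      have := D.bound p (hU hp) n
      simp only [φ, abs_mul]
      apply mul_le_one₀ _ (abs_nonneg _)
      · split_ifs
        · exact this
        · simp
      · split_ifs
        · exact this
        · simp) θ κ hκ hfar Y
  refine le_trans (le_of_eq ?_) key
  congr 2
  · apply Finset.sum_congr rfl
    intro n _
    congr 2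
    simp only [φ]
    rw [Finset.prod_mul_distrib, Finset.prod_ite_mem, Finset.prod_ite_mem]
    congr 1
    · congr 1; simp
    · congr 1; simp
  · congr 2
    split_ifs with he
    · subst he
      rw [Finset.union_self]
      apply Finset.prod_congr rfl
      intro p hp
      have hp0 : (p:ℝ) ≠ 0 := by exact_mod_cast (D.prime p (hT hp)).ne_zero
      simp only [φ, hp, if_true]
      simp_rw [← sq]
      rw [D.sq p (hT hp)]; field_simp
    · symm
      have : ∃ p ∈ T ∪ T', ¬ (p ∈ T ∧ p ∈ T') := by
        by_contra hcon
        push Not at hcon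
        apply he
        ext p
        exact ⟨fun hp => (hcon p (Finset.mem_union_left _ hp)).2, fun hp => (hcon p (Finset.mem_union_right _ hp)).1⟩
      obtain ⟨p, hp, hn⟩ := this
      apply Finset.prod_eq_zero hp
      have : ∀ r, φ p r = ψ p r := by
        intro r
        simp only [φ]
        rcases Finset.mem_union.1 hp with h1 | h1
        · have h2 : p ∉ T' := fun h2 => hn ⟨h1, h2⟩
          simp [h1, h2]
        · have h2 : p ∉ T := fun h2 => hn ⟨h2, h1⟩
          simp [h1, h2]
      simp_rw [this]
      rw [D.mean p (hU hp), zero_div]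

lemma card_family {S : Finset ℕ} (hS : ∀ p ∈ S, p.Prime) (R : ℕ) (U : Finset (Finset ℕ))
    (hU : ∀ T ∈ U, T ⊆ S ∧ ∏ p ∈ T, p ≤ R) : U.card ≤ R := by
  have : U.card ≤ (Finset.Icc 1 R).card := by
    apply Finset.card_le_card_of_injOn (fun T => ∏ p ∈ T, p)
    · intro T hT
      have := hU T hT
      simp only [Finset.coe_Icc, Set.mem_Icc]
      exact ⟨Finset.prod_pos (fun p hp => (hS p (this.1 hp)).pos), this.2⟩
    · intro T hT T' hT' he
      have h1 := Nat.primeFactors_prod (fun p hp => hS p ((hU T hT).1 hp))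
      have h2 := Nat.primeFactors_prod (fun p hp => hS p ((hU T' hT').1 hp))
      simp only at he
      rw [← h1, ← h2, he]
  simpa using this

lemma family_far {S : Finset ℕ} {h : ℕ → ℝ} {ψ : ℕ → ℕ → ℝ} (D : SieveData S h ψ)
    (R : ℕ) (hR : 1 ≤ R) (U : Finset (Finset ℕ)) (hU : ∀ T ∈ U, T ⊆ S ∧ ∏ p ∈ T, p ≤ R) (θ : ℝ)
    (hfar : ∀ T ∈ U, ∀ T' ∈ U, ∀ a : ℤ, ¬ (((∏ p ∈ T ∪ T', p : ℕ) : ℤ) ∣ a) →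
      1 / (2 * (R:ℝ) ^ 4) ≤ |θ + a / (∏ p ∈ T ∪ T', p : ℕ)|) (Y : ℕ) :
    ‖∑ n ∈ Finset.range Y, (((∑ T ∈ U, ∏ p ∈ T, ψ p n) ^ 2 : ℝ) : ℂ) * ee (n * θ) -
      ((∑ T ∈ U, ∏ p ∈ T, h p : ℝ) : ℂ) * ∑ n ∈ Finset.range Y, ee (n * θ)‖
      ≤ 2 * (R:ℝ) ^ 8 := by
  have hR0 : (0:ℝ) < R := by exact_mod_cast hR
  have e1 : ∑ n ∈ Finset.range Y, (((∑ T ∈ U, ∏ p ∈ T, ψ p n) ^ 2 : ℝ) : ℂ) * ee (n * θ) =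
      ∑ T ∈ U, ∑ T' ∈ U, ∑ n ∈ Finset.range Y,
        (((∏ p ∈ T, ψ p n) * (∏ p ∈ T', ψ p n) : ℝ) : ℂ) * ee (n * θ) := by
    have : ∀ n, (((∑ T ∈ U, ∏ p ∈ T, ψ p n) ^ 2 : ℝ) : ℂ) * ee (n * θ) =
        ∑ T ∈ U, ∑ T' ∈ U, (((∏ p ∈ T, ψ p n) * (∏ p ∈ T', ψ p n) : ℝ) : ℂ) * ee (n * θ) := by
      intro n
      rw [sq, Finset.sum_mul_sum]
      push_cast
      rw [Finset.sum_mul]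
      simp_rw [Finset.sum_mul]
    simp_rw [this]
    rw [Finset.sum_comm]
    exact Finset.sum_congr rfl (fun T _ => Finset.sum_comm)
  have e2 : ((∑ T ∈ U, ∏ p ∈ T, h p : ℝ) : ℂ) * ∑ n ∈ Finset.range Y, ee (n * θ) =
      ∑ T ∈ U, ∑ T' ∈ U, ((if T = T' then ∏ p ∈ T, h p else 0 : ℝ) : ℂ) * ∑ n ∈ Finset.range Y, ee (n * θ) := by
    rw [Complex.ofReal_sum, Finset.sum_mul]
    apply Finset.sum_congr rfl
    intro T hT
    rw [← Finset.sum_mul, ← Complex.ofReal_sum]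
    congr 2
    rw [Finset.sum_ite_eq, if_pos hT]
  rw [e1, e2, ← Finset.sum_sub_distrib]
  simp_rw [← Finset.sum_sub_distrib]
  refine (norm_sum_le _ _).trans ?_
  have hbd : ∀ T ∈ U, ∀ T' ∈ U, ‖∑ n ∈ Finset.range Y, (((∏ p ∈ T, ψ p n) * (∏ p ∈ T', ψ p n) : ℝ) : ℂ) * ee (n * θ) -
      ((if T = T' then ∏ p ∈ T, h p else 0 : ℝ) : ℂ) * ∑ n ∈ Finset.range Y, ee (n * θ)‖ ≤ 2 * (R:ℝ)^6 := by
    intro T hT T' hT'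
    refine (pair_far D T T' (hU T hT).1 (hU T' hT').1 θ _ (by positivity) (hfar T hT T' hT') Y).trans ?_
    have hle : ∏ p ∈ T ∪ T', p ≤ R * R := by
      have h1 : ∏ p ∈ T ∪ T', p ∣ (∏ p ∈ T, p) * (∏ p ∈ T', p) := by
        rw [← Finset.prod_union_inter]; exact Dvd.intro _ rfl
      refine (Nat.le_of_dvd ?_ h1).trans (Nat.mul_le_mul (hU T hT).2 (hU T' hT').2)
      exact Nat.mul_pos (Finset.prod_pos (fun p hp => (D.prime p ((hU T hT).1 hp)).pos))
        (Finset.prod_pos (fun p hp => (D.prime p ((hU T' hT').1 hp)).pos))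
    have hle' : ((∏ p ∈ T ∪ T', p : ℕ) : ℝ) ≤ R * R := by exact_mod_cast hle
    calc ((∏ p ∈ T ∪ T', p : ℕ) : ℝ) / (1 / (2 * (R:ℝ) ^ 4)) = ((∏ p ∈ T ∪ T', p : ℕ) : ℝ) * (2 * (R:ℝ) ^ 4) := by
          field_simp
      _ ≤ (R * R) * (2 * (R:ℝ) ^ 4) := by gcongr
      _ = _ := by ring
  have hc : (U.card : ℝ) ≤ R := by exact_mod_cast card_family D.prime R U hU
  calc _ ≤ ∑ T ∈ U, ∑ T' ∈ U, 2 * (R:ℝ)^6 := by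
        apply Finset.sum_le_sum
        intro T hT
        refine (norm_sum_le _ _).trans ?_
        exact Finset.sum_le_sum (fun T' hT' => hbd T hT T' hT')
    _ = U.card * (U.card * (2 * (R:ℝ)^6)) := by simp
    _ ≤ R * (R * (2 * (R:ℝ)^6)) := by gcongr
    _ = _ := by ring

lemma family_sq {S : Finset ℕ} {h : ℕ → ℝ} {ψ : ℕ → ℕ → ℝ} (D : SieveData S h ψ)
    (R : ℕ) (hR : 1 ≤ R) (U : Finset (Finset ℕ)) (hU : ∀ T ∈ U, T ⊆ S ∧ ∏ p ∈ T, p ≤ R) (Y : ℕ) :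
    ∑ n ∈ Finset.range Y, (∑ T ∈ U, ∏ p ∈ T, ψ p n) ^ 2 ≤
      Y * (∑ T ∈ U, ∏ p ∈ T, h p) + 2 * (R:ℝ) ^ 8 := by
  have hR0 : (0:ℝ) < R := by exact_mod_cast hR
  have hR1 : (1:ℝ) ≤ R := by exact_mod_cast hR
  have key := family_far D R hR U hU 0 (by
    intro T hT T' hT' a ha
    have hpos : ∀ p ∈ T ∪ T', 0 < p := by
      intro p hp
      rcases Finset.mem_union.1 hp with h1 | h1
      · exact (D.prime p ((hU T hT).1 h1)).pos
      · exact (D.prime p ((hU T' hT').1 h1)).pos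
    have hle : ∏ p ∈ T ∪ T', p ≤ R * R := by
      have h1 : ∏ p ∈ T ∪ T', p ∣ (∏ p ∈ T, p) * (∏ p ∈ T', p) := by
        rw [← Finset.prod_union_inter]; exact Dvd.intro _ rfl
      refine (Nat.le_of_dvd ?_ h1).trans (Nat.mul_le_mul (hU T hT).2 (hU T' hT').2)
      exact Nat.mul_pos (Finset.prod_pos (fun p hp => (D.prime p ((hU T hT).1 hp)).pos))
        (Finset.prod_pos (fun p hp => (D.prime p ((hU T' hT').1 hp)).pos))
    have hd0 : 0 < ∏ p ∈ T ∪ T', p := Finset.prod_pos hpos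
    set d := ∏ p ∈ T ∪ T', p
    have hd0' : (0:ℝ) < d := by exact_mod_cast hd0
    have hle' : (d : ℝ) ≤ R * R := by exact_mod_cast hle
    have ha0 : a ≠ 0 := by rintro rfl; simp at ha
    have ha1 : (1:ℝ) ≤ |(a:ℝ)| := by
      rw [← Int.cast_abs]; exact_mod_cast Int.one_le_abs ha0
    rw [zero_add, abs_div, abs_of_pos hd0', div_le_div_iff₀ (by positivity) hd0']
    have : (R:ℝ) * R ≤ 2 * R ^ 4 := by
      have : (R:ℝ)^2 ≤ R^4 := pow_le_pow_right₀ hR1 (by norm_num)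
      nlinarith
    have h4 : 0 < 2 * (R:ℝ)^4 := by positivity
    nlinarith) Y
  simp only [mul_zero, ee_zero, mul_one, Finset.sum_const, Finset.card_range, nsmul_eq_mul] at key
  rw [← Complex.ofReal_sum, ← Complex.ofReal_natCast, ← Complex.ofReal_mul, ← Complex.ofReal_sub, Complex.norm_real, Real.norm_eq_abs] at key
  have := (abs_le.1 key).2
  linarith

lemma sieve_main {S : Finset ℕ} {h : ℕ → ℝ} {ψ : ℕ → ℕ → ℝ} (D : SieveData S h ψ)
    (R : ℕ) (hR : 1 ≤ R) (ε : ℝ) (hε : 0 < ε) (hε1 : ε ≤ 1) (hhε : ∀ p ∈ S, h p ≤ ε ^ 2) (Y : ℕ)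
    (hRY : 2 * (R:ℝ) ^ 8 ≤ Y * ε ^ 2) (J : ℝ)
    (hJ : J = ∑ T ∈ S.powerset.filter (fun T => ∏ p ∈ T, p ≤ R), ∏ p ∈ T, h p) (Λ : ℕ → ℝ)
    (hΛ : ∀ n, Λ n = (∑ T ∈ S.powerset.filter (fun T => ∏ p ∈ T, p ≤ R), ∏ p ∈ T, ψ p n) / J) :
    1 ≤ J ∧ ∑ n ∈ Finset.range Y, (Λ n) ^ 2 ≤ 2 * Y / J ∧
    ∀ θ : ℝ, ‖∑ n ∈ Finset.range Y, ((Λ n ^ 2 : ℝ) : ℂ) * ee (n * θ)‖ ≤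
      ‖∑ n ∈ Finset.range Y, ee (n * θ)‖ / J + 7 * Y * ε / J := by
  set U := S.powerset.filter (fun T => ∏ p ∈ T, p ≤ R) with hUdef
  have hU : ∀ T ∈ U, T ⊆ S ∧ ∏ p ∈ T, p ≤ R := by
    intro T hT
    rw [hUdef, Finset.mem_filter, Finset.mem_powerset] at hT
    exact hT
  have hHnn : ∀ T ∈ U, 0 ≤ ∏ p ∈ T, h p := fun T hT =>
    Finset.prod_nonneg (fun p hp => D.hnn p ((hU T hT).1 hp))
  have hJ1 : 1 ≤ J := by
    have h0 : ∅ ∈ U := by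
      rw [hUdef, Finset.mem_filter]; simp [hR]
    have := Finset.single_le_sum (f := fun T => ∏ p ∈ T, h p) hHnn h0
    rw [hJ]; simpa using this
  have hJ0 : 0 < J := by linarith
  have hY0 : (0:ℝ) ≤ Y := by positivity
  have hε2 : ε ^ 2 ≤ 1 := by nlinarith
  have hεε : ε ^ 2 ≤ ε := by nlinarith
  refine ⟨hJ1, ?_, ?_⟩
  · have h1 := family_sq D R hR U hU Y
    rw [← hJ] at h1
    simp_rw [hΛ, div_pow]
    rw [← Finset.sum_div, div_le_div_iff₀ (by positivity) hJ0]
    have : Y * J + 2 * (R:ℝ)^8 ≤ 2 * Y * J := by nlinarith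
    calc _ ≤ (2 * Y * J) * J := by gcongr; linarith
      _ = _ := by ring
  · intro θ
    obtain ⟨p₀, hp₀, hfar⟩ := bad_prime θ (R ^ 2)
    set U1 := U.filter (fun T => p₀ ∉ T) with hU1
    set U2 := U.filter (fun T => ¬ (p₀ ∉ T)) with hU2
    have hU1' : ∀ T ∈ U1, T ⊆ S ∧ ∏ p ∈ T, p ≤ R := fun T hT => hU T (Finset.mem_filter.1 hT).1
    have hU2' : ∀ T ∈ U2, T ⊆ S ∧ ∏ p ∈ T, p ≤ R := fun T hT => hU T (Finset.mem_filter.1 hT).1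
    set x : ℕ → ℝ := fun n => ∑ T ∈ U1, ∏ p ∈ T, ψ p n with hx
    set y : ℕ → ℝ := fun n => ∑ T ∈ U2, ∏ p ∈ T, ψ p n with hy
    have hxy : ∀ n, ∑ T ∈ U, ∏ p ∈ T, ψ p n = x n + y n := fun n =>
      (Finset.sum_filter_add_sum_filter_not U (fun T => p₀ ∉ T) _).symm
    have hJ12 : J = ∑ T ∈ U1, ∏ p ∈ T, h p + ∑ T ∈ U2, ∏ p ∈ T, h p := by
      rw [hJ]; exact (Finset.sum_filter_add_sum_filter_not U (fun T => p₀ ∉ T) _).symm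
    have hH1 : ∑ T ∈ U1, ∏ p ∈ T, h p ≤ J := by
      have : 0 ≤ ∑ T ∈ U2, ∏ p ∈ T, h p := Finset.sum_nonneg (fun T hT => hHnn T (Finset.mem_filter.1 hT).1)
      linarith
    have hH1' : 0 ≤ ∑ T ∈ U1, ∏ p ∈ T, h p :=
      Finset.sum_nonneg (fun T hT => hHnn T (Finset.mem_filter.1 hT).1)
    have hH2 : ∑ T ∈ U2, ∏ p ∈ T, h p ≤ ε ^ 2 * J := by
      have e1 : ∑ T ∈ U2, ∏ p ∈ T, h p ≤ ∑ T ∈ U2, ε ^ 2 * ∏ p ∈ T.erase p₀, h p := by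
        apply Finset.sum_le_sum
        intro T hT
        have hm : p₀ ∈ T := by simpa using (Finset.mem_filter.1 hT).2
        rw [← Finset.mul_prod_erase T h hm]
        apply mul_le_mul_of_nonneg_right (hhε _ ((hU2' T hT).1 hm))
        exact Finset.prod_nonneg (fun p hp => D.hnn p ((hU2' T hT).1 (Finset.mem_of_mem_erase hp)))
      refine e1.trans ?_
      rw [← Finset.mul_sum]
      apply mul_le_mul_of_nonneg_left _ (by positivity)
      have e2 : ∑ T ∈ U2, ∏ p ∈ T.erase p₀, h p = ∑ T ∈ U2.image (fun T => T.erase p₀), ∏ p ∈ T, h p := by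
        rw [Finset.sum_image]
        intro T hT T' hT' he
        have hm : p₀ ∈ T := by simpa using (Finset.mem_filter.1 hT).2
        have hm' : p₀ ∈ T' := by simpa using (Finset.mem_filter.1 hT').2
        simp only at he
        rw [← Finset.insert_erase hm, he, Finset.insert_erase hm']
      rw [e2, hJ]
      apply Finset.sum_le_sum_of_subset_of_nonneg
      · intro T hT
        obtain ⟨T', hT', rfl⟩ := Finset.mem_image.1 hT
        have hm : p₀ ∈ T' := by simpa using (Finset.mem_filter.1 hT').2
        rw [hUdef, Finset.mem_filter, Finset.mem_powerset]
        refine ⟨(Finset.erase_subset _ _).trans (hU2' T' hT').1, le_trans ?_ (hU2' T' hT').2⟩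
        rw [← Finset.mul_prod_erase T' (fun p => p) hm]
        exact Nat.le_mul_of_pos_left _ hp₀.pos
      · intro T hT _; exact hHnn T hT
    have hA := family_sq D R hR U1 hU1' Y
    have hB := family_sq D R hR U2 hU2' Y
    have hA' : ∑ n ∈ Finset.range Y, (x n) ^ 2 ≤ 2 * Y * J := by
      have : (Y:ℝ) * ∑ T ∈ U1, ∏ p ∈ T, h p ≤ Y * J := by gcongr
      have : 2 * (R:ℝ)^8 ≤ Y * J := by nlinarith
      linarith
    have hB' : ∑ n ∈ Finset.range Y, (y n) ^ 2 ≤ 2 * Y * J * ε ^ 2 := by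
      have h1 : (Y:ℝ) * ∑ T ∈ U2, ∏ p ∈ T, h p ≤ Y * (ε ^ 2 * J) := by gcongr
      have h2 : 2 * (R:ℝ)^8 ≤ Y * ε ^ 2 * J := by
        have : 0 ≤ Y * ε ^ 2 := by positivity
        nlinarith
      linarith
    have hM := family_far D R hR U1 hU1' θ (by
      intro T hT T' hT' a ha
      have hpr : ∀ p ∈ T ∪ T', p.Prime := by
        intro p hp
        rcases Finset.mem_union.1 hp with h1 | h1
        · exact D.prime p ((hU1' T hT).1 h1)
        · exact D.prime p ((hU1' T' hT').1 h1)
      have hle : ∏ p ∈ T ∪ T', p ≤ R * R := by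
        have h1 : ∏ p ∈ T ∪ T', p ∣ (∏ p ∈ T, p) * (∏ p ∈ T', p) := by
          rw [← Finset.prod_union_inter]; exact Dvd.intro _ rfl
        refine (Nat.le_of_dvd ?_ h1).trans (Nat.mul_le_mul (hU1' T hT).2 (hU1' T' hT').2)
        exact Nat.mul_pos (Finset.prod_pos (fun p hp => (D.prime p ((hU1' T hT).1 hp)).pos))
          (Finset.prod_pos (fun p hp => (D.prime p ((hU1' T' hT').1 hp)).pos))
      have := hfar (∏ p ∈ T ∪ T', p) (Finset.prod_pos (fun p hp => (hpr p hp).pos))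
        (by rw [sq]; exact hle) (by
          intro hd
          rw [hp₀.prime.dvd_finsetProd_iff] at hd
          obtain ⟨q, hq, hd⟩ := hd
          rw [Nat.prime_dvd_prime_iff_eq hp₀ (hpr q hq)] at hd
          subst hd
          rcases Finset.mem_union.1 hq with h1 | h1
          · exact (Finset.mem_filter.1 hT).2 h1
          · exact (Finset.mem_filter.1 hT').2 h1) a ha
      refine le_trans (le_of_eq ?_) this
      push_cast; congr 2; ring) Y
    have hM' : ‖∑ n ∈ Finset.range Y, ((x n ^ 2 : ℝ) : ℂ) * ee (n * θ)‖ ≤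
        J * ‖∑ n ∈ Finset.range Y, ee (n * θ)‖ + 2 * (R:ℝ)^8 := by
      have h1 := norm_le_norm_add_norm_sub' (∑ n ∈ Finset.range Y, ((x n ^ 2 : ℝ) : ℂ) * ee (n * θ))
        (((∑ T ∈ U1, ∏ p ∈ T, h p : ℝ) : ℂ) * ∑ n ∈ Finset.range Y, ee (n * θ))
      have h2 : ‖((∑ T ∈ U1, ∏ p ∈ T, h p : ℝ) : ℂ) * ∑ n ∈ Finset.range Y, ee (n * θ)‖ ≤ J * ‖∑ n ∈ Finset.range Y, ee (n * θ)‖ := by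
        rw [norm_mul, Complex.norm_real, Real.norm_eq_abs, abs_of_nonneg hH1']
        gcongr
      linarith
    have hC : ‖∑ n ∈ Finset.range Y, ((2 * (x n * y n) + y n ^ 2 : ℝ) : ℂ) * ee (n * θ)‖ ≤ 6 * Y * J * ε := by
      calc _ ≤ ∑ n ∈ Finset.range Y, (ε * x n ^ 2 + (1 / ε + 1) * y n ^ 2) := by
            refine (norm_sum_le _ _).trans (Finset.sum_le_sum (fun n _ => ?_))
            rw [norm_mul, ee_norm, mul_one, Complex.norm_real, Real.norm_eq_abs]
            have h1 : |2 * (x n * y n) + y n ^ 2| ≤ 2 * (|x n| * |y n|) + y n ^ 2 := by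
              refine (abs_add_le _ _).trans ?_
              rw [abs_mul, abs_mul, abs_two, abs_pow, sq_abs]
            have h2 : 2 * (|x n| * |y n|) ≤ ε * x n ^ 2 + (1 / ε) * y n ^ 2 := by
              rw [← sq_abs (x n), ← sq_abs (y n)]
              have h3 : 0 ≤ (ε * |x n| - |y n|) ^ 2 / ε := by positivity
              have h4 : (ε * |x n| - |y n|) ^ 2 / ε = ε * |x n| ^ 2 + (1 / ε) * |y n| ^ 2 - 2 * (|x n| * |y n|) := by
                field_simp; ring
              linarith
            linarith
        _ = ε * ∑ n ∈ Finset.range Y, x n ^ 2 + (1 / ε + 1) * ∑ n ∈ Finset.range Y, y n ^ 2 := by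
            rw [Finset.sum_add_distrib, Finset.mul_sum, Finset.mul_sum]
        _ ≤ ε * (2 * Y * J) + (1 / ε + 1) * (2 * Y * J * ε ^ 2) := by gcongr
        _ = 4 * Y * J * ε + 2 * Y * J * ε ^ 2 := by field_simp; ring
        _ ≤ 4 * Y * J * ε + 2 * Y * J * ε := by gcongr
        _ = _ := by ring
    have hsum : ∑ n ∈ Finset.range Y, ((Λ n ^ 2 : ℝ) : ℂ) * ee (n * θ) =
        ((1 / J ^ 2 : ℝ) : ℂ) * (∑ n ∈ Finset.range Y, ((x n ^ 2 : ℝ) : ℂ) * ee (n * θ) +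
          ∑ n ∈ Finset.range Y, ((2 * (x n * y n) + y n ^ 2 : ℝ) : ℂ) * ee (n * θ)) := by
      rw [← Finset.sum_add_distrib, Finset.mul_sum]
      apply Finset.sum_congr rfl
      intro n _
      rw [← add_mul, ← mul_assoc, ← Complex.ofReal_add, ← Complex.ofReal_mul, hΛ, hxy]
      congr 2
      field_simp
      ring
    rw [hsum, norm_mul, Complex.norm_real, Real.norm_eq_abs, abs_of_pos (by positivity)]
    have hfin : ‖∑ n ∈ Finset.range Y, ((x n ^ 2 : ℝ) : ℂ) * ee (n * θ) +
          ∑ n ∈ Finset.range Y, ((2 * (x n * y n) + y n ^ 2 : ℝ) : ℂ) * ee (n * θ)‖ ≤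
        J * ‖∑ n ∈ Finset.range Y, ee (n * θ)‖ + 7 * Y * J * ε := by
      refine (norm_add_le _ _).trans ?_
      have : 2 * (R:ℝ)^8 ≤ Y * J * ε := by
        have h1 : (Y:ℝ) * ε ^ 2 ≤ Y * ε := by gcongr
        have h2 : (Y:ℝ) * ε * 1 ≤ Y * ε * J := by gcongr
        linarith
      linarith
    calc _ ≤ 1 / J ^ 2 * (J * ‖∑ n ∈ Finset.range Y, ee (n * θ)‖ + 7 * Y * J * ε) := by gcongr
      _ = _ := by
        generalize ‖∑ n ∈ Finset.range Y, ee (n * θ)‖ = q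
        field_simp


/-- exponential sum over `A` -/
noncomputable def GG (P : ℕ) [NeZero P] (A : Finset ℕ) (t : ZMod P) : ℂ :=
  ∑ n ∈ A, ZMod.stdAddChar (t * (n : ZMod P))

lemma std_norm (P : ℕ) [NeZero P] (x : ZMod P) : ‖(ZMod.stdAddChar x : ℂ)‖ = 1 :=
  AddChar.norm_apply _ _

lemma std_conj (P : ℕ) [NeZero P] (x : ZMod P) :
    (starRingEnd ℂ) (ZMod.stdAddChar x : ℂ) = ZMod.stdAddChar (-x) := by
  rw [AddChar.map_neg_eq_conj]

lemma GG_le (P : ℕ) [NeZero P] (A : Finset ℕ) (t : ZMod P) : ‖GG P A t‖ ≤ A.card := by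
  refine (norm_sum_le _ _).trans ?_
  simp

lemma GG_parseval (P : ℕ) [NeZero P] (A : Finset ℕ)
    (hinj : Set.InjOn (fun n : ℕ => (n : ZMod P)) A) :
    ∑ t : ZMod P, ‖GG P A t‖ ^ 2 = P * A.card := by
  have h1 : ∀ t : ZMod P, ((‖GG P A t‖ ^ 2 : ℝ) : ℂ) =
      ∑ n ∈ A, ∑ n' ∈ A, ZMod.stdAddChar (t * ((n : ZMod P) - (n' : ZMod P))) := by
    intro t
    rw [Complex.ofReal_pow, ← Complex.mul_conj', GG, map_sum, Finset.sum_mul_sum]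
    apply Finset.sum_congr rfl; intro n _
    apply Finset.sum_congr rfl; intro n' _
    rw [std_conj, ← AddChar.map_add_eq_mul]
    congr 1; ring
  have h2 : ((∑ t : ZMod P, ‖GG P A t‖ ^ 2 : ℝ) : ℂ) = ((P * A.card : ℝ) : ℂ) := by
    rw [Complex.ofReal_sum]
    simp_rw [h1]
    rw [Finset.sum_comm]
    have : ∀ n ∈ A, ∑ t : ZMod P, ∑ n' ∈ A, (ZMod.stdAddChar (t * ((n : ZMod P) - (n' : ZMod P))) : ℂ) = P := by
      intro n hn
      rw [Finset.sum_comm, Finset.sum_eq_single n]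
      · simp
      · intro n' hn' hne
        rw [AddChar.sum_mulShift _ (ZMod.isPrimitive_stdAddChar P), if_neg]
        · simp
        · intro h
          exact hne (hinj hn hn' (sub_eq_zero.1 h)).symm
      · intro h; exact absurd hn h
    rw [Finset.sum_congr rfl this]
    simp [mul_comm]
  exact_mod_cast h2

lemma GG_TT (P : ℕ) [NeZero P] (A : Finset ℕ) (Y : ℕ) (hAY : A ⊆ Finset.range Y)
    (w : ℕ → ℝ) (hw0 : ∀ n, 0 ≤ w n) (hwA : ∀ n ∈ A, w n = 1) (V E : ℝ) (hE : 0 ≤ E)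
    (hV : ∑ n ∈ Finset.range Y, w n ≤ 2 * V)
    (hW : ∀ t : ZMod P, t ≠ 0 →
      ‖∑ n ∈ Finset.range Y, (w n : ℂ) * ZMod.stdAddChar (t * (n : ZMod P))‖ ≤ E)
    (Rs : Finset (ZMod P)) :
    ∑ t ∈ Rs, ‖GG P A t‖ ^ 2 ≤ A.card * (2 * V + E * Rs.card) := by
  set Q := ∑ t ∈ Rs, ‖GG P A t‖ ^ 2 with hQ
  have hQ0 : 0 ≤ Q := Finset.sum_nonneg (fun _ _ => by positivity)
  set W : ZMod P → ℂ := fun t => ∑ n ∈ Finset.range Y, (w n : ℂ) * ZMod.stdAddChar (t * (n : ZMod P)) with hWd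
  have hW0 : ‖W 0‖ ≤ 2 * V := by
    refine le_trans ?_ hV
    refine (norm_sum_le _ _).trans (Finset.sum_le_sum (fun n _ => ?_))
    rw [norm_mul, std_norm, mul_one, Complex.norm_real, Real.norm_eq_abs, abs_of_nonneg (hw0 n)]
  have hV0 : 0 ≤ 2 * V := (norm_nonneg _).trans hW0
  have hrow : ∀ t ∈ Rs, ∑ t' ∈ Rs, ‖W (t - t')‖ ≤ 2 * V + E * Rs.card := by
    intro t ht
    rw [← Finset.add_sum_erase _ _ ht, sub_self]
    apply add_le_add hW0
    calc _ ≤ ∑ t' ∈ Rs.erase t, E := Finset.sum_le_sum (fun t' ht' => hW _ (by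
            rw [sub_ne_zero]; exact (Finset.ne_of_mem_erase ht').symm))
      _ = (Rs.erase t).card * E := by simp
      _ ≤ Rs.card * E := by gcongr; exact Finset.erase_subset _ _
      _ = _ := mul_comm _ _
  have hsym : ∀ t t' : ZMod P, ‖W (t' - t)‖ = ‖W (t - t')‖ := by
    intro t t'
    have : W (t' - t) = (starRingEnd ℂ) (W (t - t')) := by
      simp only [hWd]
      rw [map_sum]
      apply Finset.sum_congr rfl; intro n _
      rw [map_mul (starRingEnd ℂ), Complex.conj_ofReal, std_conj]
      congr 2; ring
    rw [this, RCLike.norm_conj]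
  set H : ℕ → ℂ := fun n => ∑ t ∈ Rs, (starRingEnd ℂ) (GG P A t) * ZMod.stdAddChar (t * (n : ZMod P)) with hH
  have hHA : ∑ n ∈ A, H n = (Q : ℂ) := by
    simp only [hH]
    rw [Finset.sum_comm, hQ, Complex.ofReal_sum]
    apply Finset.sum_congr rfl; intro t _
    rw [← Finset.mul_sum, Complex.ofReal_pow, ← Complex.conj_mul']
    rfl
  have hQle : Q ≤ ∑ n ∈ A, ‖H n‖ := by
    have : Q = ‖∑ n ∈ A, H n‖ := by
      rw [hHA, Complex.norm_real, Real.norm_eq_abs, abs_of_nonneg hQ0]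
    rw [this]; exact norm_sum_le _ _
  have hQ2 : Q ^ 2 ≤ A.card * ∑ n ∈ A, ‖H n‖ ^ 2 :=
    (pow_le_pow_left₀ hQ0 hQle 2).trans (sq_sum_le_card_mul_sum_sq)
  have hext : ∑ n ∈ A, ‖H n‖ ^ 2 ≤ ∑ n ∈ Finset.range Y, w n * ‖H n‖ ^ 2 := by
    calc _ = ∑ n ∈ A, w n * ‖H n‖ ^ 2 := Finset.sum_congr rfl (fun n hn => by rw [hwA n hn, one_mul])
      _ ≤ _ := Finset.sum_le_sum_of_subset_of_nonneg hAY (fun n _ _ => mul_nonneg (hw0 n) (by positivity))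
  have hexp : ((∑ n ∈ Finset.range Y, w n * ‖H n‖ ^ 2 : ℝ) : ℂ) =
      ∑ t ∈ Rs, ∑ t' ∈ Rs, ((starRingEnd ℂ) (GG P A t) * GG P A t') * W (t - t') := by
    have : ∀ n, ((w n * ‖H n‖ ^ 2 : ℝ) : ℂ) = ∑ t ∈ Rs, ∑ t' ∈ Rs,
        ((starRingEnd ℂ) (GG P A t) * GG P A t') * ((w n : ℂ) * ZMod.stdAddChar ((t - t') * (n : ZMod P))) := by
      intro n
      rw [Complex.ofReal_mul, Complex.ofReal_pow, ← Complex.mul_conj']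
      simp only [hH]
      rw [map_sum, Finset.sum_mul_sum, Finset.mul_sum]
      apply Finset.sum_congr rfl; intro t _
      rw [Finset.mul_sum]
      apply Finset.sum_congr rfl; intro t' _
      rw [map_mul (starRingEnd ℂ), Complex.conj_conj, std_conj]
      have : (t - t') * (n : ZMod P) = t * n + -(t' * n) := by ring
      rw [this, AddChar.map_add_eq_mul]
      ring
    rw [Complex.ofReal_sum]
    simp_rw [this]
    rw [Finset.sum_comm]
    apply Finset.sum_congr rfl; intro t _
    rw [Finset.sum_comm]
    apply Finset.sum_congr rfl; intro t' _
    rw [← Finset.mul_sum]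
  have hbd : ∑ n ∈ Finset.range Y, w n * ‖H n‖ ^ 2 ≤ Q * (2 * V + E * Rs.card) := by
    have h1 : ∑ n ∈ Finset.range Y, w n * ‖H n‖ ^ 2 = ‖((∑ n ∈ Finset.range Y, w n * ‖H n‖ ^ 2 : ℝ) : ℂ)‖ := by
      rw [Complex.norm_real, Real.norm_eq_abs, abs_of_nonneg]
      exact Finset.sum_nonneg (fun n _ => mul_nonneg (hw0 n) (by positivity))
    rw [h1, hexp]
    have h2 : ∑ t ∈ Rs, ∑ t' ∈ Rs, ‖GG P A t‖ ^ 2 * ‖W (t - t')‖ ≤ Q * (2 * V + E * Rs.card) := by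
      rw [hQ, Finset.sum_mul]
      apply Finset.sum_le_sum; intro t ht
      rw [← Finset.mul_sum]
      exact mul_le_mul_of_nonneg_left (hrow t ht) (by positivity)
    have h3 : ∑ t ∈ Rs, ∑ t' ∈ Rs, ‖GG P A t'‖ ^ 2 * ‖W (t - t')‖ ≤ Q * (2 * V + E * Rs.card) := by
      rw [Finset.sum_comm]
      refine le_trans (le_of_eq ?_) h2
      apply Finset.sum_congr rfl; intro t _
      apply Finset.sum_congr rfl; intro t' _
      rw [hsym]
    calc _ ≤ ∑ t ∈ Rs, ∑ t' ∈ Rs, (‖GG P A t‖ * ‖GG P A t'‖) * ‖W (t - t')‖ := by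
          refine (norm_sum_le _ _).trans (Finset.sum_le_sum (fun t _ => ?_))
          refine (norm_sum_le _ _).trans (Finset.sum_le_sum (fun t' _ => ?_))
          rw [norm_mul, norm_mul, RCLike.norm_conj]
      _ ≤ ∑ t ∈ Rs, ∑ t' ∈ Rs, (1/2 * (‖GG P A t‖ ^ 2 * ‖W (t - t')‖) + 1/2 * (‖GG P A t'‖ ^ 2 * ‖W (t - t')‖)) := by
          apply Finset.sum_le_sum; intro t _
          apply Finset.sum_le_sum; intro t' _
          have : ‖GG P A t‖ * ‖GG P A t'‖ ≤ 1/2 * ‖GG P A t‖ ^ 2 + 1/2 * ‖GG P A t'‖ ^ 2 := by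
            nlinarith [sq_nonneg (‖GG P A t‖ - ‖GG P A t'‖)]
          have := mul_le_mul_of_nonneg_right this (norm_nonneg (W (t - t')))
          linarith
      _ = 1/2 * (∑ t ∈ Rs, ∑ t' ∈ Rs, ‖GG P A t‖ ^ 2 * ‖W (t - t')‖) +
          1/2 * (∑ t ∈ Rs, ∑ t' ∈ Rs, ‖GG P A t'‖ ^ 2 * ‖W (t - t')‖) := by
          simp_rw [Finset.sum_add_distrib, Finset.mul_sum]
      _ ≤ _ := by linarith
  have hfin : Q ^ 2 ≤ Q * (A.card * (2 * V + E * Rs.card)) := by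
    calc Q ^ 2 ≤ A.card * ∑ n ∈ A, ‖H n‖ ^ 2 := hQ2
      _ ≤ A.card * (Q * (2 * V + E * Rs.card)) := by gcongr; exact hext.trans hbd
      _ = _ := by ring
  rcases hQ0.eq_or_lt with h0 | h0
  · rw [← h0]; positivity
  · rw [sq] at hfin
    exact le_of_mul_le_mul_left hfin h0

lemma GG_moment (P : ℕ) [NeZero P] (A : Finset ℕ) (Y : ℕ) (hAY : A ⊆ Finset.range Y)
    (hinj : Set.InjOn (fun n : ℕ => (n : ZMod P)) A)
    (w : ℕ → ℝ) (hw0 : ∀ n, 0 ≤ w n) (hwA : ∀ n ∈ A, w n = 1) (V E : ℝ) (hE : 0 ≤ E) (hV0 : 0 < V)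
    (hV : ∑ n ∈ Finset.range Y, w n ≤ 2 * V)
    (hW : ∀ t : ZMod P, t ≠ 0 →
      ‖∑ n ∈ Finset.range Y, (w n : ℂ) * ZMod.stdAddChar (t * (n : ZMod P))‖ ≤ E)
    (m : ℝ) (hm : 2 < m) (α : ℝ) (hα : 0 < α) (h1 : E * (2 * P) ≤ α ^ 2 * V ^ 2)
    (h2 : α ^ (m - 2) * P ≤ V) :
    ∑ t : ZMod P, ‖GG P A t‖ ^ m ≤ (6 * 2 ^ (m - 2) + 2) * V ^ m := by
  have hA : (A.card : ℝ) ≤ 2 * V := by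
    calc (A.card : ℝ) = ∑ n ∈ A, w n := by rw [Finset.sum_congr rfl hwA]; simp
      _ ≤ ∑ n ∈ Finset.range Y, w n := Finset.sum_le_sum_of_subset_of_nonneg hAY (fun n _ _ => hw0 n)
      _ ≤ _ := hV
  set Rs : Finset (ZMod P) := Finset.univ.filter (fun t => α * V ≤ ‖GG P A t‖) with hRs
  have hpars := GG_parseval P A hinj
  have hsplit : ∀ x : ℝ, 0 ≤ x → x ^ m = x ^ (m - 2) * x ^ 2 := by
    intro x hx
    rcases hx.eq_or_lt with h | h
    · rw [← h, Real.zero_rpow (by linarith)]; simp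
    · rw [← Real.rpow_natCast x 2, ← Real.rpow_add h]; congr 1; push_cast; ring
  have hcard : (Rs.card : ℝ) * (α * V) ^ 2 ≤ P * (2 * V) := by
    calc (Rs.card : ℝ) * (α * V) ^ 2 = ∑ t ∈ Rs, (α * V) ^ 2 := by simp
      _ ≤ ∑ t ∈ Rs, ‖GG P A t‖ ^ 2 := by
          apply Finset.sum_le_sum; intro t ht
          exact pow_le_pow_left₀ (by positivity) (Finset.mem_filter.1 ht).2 2
      _ ≤ ∑ t : ZMod P, ‖GG P A t‖ ^ 2 := Finset.sum_le_sum_of_subset_of_nonneg (Finset.subset_univ _) (fun _ _ _ => by positivity)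
      _ = P * A.card := hpars
      _ ≤ _ := by gcongr
  have hER : E * Rs.card ≤ V := by
    have hpos : 0 < (α * V) ^ 2 := by positivity
    have : (E * Rs.card) * (α * V) ^ 2 ≤ V * (α * V) ^ 2 := by
      calc (E * Rs.card) * (α * V) ^ 2 = E * (Rs.card * (α * V) ^ 2) := by ring
        _ ≤ E * (P * (2 * V)) := by gcongr
        _ = (E * (2 * P)) * V := by ring
        _ ≤ (α ^ 2 * V ^ 2) * V := by gcongr
        _ = _ := by ring
    exact le_of_mul_le_mul_right this hpos
  have hTT := GG_TT P A Y hAY w hw0 hwA V E hE hV hW Rs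
  have hin : ∑ t ∈ Rs, ‖GG P A t‖ ^ m ≤ (6 * 2 ^ (m - 2)) * V ^ m := by
    calc ∑ t ∈ Rs, ‖GG P A t‖ ^ m ≤ ∑ t ∈ Rs, (2 * V) ^ (m - 2) * ‖GG P A t‖ ^ 2 := by
          apply Finset.sum_le_sum; intro t _
          rw [hsplit _ (norm_nonneg _)]
          gcongr
          exact (GG_le P A t).trans hA
      _ = (2 * V) ^ (m - 2) * ∑ t ∈ Rs, ‖GG P A t‖ ^ 2 := by rw [Finset.mul_sum]
      _ ≤ (2 * V) ^ (m - 2) * ((2 * V) * (2 * V + V)) := by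
          gcongr
          refine hTT.trans ?_
          gcongr
      _ = _ := by
          rw [Real.mul_rpow (by norm_num) hV0.le, hsplit V hV0.le]; ring
  have hout : ∑ t ∈ Finset.univ.filter (fun t => ¬ (α * V ≤ ‖GG P A t‖)), ‖GG P A t‖ ^ m ≤ 2 * V ^ m := by
    calc _ ≤ ∑ t ∈ Finset.univ.filter (fun t => ¬ (α * V ≤ ‖GG P A t‖)), (α * V) ^ (m - 2) * ‖GG P A t‖ ^ 2 := by
          apply Finset.sum_le_sum; intro t ht
          rw [hsplit _ (norm_nonneg _)]
          have := (Finset.mem_filter.1 ht).2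
          push Not at this
          gcongr
      _ = (α * V) ^ (m - 2) * ∑ t ∈ Finset.univ.filter (fun t => ¬ (α * V ≤ ‖GG P A t‖)), ‖GG P A t‖ ^ 2 := by rw [Finset.mul_sum]
      _ ≤ (α * V) ^ (m - 2) * (P * (2 * V)) := by
          gcongr
          calc _ ≤ ∑ t : ZMod P, ‖GG P A t‖ ^ 2 := Finset.sum_le_sum_of_subset_of_nonneg (Finset.subset_univ _) (fun _ _ _ => by positivity)
            _ = P * A.card := hpars
            _ ≤ _ := by gcongr
      _ = (α ^ (m - 2) * P) * (V ^ (m - 2) * (2 * V)) := by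
          rw [Real.mul_rpow hα.le hV0.le]; ring
      _ ≤ V * (V ^ (m - 2) * (2 * V)) := by gcongr
      _ = _ := by rw [hsplit V hV0.le]; ring
  rw [← Finset.sum_filter_add_sum_filter_not Finset.univ (fun t => α * V ≤ ‖GG P A t‖)]
  linarith


/-- local sieve weights -/
noncomputable def psiF (k : ℕ) (F : ℤ → ℤ) (b₀ M : ℕ) (p n : ℕ) : ℝ :=
  open Classical in
  if (p : ℤ) ∣ F ((b₀ : ℤ) + n * M) then -1 else (k : ℝ) / (p - k)

lemma F_dvd_iff (k : ℕ) (a b : Fin k → ℤ) (F : ℤ → ℤ) (hF : ∀ n : ℤ, F n = ∏ i, (a i * n + b i))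
    (p : ℕ) [Fact p.Prime] (x : ℤ) :
    (p : ℤ) ∣ F x ↔ ∃ i, (a i : ZMod p) * (x : ZMod p) + b i = 0 := by
  rw [← ZMod.intCast_zmod_eq_zero_iff_dvd, hF]
  push_cast
  rw [Finset.prod_eq_zero_iff]
  simp

lemma root_count (k : ℕ) (a b : Fin k → ℤ) (F : ℤ → ℤ) (hF : ∀ n : ℤ, F n = ∏ i, (a i * n + b i))
    (p : ℕ) (hp : p.Prime) (b₀ M : ℕ) (hM : ¬ p ∣ M)
    (hd : ¬ (p : ℤ) ∣ (∏ i, a i) *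
      ∏ i, ∏ j ∈ Finset.univ.filter (fun j => j ≠ i), (a i * b j - b i * a j)) :
    ((Finset.range p).filter (fun r : ℕ => (p : ℤ) ∣ F ((b₀ : ℤ) + r * M))).card = k := by
  classical
  have hfp : Fact p.Prime := ⟨hp⟩
  have hpp : Prime (p : ℤ) := Nat.prime_iff_prime_int.1 hp
  have hM' : (M : ZMod p) ≠ 0 := by
    rwa [Ne, ZMod.natCast_eq_zero_iff]
  have ha' : ∀ i, (a i : ZMod p) ≠ 0 := by
    intro i h
    rw [ZMod.intCast_zmod_eq_zero_iff_dvd] at h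
    exact hd (Dvd.dvd.mul_right (h.trans (Finset.dvd_prod_of_mem a (Finset.mem_univ i))) _)
  have hab : ∀ i j, j ≠ i → (a i : ZMod p) * b j - b i * a j ≠ 0 := by
    intro i j hij h
    have h' : ((a i * b j - b i * a j : ℤ) : ZMod p) = 0 := by push_cast; exact h
    rw [ZMod.intCast_zmod_eq_zero_iff_dvd] at h'
    apply hd
    apply Dvd.dvd.mul_left
    refine (h'.trans ?_).trans (Finset.dvd_prod_of_mem _ (Finset.mem_univ i))
    exact Finset.dvd_prod_of_mem (fun j => a i * b j - b i * a j) (by simp [hij])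
  let ρ : Fin k → ZMod p := fun i => (-(b i : ZMod p) / a i - b₀) / M
  have hρ : Function.Injective ρ := by
    intro i j hij
    by_contra hne
    have h1 : (-(b i : ZMod p) / a i) = (-(b j : ZMod p) / a j) := by
      have h2 : (-(b i : ZMod p) / a i - b₀) / M = (-(b j : ZMod p) / a j - b₀) / M := hij
      rw [div_left_inj' hM'] at h2
      exact sub_left_injective h2
    rw [div_eq_div_iff (ha' i) (ha' j)] at h1
    apply hab i j (Ne.symm hne)
    linear_combination (h1)
  have himg : ((Finset.range p).filter (fun r : ℕ => (p : ℤ) ∣ F ((b₀ : ℤ) + r * M))).image (fun r : ℕ => (r : ZMod p)) =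
      Finset.univ.image ρ := by
    ext x
    simp only [Finset.mem_image, Finset.mem_filter, Finset.mem_range, Finset.mem_univ, true_and]
    have key : ∀ r : ℕ, (p : ℤ) ∣ F ((b₀ : ℤ) + r * M) ↔ ∃ i, ρ i = (r : ZMod p) := by
      intro r
      rw [F_dvd_iff k a b F hF p]
      apply exists_congr; intro i
      have h1 := ha' i
      simp only [ρ]
      push_cast
      rw [div_eq_iff hM', sub_eq_iff_eq_add, div_eq_iff h1]
      constructor
      · intro h; linear_combination -h
      · intro h; linear_combination -h
    constructor
    · rintro ⟨r, ⟨_, h⟩, rfl⟩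
      exact (key r).1 h
    · rintro ⟨i, rfl⟩
      refine ⟨(ρ i).val, ⟨ZMod.val_lt _, (key _).2 ⟨i, ?_⟩⟩, ?_⟩
      · simp
      · simp
  have hc1 : (((Finset.range p).filter (fun r : ℕ => (p : ℤ) ∣ F ((b₀ : ℤ) + r * M))).image (fun r : ℕ => (r : ZMod p))).card = ((Finset.range p).filter (fun r : ℕ => (p : ℤ) ∣ F ((b₀ : ℤ) + r * M))).card := by
    apply Finset.card_image_of_injOn
    intro r hr r' hr' h
    have h1 : r < p := Finset.mem_range.1 (Finset.mem_filter.1 hr).1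
    have h2 : r' < p := Finset.mem_range.1 (Finset.mem_filter.1 hr').1
    have h3 : (r : ZMod p) = (r' : ZMod p) := h
    rw [ZMod.natCast_eq_natCast_iff'] at h3
    rwa [Nat.mod_eq_of_lt h1, Nat.mod_eq_of_lt h2] at h3
  rw [← hc1, himg, Finset.card_image_of_injective _ hρ]
  simp

lemma psi_sieve (k : ℕ) (hk : 1 ≤ k) (a b : Fin k → ℤ) (F : ℤ → ℤ) (hF : ∀ n : ℤ, F n = ∏ i, (a i * n + b i))
    (S : Finset ℕ) (b₀ M : ℕ)
    (hS : ∀ p ∈ S, p.Prime ∧ 2 * k ≤ p ∧ ¬ p ∣ M ∧ ¬ (p : ℤ) ∣ (∏ i, a i) *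
      ∏ i, ∏ j ∈ Finset.univ.filter (fun j => j ≠ i), (a i * b j - b i * a j)) :
    SieveData S (fun p => (k:ℝ) / (p - k)) (psiF k F b₀ M) := by
  have hpk : ∀ p ∈ S, (k:ℝ) ≤ p - k := by
    intro p hp
    have : ((2 * k : ℕ) : ℝ) ≤ p := by exact_mod_cast (hS p hp).2.1
    push_cast at this; linarith
  have hk' : (1:ℝ) ≤ k := by exact_mod_cast hk
  have hsum : ∀ p ∈ S, ∀ g : ℝ → ℝ, ∑ r ∈ Finset.range p, g (psiF k F b₀ M p r) =
      k * g (-1) + (p - k) * g ((k:ℝ) / (p - k)) := by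
    intro p hp g
    classical
    have hc := root_count k a b F hF p (hS p hp).1 b₀ M (hS p hp).2.2.1 (hS p hp).2.2.2
    have hc2 := Finset.card_filter_add_card_filter_not (s := Finset.range p) (fun r : ℕ => (p : ℤ) ∣ F ((b₀ : ℤ) + r * M))
    rw [← Finset.sum_filter_add_sum_filter_not (Finset.range p) (fun r : ℕ => (p : ℤ) ∣ F ((b₀ : ℤ) + r * M))]
    congr 1
    · rw [Finset.sum_congr rfl (g := fun _ => g (-1))]
      · rw [Finset.sum_const, hc, nsmul_eq_mul]
      · intro r hr
        rw [psiF, if_pos (Finset.mem_filter.1 hr).2]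
    · rw [Finset.sum_congr rfl (g := fun _ => g ((k:ℝ) / (p - k)))]
      · rw [Finset.sum_const, nsmul_eq_mul]
        congr 1
        rw [hc, Finset.card_range] at hc2
        have : ((k + (((Finset.range p).filter (fun r : ℕ => ¬ (p : ℤ) ∣ F ((b₀ : ℤ) + r * M))).card) : ℕ) : ℝ) = p := by
          exact_mod_cast hc2
        push_cast at this
        linarith
      · intro r hr
        rw [psiF, if_neg (Finset.mem_filter.1 hr).2]
  refine ⟨fun p hp => (hS p hp).1, ?_, ?_, ?_, ?_, ?_⟩
  · intro p hp n
    have hfp : Fact p.Prime := ⟨(hS p hp).1⟩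
    have : ((p : ℤ) ∣ F ((b₀ : ℤ) + (n % p : ℕ) * M)) ↔ (p : ℤ) ∣ F ((b₀ : ℤ) + n * M) := by
      rw [F_dvd_iff k a b F hF, F_dvd_iff k a b F hF]
      push_cast
      simp
    simp only [psiF, this]
  · intro p hp n
    have := hpk p hp
    rw [psiF]
    split_ifs
    · simp
    · rw [abs_of_nonneg (div_nonneg (by linarith) (by linarith)), div_le_one (by linarith)]
      exact this
  · intro p hp
    have := hpk p hp
    have h := hsum p hp (fun x => x)
    rw [h, mul_div_cancel₀ _ (by linarith)]; ring
  · intro p hp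
    have := hpk p hp
    have h := hsum p hp (fun x => x ^ 2)
    have h2 : (p:ℝ) - k ≠ 0 := by linarith
    rw [h]; field_simp; ring
  · intro p hp
    have := hpk p hp
    exact div_nonneg (by linarith) (by linarith)


lemma zmod_sum_range' (p : ℕ) [NeZero p] (f : ZMod p → ℂ) :
    ∑ r ∈ Finset.range p, f (r : ZMod p) = ∑ y : ZMod p, f y := by
  obtain ⟨q, rfl⟩ : ∃ q, p = q + 1 := ⟨p - 1, by have := NeZero.ne p; omega⟩
  rw [← Fin.sum_univ_eq_sum_range (fun n => f (n : ZMod (q + 1))) (q + 1)]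
  apply Finset.sum_congr rfl
  intro x _
  congr 1
  exact Fin.cast_val_eq_self x

lemma sieve_apply (k : ℕ) (hk : 1 ≤ k) (a b : Fin k → ℤ) (F : ℤ → ℤ)
    (hF : ∀ n : ℤ, F n = ∏ i, (a i * n + b i)) (b₀ M z y R : ℕ)
    (hz : 3 ≤ z) (hkz : 2 * k ≤ z) (hy : 2 ≤ y) (hR : y ^ k ≤ R)
    (hgood : ∀ p : ℕ, p.Prime → z < p → ¬ p ∣ M ∧ ¬ (p : ℤ) ∣ (∏ i, a i) *
      ∏ i, ∏ j ∈ Finset.univ.filter (fun j => j ≠ i), (a i * b j - b i * a j))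
    (P : ℕ) [NeZero P] (A : Finset ℕ) (hAP : A ⊆ Finset.range (P + 1))
    (hinj : Set.InjOn (fun n : ℕ => (n : ZMod P)) A)
    (hsift : ∀ n ∈ A, ∀ p : ℕ, p.Prime → z < p → p ≤ R → ¬ (p : ℤ) ∣ F ((b₀ : ℤ) + n * M))
    (ε α J₀ m : ℝ) (hε : 0 < ε) (hε1 : ε ≤ 1) (hεz : 2 * k / z ≤ ε ^ 2)
    (hRP : 2 * (R:ℝ) ^ 8 ≤ (P + 1) * ε ^ 2)
    (hJ₀ : J₀ = (Real.log y / (2 * Real.exp 6 * Real.log z)) ^ k)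
    (hα : 0 < α) (hm : 2 < m) (h1 : 16 * ε * J₀ ≤ α ^ 2) (h2 : α ^ (m - 2) * J₀ ≤ 1) :
    ∑ t : ZMod P, ‖GG P A t‖ ^ m ≤ (6 * 2 ^ (m - 2) + 2) * (((P:ℝ) + 1) / J₀) ^ m := by
  set S := (Finset.Ioc z R).filter Nat.Prime with hS
  have hz0 : (0:ℝ) < z := by have : 0 < z := by omega
                             exact_mod_cast this
  have hlz : 0 < Real.log z := Real.log_pos (by have : 1 < z := by omega
                                                exact_mod_cast this)
  have hly : 0 < Real.log y := Real.log_pos (by have : 1 < y := by omega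
                                                exact_mod_cast this)
  have hJ₀pos : 0 < J₀ := by rw [hJ₀]; positivity
  have hSm : ∀ p ∈ S, p.Prime ∧ z < p ∧ p ≤ R := by
    intro p hp
    rw [hS, Finset.mem_filter, Finset.mem_Ioc] at hp
    exact ⟨hp.2, hp.1.1, hp.1.2⟩
  have D := psi_sieve k hk a b F hF S b₀ M (fun p hp => by
    obtain ⟨h1, h2, h3⟩ := hSm p hp
    exact ⟨h1, by omega, (hgood p h1 h2).1, (hgood p h1 h2).2⟩)
  set h : ℕ → ℝ := fun p => (k:ℝ) / (p - k) with hh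
  set U := S.powerset.filter (fun T => ∏ p ∈ T, p ≤ R) with hU
  set J := ∑ T ∈ U, ∏ p ∈ T, h p with hJ
  have hJlow : J₀ ≤ J := by
    have := Jsum_lower k z y R hz (by omega) (by omega) hk hR
    rw [← hJ₀] at this
    refine this.trans (le_of_eq ?_)
    rw [hJ, hU, Finset.sum_filter]
    rfl
  have hRone : 1 ≤ R := le_trans (Nat.one_le_pow _ _ (by omega)) hR
  set Λ : ℕ → ℝ := fun n => (∑ T ∈ U, ∏ p ∈ T, psiF k F b₀ M p n) / J with hΛ
  obtain ⟨hJ1, hL2, hfar⟩ := sieve_main D R hRone ε hε hε1 (fun p hp => by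
    obtain ⟨h1, h2, h3⟩ := hSm p hp
    refine le_trans ?_ hεz
    have e1 : (z:ℝ) ≤ p := by exact_mod_cast h2.le
    have e2 : (2 * (k:ℝ)) ≤ z := by exact_mod_cast hkz
    have e3 : (1:ℝ) ≤ k := by exact_mod_cast hk
    have e4 : 0 < (p:ℝ) - k := by linarith
    simp only [hh]
    rw [div_le_div_iff₀ e4 hz0]
    nlinarith) (P + 1) (by push_cast; exact hRP) J rfl Λ (fun n => rfl)
  have hJpos : 0 < J := by linarith
  have hP0 : (0:ℝ) ≤ P := by positivity
  have hPε : 1 ≤ ((P:ℝ) + 1) * ε := by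
    have e1 : (1:ℝ) ≤ (R:ℝ) ^ 8 := one_le_pow₀ (by exact_mod_cast hRone)
    have e2 : ((P:ℝ) + 1) * ε ^ 2 ≤ (P + 1) * ε := by
      gcongr; nlinarith
    linarith
  apply GG_moment P A (P + 1) hAP hinj (fun n => Λ n ^ 2) (fun n => by positivity) ?_ (((P:ℝ) + 1) / J₀)
    ((1 + 7 * (P + 1) * ε) / J₀) (by positivity) (by positivity) ?_ ?_ m hm α hα ?_ ?_
  · intro n hn
    have : Λ n = 1 := by
      simp only [hΛ]
      rw [div_eq_one_iff_eq hJpos.ne', hJ]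
      apply Finset.sum_congr rfl; intro T hT
      apply Finset.prod_congr rfl; intro p hp
      have hpS : p ∈ S := Finset.mem_powerset.1 (Finset.mem_filter.1 hT).1 hp
      obtain ⟨h1, h2, h3⟩ := hSm p hpS
      rw [psiF, if_neg (hsift n hn p h1 h2 h3)]
    simp [this]
  · refine hL2.trans ?_
    rw [← mul_div_assoc]
    push_cast
    gcongr
  · intro t ht
    have e0 : ∀ n : ℕ, (ZMod.stdAddChar (t * (n : ZMod P)) : ℂ) = ee (n * ((t.val : ℝ) / P)) := fun n => std_ee P t n
    have e1 := hfar ((t.val : ℝ) / P)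
    simp_rw [← e0] at e1
    refine e1.trans ?_
    have e2 : ∑ n ∈ Finset.range (P + 1), (ZMod.stdAddChar (t * (n : ZMod P)) : ℂ) = 1 := by
      rw [Finset.sum_range_succ, zmod_sum_range' P (fun x => (ZMod.stdAddChar (t * x) : ℂ))]
      have : ∑ x : ZMod P, (ZMod.stdAddChar (t * x) : ℂ) = 0 := by
        have := AddChar.sum_mulShift t (ZMod.isPrimitive_stdAddChar P)
        rw [if_neg ht] at this
        simp_rw [mul_comm t]
        simpa using this
      rw [this]; simp
    rw [e2, norm_one, ← add_div]
    push_cast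
    gcongr
  · have hJJ : 0 < J₀ ^ 2 := by positivity
    have e1 : (1 + 7 * ((P:ℝ) + 1) * ε) * (2 * P) * J₀ ≤ α ^ 2 * (P + 1) ^ 2 := by
      calc (1 + 7 * ((P:ℝ) + 1) * ε) * (2 * P) * J₀ ≤ (8 * (P + 1) * ε) * (2 * (P + 1)) * J₀ := by
            gcongr
            · linarith
            · linarith
        _ = (16 * ε * J₀) * (P + 1) ^ 2 := by ring
        _ ≤ _ := by gcongr
    rw [div_pow, div_mul_eq_mul_div, ← mul_div_assoc, div_le_div_iff₀ hJ₀pos hJJ]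
    calc _ = ((1 + 7 * ((P:ℝ) + 1) * ε) * (2 * P) * J₀) * J₀ := by ring
      _ ≤ _ := by gcongr
  · rw [le_div_iff₀ hJ₀pos]
    calc _ = (α ^ (m - 2) * J₀) * P := by ring
      _ ≤ 1 * P := by gcongr
      _ ≤ _ := by linarith


lemma params_L (k : ℕ) (hk : 1 ≤ k) (m : ℝ) (hm : 2 < m) (Δ : ℝ) :
    ∃ c₁ : ℝ, 0 < c₁ ∧ ∀ᶠ L : ℝ in Filter.atTop, 1 < L ∧ 0 < Real.log L ∧
      ∃ (z y : ℕ) (ε α J₀ : ℝ), 3 ≤ z ∧ 2 * k ≤ z ∧ L ≤ z ∧ Δ < z ∧ 2 ≤ y ∧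
        ((y ^ k : ℕ) : ℝ) ≤ Real.exp (L * (1 / (4 * k + 1))) ∧ 0 < ε ∧ ε ≤ 1 ∧ 2 * k / z ≤ ε ^ 2 ∧
        2 * ((y ^ k : ℕ) : ℝ) ^ 8 ≤ Real.exp (L / 2) * ε ^ 2 ∧
        J₀ = (Real.log y / (2 * Real.exp 6 * Real.log z)) ^ k ∧ 0 < α ∧
        16 * ε * J₀ ≤ α ^ 2 ∧ α ^ (m - 2) * J₀ ≤ 1 ∧ c₁ * (L / Real.log L) ^ k ≤ J₀ := by
  have hk1 : (1:ℝ) ≤ k := by exact_mod_cast hk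
  set B : ℝ := k / (m - 2) with hB
  have hm2 : 0 < m - 2 := by linarith
  have hB0 : 0 < B := by positivity
  set e : ℝ := k + 2 * B + 1 with he
  have he1 : 1 ≤ e := by rw [he]; linarith
  set E : ℝ := 2 * e + 1 with hE
  have hE1 : 1 ≤ E := by rw [hE]; linarith
  refine ⟨(1 / (200 * k ^ 2 * Real.exp 6 * (E + 1))) ^ k, by positivity, ?_⟩
  have hev : ∀ᶠ L : ℝ in Filter.atTop, 2 * L ^ E ≤ Real.exp (0.3 * L) := by
    have h := isLittleO_rpow_exp_pos_mul_atTop E (b := 0.3) (by norm_num)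
    have h2 := h.bound (c := 1/2) (by norm_num)
    filter_upwards [h2, Filter.eventually_ge_atTop 0] with L hL hL0
    rw [Real.norm_eq_abs, Real.norm_eq_abs, abs_of_nonneg (by positivity), abs_of_pos (Real.exp_pos _)] at hL
    linarith
  filter_upwards [hev, Filter.eventually_ge_atTop 16, Filter.eventually_ge_atTop (2 * (k:ℝ)),
    Filter.eventually_ge_atTop (100 * (k:ℝ) ^ 2), Filter.eventually_gt_atTop Δ] with L hL1 hL16 hL2k hL100 hLΔ
  have hL0 : 0 < L := by linarith
  have hlogL : 1 < Real.log L := by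
    rw [Real.lt_log_iff_exp_lt hL0]
    have := Real.exp_one_lt_d9; linarith
  refine ⟨by linarith, by linarith, ?_⟩
  set z := ⌈L ^ E⌉₊ with hz
  set y := ⌊Real.exp (L / (50 * k ^ 2))⌋₊ with hy
  have hLE : L ≤ L ^ E := by
    calc L = L ^ (1:ℝ) := (Real.rpow_one L).symm
      _ ≤ L ^ E := Real.rpow_le_rpow_of_exponent_le (by linarith) hE1
  have hzE : L ^ E ≤ z := Nat.le_ceil _
  have hzL : L ≤ z := hLE.trans hzE
  have hz0 : (0:ℝ) < z := by linarith
  have hzup : (z:ℝ) ≤ L ^ (E + 1) := by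
    have h1 : (z:ℝ) < L ^ E + 1 := Nat.ceil_lt_add_one (by positivity)
    rw [Real.rpow_add hL0, Real.rpow_one]
    nlinarith
  have hlogz1 : 1 ≤ Real.log z := by
    have := Real.log_le_log hL0 hzL
    linarith
  have hlogz : Real.log z ≤ (E + 1) * Real.log L := by
    have := Real.log_le_log hz0 hzup
    rwa [Real.log_rpow hL0] at this
  have hyup : (y:ℝ) ≤ Real.exp (L / (50 * k ^ 2)) := Nat.floor_le (Real.exp_pos _).le
  have hhalf : 1 ≤ L / (100 * k ^ 2) := by
    rw [le_div_iff₀ (by positivity)]; linarith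
  have hexp2 : 2 ≤ Real.exp (L / (100 * k ^ 2)) := by
    have := Real.add_one_le_exp (L / (100 * k ^ 2)); linarith
  have hylow : Real.exp (L / (100 * k ^ 2)) ≤ y := by
    have h1 : Real.exp (L / (50 * k ^ 2)) < y + 1 := Nat.lt_floor_add_one _
    have h2 : Real.exp (L / (50 * k ^ 2)) = Real.exp (L / (100 * k ^ 2)) * Real.exp (L / (100 * k ^ 2)) := by
      rw [← Real.exp_add]; congr 1; field_simp; norm_num
    nlinarith
  have hy2 : (2:ℝ) ≤ y := hexp2.trans hylow
  have hy0 : (0:ℝ) < y := by linarith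
  have hlogy : L / (100 * k ^ 2) ≤ Real.log y := by
    rw [Real.le_log_iff_exp_le hy0]; exact hylow
  have hlogyup : Real.log y ≤ L := by
    have h1 := Real.log_le_log hy0 hyup
    rw [Real.log_exp] at h1
    refine h1.trans ?_
    apply div_le_self hL0.le
    nlinarith
  have hyk : ((y ^ k : ℕ) : ℝ) ≤ Real.exp (L / 50 / k) := by
    push_cast
    calc (y:ℝ) ^ k ≤ (Real.exp (L / (50 * k ^ 2))) ^ k := by gcongr
      _ = _ := by rw [← Real.exp_nat_mul]; congr 1; field_simp
  set J₀ := (Real.log y / (2 * Real.exp 6 * Real.log z)) ^ k with hJ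
  have hJ0 : 0 ≤ J₀ := by positivity
  have hJup : J₀ ≤ L ^ (k:ℝ) := by
    rw [Real.rpow_natCast, hJ]
    gcongr
    refine (div_le_self (by positivity) ?_).trans hlogyup
    have : 1 ≤ Real.exp 6 := Real.one_le_exp (by norm_num)
    nlinarith
  have hεe : (L ^ (-e)) ^ 2 = L ^ (-(2 * e)) := by
    rw [← Real.rpow_natCast, ← Real.rpow_mul hL0.le]; congr 1; push_cast; ring
  refine ⟨z, y, L ^ (-e), L ^ (-B), J₀, ?_, ?_, hzL, by linarith, ?_, ?_, by positivity, ?_, ?_, ?_, rfl, by positivity, ?_, ?_, ?_⟩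
  · have : (3:ℝ) ≤ z := by linarith
    exact_mod_cast this
  · have : 2 * (k:ℝ) ≤ z := by linarith
    exact_mod_cast this
  · exact_mod_cast hy2
  · refine hyk.trans (Real.exp_le_exp.2 ?_)
    rw [div_div, div_eq_mul_one_div]
    gcongr
    linarith
  · apply Real.rpow_le_one_of_one_le_of_nonpos (by linarith) (by linarith)
  · rw [hεe, div_le_iff₀ hz0]
    calc 2 * (k:ℝ) ≤ L := hL2k
      _ = L ^ (-(2 * e)) * L ^ E := by
        rw [← Real.rpow_add hL0, hE]; ring_nf; rw [Real.rpow_one]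
      _ ≤ _ := by gcongr
  · rw [hεe]
    have h1 : ((y ^ k : ℕ) : ℝ) ^ 8 ≤ Real.exp (0.16 * L) := by
      calc ((y ^ k : ℕ) : ℝ) ^ 8 ≤ (Real.exp (L / 50 / k)) ^ 8 := by gcongr
        _ = Real.exp (8 * (L / 50 / k)) := by rw [← Real.exp_nat_mul]; norm_num
        _ ≤ _ := by
          apply Real.exp_le_exp.2
          have : L / 50 / k ≤ L / 50 := div_le_self (by positivity) hk1
          linarith
    have h2 : L ^ (-(2*e)) = (L ^ (2*e))⁻¹ := Real.rpow_neg hL0.le _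
    have h3 : L ^ (2 * e) ≤ L ^ E := Real.rpow_le_rpow_of_exponent_le (by linarith) (by linarith)
    rw [h2, ← div_eq_mul_inv, le_div_iff₀ (by positivity)]
    calc 2 * ((y ^ k : ℕ) : ℝ) ^ 8 * L ^ (2 * e) ≤ 2 * Real.exp (0.16 * L) * L ^ E := by gcongr
      _ = Real.exp (0.16 * L) * (2 * L ^ E) := by ring
      _ ≤ Real.exp (0.16 * L) * Real.exp (0.3 * L) := by gcongr
      _ = Real.exp (0.46 * L) := by rw [← Real.exp_add]; congr 1; ring
      _ ≤ _ := Real.exp_le_exp.2 (by linarith)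
  · calc 16 * L ^ (-e) * J₀ ≤ L * L ^ (-e) * L ^ (k:ℝ) := by gcongr
      _ = L ^ (1 + -e + k) := by rw [Real.rpow_add hL0, Real.rpow_add hL0, Real.rpow_one]
      _ = (L ^ (-B)) ^ 2 := by
        rw [← Real.rpow_natCast, ← Real.rpow_mul hL0.le]; congr 1; rw [he]; push_cast; ring
  · rw [← Real.rpow_mul hL0.le]
    have : -B * (m - 2) = -(k:ℝ) := by rw [hB]; field_simp
    rw [this]
    calc L ^ (-(k:ℝ)) * J₀ ≤ L ^ (-(k:ℝ)) * L ^ (k:ℝ) := by gcongr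
      _ = 1 := by rw [← Real.rpow_add hL0]; simp
  · rw [← mul_pow, hJ]
    apply pow_le_pow_left₀ (by positivity)
    calc 1 / (200 * (k:ℝ) ^ 2 * Real.exp 6 * (E + 1)) * (L / Real.log L) =
        (L / (100 * k ^ 2)) / (2 * Real.exp 6 * ((E + 1) * Real.log L)) := by
          field_simp; norm_num
      _ ≤ _ := by gcongr

lemma amgm_red (P : ℕ) [NeZero P] (s : ℕ) (m : Fin s → ℝ) (hm : ∀ i, 0 < m i) (hmsum : 2 < ∑ i, m i)
    (u : Fin s → ZMod P) (hu : ∀ i, IsUnit (u i)) (g : ZMod P → ℝ) (hg : ∀ t, 0 ≤ g t) :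
    ∑ t : ZMod P, ∏ i, (g (u i * t)) ^ (m i) ≤ ∑ t : ZMod P, g t ^ (∑ i, m i) := by
  set μ := ∑ i, m i with hμ
  have hμ0 : 0 < μ := by linarith
  have h1 : ∀ t : ZMod P, ∏ i, (g (u i * t)) ^ (m i) ≤ ∑ i, (m i / μ) * g (u i * t) ^ μ := by
    intro t
    have := Real.geom_mean_le_arith_mean_weighted Finset.univ (fun i => m i / μ) (fun i => g (u i * t) ^ μ)
      (fun i _ => (div_pos (hm i) hμ0).le) (by rw [← Finset.sum_div, ← hμ, div_self hμ0.ne'])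
      (fun i _ => Real.rpow_nonneg (hg _) _)
    refine le_trans (le_of_eq ?_) this
    apply Finset.prod_congr rfl; intro i _
    rw [← Real.rpow_mul (hg _)]
    congr 1; field_simp
  refine (Finset.sum_le_sum (fun t _ => h1 t)).trans ?_
  rw [Finset.sum_comm]
  have h2 : ∀ i, ∑ t : ZMod P, (m i / μ) * g (u i * t) ^ μ = (m i / μ) * ∑ t : ZMod P, g t ^ μ := by
    intro i
    rw [← Finset.mul_sum]
    congr 1
    obtain ⟨v, hv⟩ := hu i
    rw [← hv]
    exact Fintype.sum_equiv (Units.mulLeft v) _ _ (fun t => by simp)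
  simp_rw [h2]
  rw [← Finset.sum_mul, ← Finset.sum_div, ← hμ, div_self hμ0.ne', one_mul]

lemma final_ratio (μ δ c₁ c₀ cs X J₀ p n L K Sg : ℝ) (k : ℕ) (hδ : 0 < δ) (hc₁ : 0 < c₁) (hc₀ : 0 < c₀)
    (hcs : 1 ≤ cs) (hX : 1 ≤ X) (hL : 0 < L) (hlogL : 0 < Real.log L) (hp0 : 0 ≤ p) (hp : p ≤ 2 * cs * X)
    (hn : 0 < n) (hJ0 : 0 < J₀) (hJ : c₁ * (L / Real.log L) ^ k ≤ J₀)
    (hcard : c₀ * δ * (Real.log L) ^ k / L ^ k * X ≤ n) (hμ : 2 < μ) (hK : 0 ≤ K)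
    (hS : Sg ≤ K * ((p + 1) / J₀) ^ μ) :
    Sg / n ^ μ ≤ K * (3 * cs / (c₁ * c₀)) ^ μ * δ ^ (-μ) := by
  have hcs0 : 0 < cs := by linarith
  have hX0 : 0 < X := by linarith
  have hratio : ((p + 1) / J₀) / n ≤ (3 * cs / (c₁ * c₀)) * δ⁻¹ := by
    have h3 : p + 1 ≤ 3 * cs * X := by
      have : 1 ≤ cs * X := one_le_mul_of_one_le_of_one_le hcs hX
      linarith
    have h4 : c₁ * c₀ * δ * X ≤ J₀ * n := by
      calc c₁ * c₀ * δ * X = (c₁ * (L / Real.log L) ^ k) * (c₀ * δ * (Real.log L) ^ k / L ^ k * X) := by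
            rw [div_pow]; field_simp
        _ ≤ _ := by gcongr
    rw [div_div, div_le_iff₀ (by positivity)]
    calc p + 1 ≤ 3 * cs * X := h3
      _ = (3 * cs / (c₁ * c₀)) * δ⁻¹ * (c₁ * c₀ * δ * X) := by field_simp
      _ ≤ _ := by gcongr
  calc _ ≤ K * ((p + 1) / J₀) ^ μ / n ^ μ := by gcongr
    _ = K * (((p + 1) / J₀) / n) ^ μ := by
      rw [Real.div_rpow (by positivity) hn.le, mul_div_assoc]
    _ ≤ K * ((3 * cs / (c₁ * c₀)) * δ⁻¹) ^ μ := by gcongr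
    _ = _ := by
      rw [Real.mul_rpow (by positivity) (by positivity), Real.inv_rpow hδ.le, Real.rpow_neg hδ.le]
      ring

lemma FTP_eq (P : ℕ) [Fact P.Prime] (A : Finset ℕ)
    (hinj : Set.InjOn (fun n : ℕ => (n : ZMod P)) A) (t : ZMod P) :
    FTP (fCfun (A.image (fun n : ℕ => (n : ZMod P)))) t = GG P A t / A.card := by
  have hP : (P : ℂ) ≠ 0 := by exact_mod_cast (Fact.out : P.Prime).ne_zero
  have hcard : (A.image (fun n : ℕ => (n : ZMod P))).card = A.card := Finset.card_image_of_injOn hinj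
  have hexp : ∀ y : ZMod P, Complex.exp (2 * Real.pi * Complex.I * (t.val : ℂ) * (y.val : ℂ) / (P : ℂ)) =
      ZMod.stdAddChar (t * y) := by
    intro y
    have := std_ee P t y.val
    rw [ZMod.natCast_zmod_val] at this
    rw [this, ee]
    congr 1; push_cast; ring
  rw [FTP]
  simp_rw [hexp, fCfun, hcard]
  have h1 : ∀ y : ZMod P, (((P : ℝ) / (A.card : ℝ) * (if y ∈ A.image (fun n : ℕ => (n : ZMod P)) then 1 else 0) : ℝ) : ℂ) *
      ZMod.stdAddChar (t * y) = ((P : ℂ) / A.card) *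
        (if y ∈ A.image (fun n : ℕ => (n : ZMod P)) then (ZMod.stdAddChar (t * y) : ℂ) else 0) := by
    intro y
    split_ifs <;> simp
  simp_rw [h1]
  rw [← Finset.mul_sum, Finset.sum_ite_mem, Finset.univ_inter, Finset.sum_image hinj, GG]
  field_simp

lemma primor_dvd {p : ℕ} (hp : p.Prime) (x : ℝ) (h : p ∣ primor x) : p ≤ ⌊x⌋₊ := by
  rw [primor, hp.prime.dvd_finsetProd_iff] at h
  obtain ⟨q, hq, hd⟩ := h
  rw [Finset.mem_filter, Finset.mem_range] at hq
  rw [Nat.prime_dvd_prime_iff_eq hp hq.2] at hd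
  omega

lemma dvd_primor {p : ℕ} (hp : p.Prime) (x : ℝ) (h : p ≤ ⌊x⌋₊) : p ∣ primor x := by
  apply Finset.dvd_prod_of_mem (fun p => p)
  rw [Finset.mem_filter, Finset.mem_range]
  exact ⟨by omega, hp⟩

lemma primor_pos (x : ℝ) : 0 < primor x :=
  Finset.prod_pos (fun _ hp => (Finset.mem_filter.1 hp).2.pos)

lemma primor_le (L : ℝ) (hL : 0 ≤ L) : (primor (L / 3) : ℝ) ≤ Real.exp (L / 2) := by
  have h1 : primor (L / 3) ≤ 4 ^ ⌊L / 3⌋₊ := primorial_le_four_pow _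
  have h2 : Real.log 4 ≤ 3 / 2 := by
    have : (4:ℝ) = 2 ^ 2 := by norm_num
    rw [this, Real.log_pow]
    have := Real.log_two_lt_d9
    push_cast; linarith
  have hlog : 0 ≤ Real.log 4 := Real.log_nonneg (by norm_num)
  calc (primor (L / 3) : ℝ) ≤ ((4 ^ ⌊L / 3⌋₊ : ℕ) : ℝ) := by exact_mod_cast h1
    _ = Real.exp (⌊L / 3⌋₊ * Real.log 4) := by
      rw [Real.exp_nat_mul, Real.exp_log (by norm_num)]; push_cast; rfl
    _ ≤ _ := by
      apply Real.exp_le_exp.2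
      have h3 : (⌊L / 3⌋₊ : ℝ) ≤ L / 3 := Nat.floor_le (by positivity)
      calc (⌊L / 3⌋₊ : ℝ) * Real.log 4 ≤ (L / 3) * (3 / 2) := by gcongr
        _ = _ := by ring

set_option maxHeartbeats 1000000 in
theorem stmt6
    (k : ℕ) (hk : 1 ≤ k) (a b : Fin k → ℤ) (ha : ∀ i, a i ≠ 0)
    (F : ℤ → ℤ) (hF : ∀ n : ℤ, F n = ∏ i, (a i * n + b i))
    (hdisc : (∏ i, a i) *
      ∏ i, ∏ j ∈ Finset.univ.filter (fun j => j ≠ i), (a i * b j - b i * a j) ≠ 0)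
    (hadm : ∀ p : ℕ, p.Prime → ∃ n : ℤ, ¬ ((p : ℤ) ∣ F n))
    (s : ℕ) (cc : Fin s → ℤ) (hcc : ∀ i, cc i ≠ 0) (hti : ∑ i, cc i = 0)
    (c₀ : ℝ) (hc₀ : 0 < c₀)
    (m : Fin s → ℝ) (hm : ∀ i, 0 < m i) (hmsum : 2 < ∑ i, m i) :
    ∃ (C : ℝ) (N₁ : ℕ), 0 < C ∧
      ∀ N : ℕ, N₁ ≤ N →
      ∀ A : Finset ℕ, A ⊆ SFset F N ((N : ℝ) ^ ((1 : ℝ) / (4 * k + 1))) →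
      ∀ δ : ℝ, 0 < δ →
        (A.card : ℝ) = δ * ((SFset F N ((N : ℝ) ^ ((1 : ℝ) / (4 * k + 1)))).card : ℝ) →
      ∀ b₀ : ℕ, b₀ < primor (Real.log N / 3) →
        Int.gcd (F b₀) (primor (Real.log N / 3)) = 1 →
        c₀ * δ * (Real.log (Real.log N)) ^ k / (Real.log N) ^ k *
            (N : ℝ) / (primor (Real.log N / 3) : ℝ)
          ≤ ((Abset A N (primor (Real.log N / 3)) b₀).card : ℝ) →
      ∀ (P : ℕ) [Fact P.Prime],
        ((∑ i ∈ Finset.univ.filter (fun i => 0 < cc i), cc i : ℤ) : ℝ) *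
            (N : ℝ) / (primor (Real.log N / 3) : ℝ) ≤ (P : ℝ) →
        (P : ℝ) ≤ 2 * ((∑ i ∈ Finset.univ.filter (fun i => 0 < cc i), cc i : ℤ) : ℝ) *
            (N : ℝ) / (primor (Real.log N / 3) : ℝ) →
        ∀ u : Fin s → ZMod P, (∀ i, IsUnit (u i)) →
          ∑ t : ZMod P, ∏ i,
              (norm (FTP (fCfun ((Abset A N (primor (Real.log N / 3)) b₀).image
                (fun n : ℕ => (n : ZMod P)))) (u i * t))) ^ (m i)
            ≤ C * δ ^ (-(∑ i, m i)) := by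
  classical
  set μ := ∑ i, m i with hμ
  set Δ : ℤ := (∏ i, a i) *
      ∏ i, ∏ j ∈ Finset.univ.filter (fun j => j ≠ i), (a i * b j - b i * a j) with hΔ
  set cs : ℤ := ∑ i ∈ Finset.univ.filter (fun i => 0 < cc i), cc i with hcs
  have hcs1 : 1 ≤ cs := by
    have hex : ∃ i, 0 < cc i := by
      by_contra hno
      push Not at hno
      have hs : s ≠ 0 := by
        rintro rfl
        simp [hμ] at hmsum
        linarith
      have i₀ : Fin s := ⟨0, Nat.pos_of_ne_zero hs⟩
      have := (Finset.sum_eq_zero_iff_of_nonpos (fun i _ => hno i)).1 hti i₀ (Finset.mem_univ _)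
      exact hcc i₀ this
    obtain ⟨i, hi⟩ := hex
    have h1 : cc i ≤ cs := Finset.single_le_sum (f := cc)
      (fun j hj => (Finset.mem_filter.1 hj).2.le) (Finset.mem_filter.2 ⟨Finset.mem_univ i, hi⟩)
    omega
  have hcsR : (1:ℝ) ≤ (cs : ℝ) := by exact_mod_cast hcs1
  obtain ⟨c₁, hc₁, hev⟩ := params_L k hk μ hmsum (|Δ| : ℤ)
  have hev2 := (Real.tendsto_log_atTop.comp (tendsto_natCast_atTop_atTop (R := ℝ))).eventually hev
  obtain ⟨N₁, hN₁⟩ := Filter.eventually_atTop.1 hev2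
  refine ⟨(6 * 2 ^ (μ - 2) + 2) * (3 * cs / (c₁ * c₀)) ^ μ, N₁, by positivity, ?_⟩
  intro N hN A hA δ hδ _ b₀ _ _ hcard P hPf hP1 hP2 u hu
  obtain ⟨hL1, hlogL, z, y, ε, α, J₀, hz3, hz2k, hzL, hzΔ, hy2, hyk, hε, hε1, hεz, hRP, hJ, hα, h1, h2, hJlow⟩ := hN₁ N hN
  simp only [Function.comp] at hL1 hlogL hzL hyk hRP hJlow
  set L := Real.log N with hL
  have hL0 : 0 < L := by linarith
  have hNpos : 0 < (N:ℝ) := by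
    rcases Nat.eq_zero_or_pos N with h | h
    · exfalso; rw [h] at hL; simp at hL; linarith
    · exact_mod_cast h
  have hNexp : (N:ℝ) = Real.exp L := (Real.exp_log hNpos).symm
  set M := primor (L / 3) with hM
  have hMpos : (0:ℝ) < M := by exact_mod_cast primor_pos _
  have hMle : (M:ℝ) ≤ Real.exp (L / 2) := primor_le L hL0.le
  set X : ℝ := N / M with hX
  have hXlow : Real.exp (L / 2) ≤ X := by
    rw [hX, le_div_iff₀ hMpos, hNexp]
    calc Real.exp (L / 2) * M ≤ Real.exp (L / 2) * Real.exp (L / 2) := by gcongr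
      _ = Real.exp L := by rw [← Real.exp_add]; congr 1; ring
  have hX1 : 1 ≤ X := (Real.one_le_exp (by positivity)).trans hXlow
  rw [mul_div_assoc, ← hX] at hP1 hP2 hcard
  have hXP : X ≤ P := le_trans (le_mul_of_one_le_left (by linarith) hcsR) hP1
  set A' := Abset A N M b₀ with hA'
  have hmem : ∀ n ∈ A', 1 ≤ b₀ + n * M ∧ b₀ + n * M ≤ N ∧
      Int.gcd (F ((b₀ : ℤ) + n * M)) (primor ((N : ℝ) ^ ((1 : ℝ) / (4 * k + 1)))) = 1 := by
    intro n hn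
    have h := hA (Finset.mem_filter.1 hn).2
    rw [SFset, Finset.mem_filter, Finset.mem_Icc] at h
    refine ⟨h.1.1, h.1.2, ?_⟩
    have := h.2
    push_cast at this
    exact this
  have hNPM : N ≤ P * M := by
    have : (N:ℝ) ≤ P * M := by
      rw [hX, div_le_iff₀ hMpos] at hXP; exact hXP
    exact_mod_cast this
  have hM0 : 0 < M := primor_pos _
  have hnP : ∀ n ∈ A', n ≤ P := by
    intro n hn
    have := (hmem n hn).2.1
    by_contra hlt
    push Not at hlt
    have : (P + 1) * M ≤ n * M := Nat.mul_le_mul_right _ hlt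
    rw [Nat.add_mul, Nat.one_mul] at this
    omega
  have hAP : A' ⊆ Finset.range (P + 1) := by
    intro n hn
    rw [Finset.mem_range]
    have := hnP n hn
    omega
  have hnP0 : ∀ n ∈ A', n = P → b₀ = 0 := by
    intro n hn h
    have := (hmem n hn).2.1
    rw [h] at this
    omega
  have hinj : Set.InjOn (fun n : ℕ => (n : ZMod P)) A' := by
    have key : ∀ n ∈ A', ∀ n' ∈ A', n < n' → (n : ZMod P) ≠ (n' : ZMod P) := by
      intro n hn n' hn' hlt heq
      rw [ZMod.natCast_eq_natCast_iff, Nat.modEq_iff_dvd' hlt.le] at heq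
      have h3 := Nat.le_of_dvd (by omega) heq
      have h4 := hnP n' hn'
      have h5 : n' = P := by omega
      have h6 : n = 0 := by omega
      have h7 := hnP0 n' hn' h5
      have h8 := (hmem n hn).1
      rw [h6, h7] at h8
      omega
    intro n hn n' hn' heq
    rcases lt_trichotomy n n' with h | h | h
    · exact absurd heq (key n hn n' hn' h)
    · exact h
    · exact absurd heq.symm (key n' hn' n hn h)
  have hmain := sieve_apply k hk a b F hF b₀ M z y (y ^ k) hz3 hz2k hy2 le_rfl
    (by
      intro p hp hzp
      have hzp' : (z:ℝ) < p := by exact_mod_cast hzp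
      constructor
      · intro hd
        have h3 := primor_dvd hp _ hd
        have h4 : (⌊L / 3⌋₊ : ℝ) ≤ L / 3 := Nat.floor_le (by positivity)
        have h5 : (p:ℝ) ≤ ⌊L / 3⌋₊ := by exact_mod_cast h3
        linarith
      · intro hd
        have h3 := Int.le_of_dvd (abs_pos.2 hdisc) ((dvd_abs _ _).2 hd)
        have h4 : ((p : ℤ) : ℝ) ≤ ((|Δ| : ℤ) : ℝ) := by exact_mod_cast h3
        rw [Int.cast_natCast] at h4
        linarith)
    P A' hAP hinj
    (by
      intro n hn p hp _ hpR hd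
      have hg := (hmem n hn).2.2
      have hp2 : p ∣ primor ((N : ℝ) ^ ((1 : ℝ) / (4 * k + 1))) := by
        apply dvd_primor hp
        apply Nat.le_floor
        have h3 : (p:ℝ) ≤ ((y ^ k : ℕ) : ℝ) := by exact_mod_cast hpR
        refine h3.trans (hyk.trans (le_of_eq ?_))
        rw [Real.rpow_def_of_pos hNpos]
      have h4 := Int.dvd_coe_gcd hd (Int.natCast_dvd_natCast.2 hp2)
      rw [hg] at h4
      have h5 : p ∣ 1 := by exact_mod_cast h4
      exact hp.one_lt.ne' (Nat.dvd_one.1 h5))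
    ε α J₀ μ hε hε1 hεz
    (by
      refine hRP.trans ?_
      gcongr
      linarith)
    hJ hα hmsum h1 h2
  have hApos : (0:ℝ) < A'.card := lt_of_lt_of_le (by positivity) hcard
  have hJ₀pos : 0 < J₀ := lt_of_lt_of_le (by positivity) hJlow
  refine (amgm_red P s m hm hmsum u hu (fun t => norm (FTP (fCfun (A'.image (fun n : ℕ => (n : ZMod P)))) t))
    (fun t => norm_nonneg _)).trans ?_
  have h5 : ∀ t : ZMod P, norm (FTP (fCfun (A'.image (fun n : ℕ => (n : ZMod P)))) t) ^ μ =
      ‖GG P A' t‖ ^ μ / (A'.card : ℝ) ^ μ := by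
    intro t
    rw [FTP_eq P A' hinj, norm_div, Complex.norm_natCast, Real.div_rpow (norm_nonneg _) hApos.le]
  rw [← hμ]
  simp_rw [h5]
  rw [← Finset.sum_div]
  exact final_ratio μ δ c₁ c₀ cs X J₀ P A'.card L _ _ k hδ hc₁ hc₀ hcsR hX1 hL0 hlogL
    (Nat.cast_nonneg P) hP2 hApos hJ₀pos hJlow hcard hmsum (by positivity) hmain
end

section
/- Let P be a prime, let f : ℤ/Pℤ → ℝ_{≥0} be a nonnegative function with 𝔼(f) = 1, let l ≥ 2 be an integer and let c, β > 0 be real numbers with ‖f‖_l ≤ c/β. Then |D(f)| ≥ (β/(2c))^{l/(l−1)}·P, where D(f) = {n ∈ ℤ/Pℤ : f(n) > 1/2}. -/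
theorem stmt10 (P : ℕ) [Fact P.Prime] (f : ZMod P → ℝ) (hf : ∀ n, 0 ≤ f n)
    (hE : (1 / (P : ℝ)) * ∑ n : ZMod P, f n = 1)
    (l : ℕ) (hl : 2 ≤ l) (c β : ℝ) (hc : 0 < c) (hβ : 0 < β)
    (hnorm : ((1 / (P : ℝ)) * ∑ n : ZMod P, |f n| ^ l) ^ ((1 : ℝ) / l) ≤ c / β) :
    (β / (2 * c)) ^ ((l : ℝ) / ((l : ℝ) - 1)) * (P : ℝ) ≤
      ((Finset.univ.filter (fun n : ZMod P => (1 : ℝ) / 2 < f n)).card : ℝ) := by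
  have hP : (0 : ℝ) < P := by exact_mod_cast (Fact.out : P.Prime).pos
  have hl' : (2 : ℝ) ≤ l := by exact_mod_cast hl
  have hl1 : (0 : ℝ) < (l : ℝ) - 1 := by linarith
  set D := Finset.univ.filter (fun n : ZMod P => (1 : ℝ) / 2 < f n) with hD
  set q : ℝ := (l : ℝ) / ((l : ℝ) - 1) with hq
  have hq0 : 0 < q := by positivity
  have hpq : Real.HolderConjugate (l : ℝ) q := Real.HolderConjugate.conjExponent (by linarith)
  have hsum : ∑ n : ZMod P, f n = P := by
    field_simp at hE; exact hE
  have h1 : (P : ℝ) / 2 ≤ ∑ n ∈ D, f n := by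
    have hs := Finset.sum_filter_add_sum_filter_not Finset.univ
      (fun n : ZMod P => (1 : ℝ) / 2 < f n) f
    have hle : ∑ n ∈ Finset.univ.filter (fun n : ZMod P => ¬ (1 : ℝ) / 2 < f n), f n
        ≤ (P : ℝ) / 2 := by
      calc _ ≤ ∑ n ∈ Finset.univ.filter (fun n : ZMod P => ¬ (1 : ℝ) / 2 < f n), (1 / 2 : ℝ) :=
            Finset.sum_le_sum fun i hi => not_lt.1 (Finset.mem_filter.1 hi).2
        _ ≤ ∑ n : ZMod P, (1 / 2 : ℝ) :=
            Finset.sum_le_sum_of_subset_of_nonneg (Finset.filter_subset _ _)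
              (fun _ _ _ => by norm_num)
        _ = _ := by simp [ZMod.card]; ring
    rw [← hD] at hs
    linarith
  have h2 := Real.inner_le_Lp_mul_Lq_of_nonneg D (f := f) (g := fun _ => 1) hpq
    (fun i _ => hf i) (fun _ _ => zero_le_one)
  simp only [mul_one, Real.one_rpow, Finset.sum_const, nsmul_eq_mul, Real.rpow_natCast] at h2
  have h3 : (∑ n ∈ D, f n ^ l) ^ (1 / (l : ℝ)) ≤ (P : ℝ) ^ (1 / (l : ℝ)) * (c / β) := by
    calc _ ≤ ((P : ℝ) * ((1 / (P : ℝ)) * ∑ n : ZMod P, |f n| ^ l)) ^ (1 / (l : ℝ)) := by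
          apply Real.rpow_le_rpow (Finset.sum_nonneg fun i _ => pow_nonneg (hf i) _) _ (by positivity)
          rw [← mul_assoc, mul_one_div_cancel hP.ne', one_mul]
          simp only [abs_of_nonneg (hf _)]
          exact Finset.sum_le_sum_of_subset_of_nonneg (Finset.filter_subset _ _)
              (fun i _ _ => pow_nonneg (hf i) _)
      _ = (P : ℝ) ^ (1 / (l : ℝ)) * _ := Real.mul_rpow hP.le (by positivity)
      _ ≤ _ := by gcongr
  have hPP : (P : ℝ) ^ (1 / (l : ℝ)) * (P : ℝ) ^ (1 / q) = (P : ℝ) := by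
    rw [← Real.rpow_add hP, one_div, one_div, hpq.inv_add_inv_eq_one, Real.rpow_one]
  have h4 : β / (2 * c) * (P : ℝ) ^ (1 / q) ≤ (D.card : ℝ) ^ (1 / q) := by
    have hA : 0 < (P : ℝ) ^ (1 / (l : ℝ)) := by positivity
    have h5 : (P : ℝ) ^ (1 / (l : ℝ)) * (P : ℝ) ^ (1 / q) / 2 ≤
        (P : ℝ) ^ (1 / (l : ℝ)) * (c / β) * (D.card : ℝ) ^ (1 / q) := by
      rw [hPP]
      exact h1.trans (h2.trans (by gcongr))
    have h6 : (P : ℝ) ^ (1 / q) / 2 ≤ (c / β) * (D.card : ℝ) ^ (1 / q) := by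
      apply le_of_mul_le_mul_left _ hA
      linarith
    calc _ = (β / c) * ((P : ℝ) ^ (1 / q) / 2) := by field_simp
      _ ≤ (β / c) * ((c / β) * (D.card : ℝ) ^ (1 / q)) := by gcongr
      _ = _ := by field_simp
  have h7 := Real.rpow_le_rpow (by positivity) h4 hq0.le
  rwa [Real.mul_rpow (by positivity) (by positivity), ← Real.rpow_mul hP.le,
    ← Real.rpow_mul (by positivity), one_div_mul_cancel hq0.ne', Real.rpow_one,
    Real.rpow_one] at h7
end

section
/- Assume the intersection hypothesis below holds for a prime P, sets C, S' ⊆ ℤ/Pℤ, a bound t on |S'|, constants c(j) and a real 0 < β ≤ 1, with C nonempty. Let l ≥ 2 be an integer and let B ⊆ ℤ/Pℤ with |B|·d(C) ≥ 1. Then ‖f_C * f_B‖_l ≤ c/β, where c > 0 is a constant depending only on t, l and the constants c(2), …, c(l). -/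
/-- Convolution `(f*g)(n) = P⁻¹ ∑_y f(n−y) g(y)` on `ℤ/Pℤ`. -/
noncomputable def convP {P : ℕ} [Fact P.Prime] (f g : ZMod P → ℝ) : ZMod P → ℝ :=
  fun n => (1 / (P : ℝ)) * ∑ y : ZMod P, f (n - y) * g y

open Classical in
theorem sep_count {P : ℕ} [Fact P.Prime] (S R : Finset (ZMod P)) (t l : ℕ)
    (hs : ∀ x ∈ S, -x ∈ S) (hS : S.card ≤ t) (j : ℕ) (hj : j ≤ l) :
    (R.card - l * t) ^ j ≤ (Finset.univ.filter (fun h : Fin j → ZMod P =>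
      (∀ i u, i ≠ u → h i - h u ∉ S) ∧ ∀ i, h i ∈ R)).card := by
  induction j with
  | zero => simp
  | succ j ih =>
    have ih := ih (by omega)
    set G := (Finset.univ.filter (fun h : Fin j → ZMod P =>
      (∀ i u, i ≠ u → h i - h u ∉ S) ∧ ∀ i, h i ∈ R)) with hG
    let A : (Fin j → ZMod P) → Finset (ZMod P) := fun g =>
      R \ Finset.univ.biUnion (fun i => S.image (fun s => g i + s))
    have hA : ∀ g, R.card - l * t ≤ (A g).card := by
      intro g
      have h1 : (Finset.univ.biUnion (fun i => S.image (fun s => g i + s))).card ≤ j * t := by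
        refine (Finset.card_biUnion_le_card_mul _ _ t ?_).trans (by simp)
        intro i _
        exact Finset.card_image_le.trans hS
      have h2 := Finset.le_card_sdiff (Finset.univ.biUnion (fun i => S.image (fun s => g i + s))) R
      have h3 : j * t ≤ l * t := Nat.mul_le_mul_right _ (by omega)
      have h4 : (A g).card = (R \ Finset.univ.biUnion (fun i => S.image (fun s => g i + s))).card := rfl
      omega
    calc (R.card - l * t) ^ (j+1) = (R.card - l * t) ^ j * (R.card - l * t) := pow_succ _ _
      _ ≤ G.card * (R.card - l * t) := Nat.mul_le_mul_right _ ih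
      _ = ∑ g ∈ G, (R.card - l * t) := by simp
      _ ≤ ∑ g ∈ G, (A g).card := Finset.sum_le_sum (fun g _ => hA g)
      _ = (G.sigma A).card := (Finset.card_sigma _ _).symm
      _ ≤ _ := by
        refine Finset.card_le_card_of_injOn
          (fun p => (Fin.cons p.2 p.1 : Fin (j+1) → ZMod P)) ?_ ?_
        · rintro ⟨g, x⟩ hp
          have hp' := Finset.mem_sigma.1 hp
          obtain ⟨hg, hx⟩ := hp'
          simp only [hG, Finset.mem_filter, Finset.mem_univ, true_and] at hg
          simp only [A, Finset.mem_sdiff, Finset.mem_biUnion, Finset.mem_univ, true_and,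
            Finset.mem_image, not_exists, not_and] at hx
          obtain ⟨hxR, hx⟩ := hx
          have hx1 : ∀ i, x - g i ∉ S := fun i hi => hx i _ hi (by ring)
          have hx2 : ∀ i, g i - x ∉ S := fun i hi => hx1 i (by simpa using hs _ hi)
          simp only [Finset.coe_filter, Finset.mem_univ, true_and, Set.mem_ofPred_eq]
          constructor
          · intro i u
            refine Fin.cases ?_ (fun i => ?_) i <;> refine Fin.cases ?_ (fun u => ?_) u
            · simp
            · intro _; simpa using hx1 u
            · intro _; simpa using hx2 i
            · intro h; simpa using hg.1 i u (fun e => h (by rw [e]))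
          · intro i
            refine Fin.cases ?_ (fun i => ?_) i
            · simpa using hxR
            · simpa using hg.2 i
        · rintro ⟨g, x⟩ _ ⟨g', x'⟩ _ h
          obtain ⟨h1, h2⟩ := Fin.cons_injective2 h
          simp only at h1 h2
          subst h1 h2
          rfl

theorem pow_bound (r l t N : ℕ) (hl : 1 ≤ l) (h : (r - l * t) ^ l ≤ N) :
    r ^ l ≤ 2 ^ l * N + (2 * l * t) ^ (l - 1) * r := by
  by_cases hr : 2 * l * t ≤ r
  · have h1 : r ≤ 2 * (r - l * t) := by
      have : 2 * l * t = 2 * (l * t) := by ring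
      omega
    calc r ^ l ≤ (2 * (r - l * t)) ^ l := Nat.pow_le_pow_left h1 l
      _ = 2 ^ l * (r - l * t) ^ l := mul_pow _ _ _
      _ ≤ 2 ^ l * N := Nat.mul_le_mul_left _ h
      _ ≤ _ := Nat.le_add_right _ _
  · obtain ⟨m, rfl⟩ : ∃ m, l = m + 1 := ⟨l - 1, by omega⟩
    calc r ^ (m+1) = r ^ m * r := pow_succ _ _
      _ ≤ (2 * (m+1) * t) ^ m * r := Nat.mul_le_mul_right _ (Nat.pow_le_pow_left (by omega) _)
      _ ≤ _ := Nat.le_add_left _ _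

open Classical in
theorem main_bound {P : ℕ} [Fact P.Prime] (t l : ℕ) (hl : 2 ≤ l) (c : ℝ) (hc : 0 < c)
    (C S B : Finset (ZMod P)) (hs : ∀ x ∈ S, -x ∈ S) (hS : S.card ≤ t)
    (β : ℝ) (hβ : 0 < β) (hβ1 : β ≤ 1)
    (H : ∀ h : Fin l → ZMod P, (∀ i u, i ≠ u → h i - h u ∉ S) →
          ((Finset.univ.filter (fun n : ZMod P => ∀ i, n - h i ∈ C)).card : ℝ) / (P : ℝ)
            ≤ c * ((C.card : ℝ) / (P : ℝ)) ^ l / β ^ l)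
    (hB : 1 ≤ (B.card : ℝ) * ((C.card : ℝ) / (P : ℝ))) :
    ∑ n : ZMod P, ((B.filter (fun y => n - y ∈ C)).card : ℝ) ^ l ≤
      P * ((2 ^ l * c + (2 * l * t) ^ (l - 1)) / β ^ l *
        ((B.card : ℝ) * ((C.card : ℝ) / (P : ℝ))) ^ l) := by
  have hP : (0 : ℝ) < P := by exact_mod_cast (Fact.out : P.Prime).pos
  set r : ZMod P → ℕ := fun n => (B.filter (fun y => n - y ∈ C)).card with hr
  let N : ZMod P → ℕ := fun n => (Finset.univ.filter (fun h : Fin l → ZMod P =>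
      (∀ i u, i ≠ u → h i - h u ∉ S) ∧ ∀ i, h i ∈ B.filter (fun y => n - y ∈ C))).card
  have h1 : ∀ n, (r n) ^ l ≤ 2 ^ l * N n + (2 * l * t) ^ (l - 1) * r n := fun n =>
    pow_bound _ _ _ _ (by omega) (sep_count S _ t l hs hS l le_rfl)
  have h2 : ∑ n, r n = B.card * C.card := by
    simp only [hr, Finset.card_filter]
    rw [Finset.sum_comm, Finset.card_eq_sum_ones B, Finset.sum_mul]
    refine Finset.sum_congr rfl fun y _ => ?_
    rw [← Finset.card_filter, one_mul]
    have : (Finset.univ.filter fun n => n - y ∈ C) = C.map (Equiv.addRight y).toEmbedding := by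
      ext n
      simp [sub_eq_add_neg]
    rw [this, Finset.card_map]
  have h3 : (∑ n, (N n : ℝ)) ≤ (B.card : ℝ) ^ l * (P * (c * ((C.card : ℝ) / (P : ℝ)) ^ l / β ^ l)) := by
    have e : ∑ n, N n = ∑ h ∈ (Fintype.piFinset (fun _ : Fin l => B)).filter
        (fun h => ∀ i u, i ≠ u → h i - h u ∉ S),
        (Finset.univ.filter (fun n : ZMod P => ∀ i, n - h i ∈ C)).card := by
      simp only [N, Finset.card_filter]
      rw [Finset.sum_comm (s := (Fintype.piFinset (fun _ : Fin l => B)).filter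
        (fun h => ∀ i u, i ≠ u → h i - h u ∉ S))]
      refine Finset.sum_congr rfl fun n _ => ?_
      rw [Finset.sum_filter, ← Finset.sum_subset (Finset.subset_univ (Fintype.piFinset (fun _ : Fin l => B)))]
      · refine Finset.sum_congr rfl fun h hh => ?_
        have hh' := Fintype.mem_piFinset.1 hh
        simp only [Finset.mem_filter, hh', true_and, ite_and]
      · intro h _ hh
        rw [if_neg]
        rintro ⟨_, h2⟩
        exact hh (Fintype.mem_piFinset.2 fun i => (Finset.mem_filter.1 (h2 i)).1)
    rw [← Nat.cast_sum, e, Nat.cast_sum]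
    refine (Finset.sum_le_card_nsmul _ _ (P * (c * ((C.card : ℝ) / (P : ℝ)) ^ l / β ^ l)) ?_).trans ?_
    · intro h hh
      have := H h (Finset.mem_filter.1 hh).2
      rw [div_le_iff₀ hP] at this
      linarith
    · rw [nsmul_eq_mul]
      refine mul_le_mul_of_nonneg_right ?_ (by positivity)
      have : ((Fintype.piFinset (fun _ : Fin l => B)).filter
        (fun h => ∀ i u, i ≠ u → h i - h u ∉ S)).card ≤ B.card ^ l := by
        refine (Finset.card_filter_le _ _).trans ?_
        simp
      exact_mod_cast this
  set D := (B.card : ℝ) * ((C.card : ℝ) / (P : ℝ)) with hD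
  have h4 : (∑ n, (r n : ℝ)) = P * D := by
    rw [← Nat.cast_sum, h2, hD]; push_cast; field_simp
  have h5 : D ≤ D ^ l / β ^ l := by
    have : D ≤ D ^ l := le_self_pow₀ hB (by omega)
    refine this.trans (le_div_self (by positivity) (by positivity) (pow_le_one₀ hβ.le hβ1))
  calc ∑ n : ZMod P, (r n : ℝ) ^ l
      ≤ ∑ n, (2 ^ l * (N n : ℝ) + (2 * l * t) ^ (l - 1) * r n) :=
        Finset.sum_le_sum fun n _ => by exact_mod_cast h1 n
    _ = 2 ^ l * ∑ n, (N n : ℝ) + (2 * l * t) ^ (l - 1) * (P * D) := by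
        rw [Finset.sum_add_distrib, ← Finset.mul_sum, ← Finset.mul_sum, h4]
    _ ≤ 2 ^ l * ((B.card : ℝ) ^ l * (P * (c * ((C.card : ℝ) / (P : ℝ)) ^ l / β ^ l)))
        + (2 * l * t) ^ (l - 1) * (P * (D ^ l / β ^ l)) := by gcongr
    _ = _ := by rw [hD, mul_pow]; ring

theorem stmt11
    (t : ℕ) (l : ℕ) (hl : 2 ≤ l)
    (cj : ℕ → ℝ) (hcj : ∀ j, 2 ≤ j → 0 < cj j) :
    ∃ c : ℝ, 0 < c ∧
      ∀ (P : ℕ) [Fact P.Prime],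
      ∀ (C S' : Finset (ZMod P)),
        (0 : ZMod P) ∈ S' → (∀ x ∈ S', -x ∈ S') → S'.card ≤ t →
        C.Nonempty →
        ∀ β : ℝ, 0 < β → β ≤ 1 →
        (∀ j : ℕ, 2 ≤ j → ∀ h : Fin j → ZMod P,
          (∀ i u, i ≠ u → h i - h u ∉ S') →
          ((Finset.univ.filter (fun n : ZMod P => ∀ i, n - h i ∈ C)).card : ℝ) / (P : ℝ)
            ≤ cj j * ((C.card : ℝ) / (P : ℝ)) ^ j / β ^ j) →
        ∀ B : Finset (ZMod P),
          1 ≤ (B.card : ℝ) * ((C.card : ℝ) / (P : ℝ)) →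
          ((1 / (P : ℝ)) * ∑ n : ZMod P, |convP (fCfun C) (fCfun B) n| ^ l) ^ ((1 : ℝ) / l)
            ≤ c / β := by
  classical
  have hc := hcj l hl
  set K : ℝ := 2 ^ l * cj l + (2 * l * t) ^ (l - 1) with hK
  have hK0 : 0 < K := by positivity
  refine ⟨K ^ ((1 : ℝ) / l), by positivity, ?_⟩
  intro P _ C S' _ hs hS hC β hβ hβ1 H B hB
  have hP : (0 : ℝ) < P := by exact_mod_cast (Fact.out : P.Prime).pos
  have key := main_bound t l hl (cj l) hc C S' B hs hS β hβ hβ1 (H l hl) hB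
  rw [← hK] at key
  set D := (B.card : ℝ) * ((C.card : ℝ) / (P : ℝ)) with hD
  have hD0 : 0 < D := by linarith
  have hC0 : (0 : ℝ) < C.card := by exact_mod_cast hC.card_pos
  have hB0 : (0 : ℝ) < B.card := by
    rcases Nat.eq_zero_or_pos B.card with h | h
    · rw [hD, h] at hD0; simp at hD0
    · exact_mod_cast h
  have hconv : ∀ n, convP (fCfun C) (fCfun B) n =
      ((B.filter (fun y => n - y ∈ C)).card : ℝ) / D := by
    intro n
    have : ∀ y, fCfun C (n - y) * fCfun B y =
        ((P : ℝ) / C.card * (P / B.card)) * (if y ∈ B then (if n - y ∈ C then 1 else 0) else 0) := by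
      intro y
      simp only [fCfun]
      split_ifs <;> ring
    simp only [convP, this]
    rw [← Finset.mul_sum, ← Finset.sum_filter, Finset.card_filter]
    push_cast
    simp only [Finset.filter_univ_mem]
    rw [hD]
    field_simp
  have hl0 : (l : ℝ) ≠ 0 := by positivity
  have hle : (1 / (P : ℝ)) * ∑ n : ZMod P, |convP (fCfun C) (fCfun B) n| ^ l ≤ K / β ^ l := by
    have : ∀ n, |convP (fCfun C) (fCfun B) n| ^ l =
        ((B.filter (fun y => n - y ∈ C)).card : ℝ) ^ l / D ^ l := by
      intro n
      rw [hconv, abs_of_nonneg (by positivity), div_pow]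
    simp only [this]
    rw [← Finset.sum_div, one_div, inv_mul_le_iff₀ hP, div_le_iff₀ (by positivity)]
    calc _ ≤ _ := key
      _ = _ := by ring
  calc _ ≤ (K / β ^ l) ^ ((1 : ℝ) / l) := by
        refine Real.rpow_le_rpow (by positivity) hle (by positivity)
    _ = _ := by
        rw [Real.div_rpow hK0.le (by positivity), one_div, Real.pow_rpow_inv_natCast hβ.le (by omega)]
end

section
/- Assume the intersection hypothesis below holds for a prime P, sets C, S' ⊆ ℤ/Pℤ, constants c(j) and a real 0 < β ≤ 1, and set c(1) = 1. Let l ≥ 2 be an integer and let y_1, …, y_l ∈ ℤ/Pℤ; form the graph on the index set {1,…,l} in which i and j are joined by an edge if and only if y_i − y_j ∈ S', and suppose this graph has exactly r connected components. Then |(C − y_1) ∩ ⋯ ∩ (C − y_l)| ≤ c(r)·P·d(C)^r/β^r. -/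
theorem stmt12
    (P : ℕ) [Fact P.Prime] (C S' : Finset (ZMod P))
    (h0 : (0 : ZMod P) ∈ S') (hneg : ∀ x ∈ S', -x ∈ S')
    (cj : ℕ → ℝ) (hcj : ∀ j, 2 ≤ j → 0 < cj j) (hcj1 : cj 1 = 1)
    (β : ℝ) (hβ : 0 < β) (hβ1 : β ≤ 1)
    (hyp : ∀ j : ℕ, 2 ≤ j → ∀ h : Fin j → ZMod P,
      (∀ i u, i ≠ u → h i - h u ∉ S') →
      ((Finset.univ.filter (fun n : ZMod P => ∀ i, n - h i ∈ C)).card : ℝ) / (P : ℝ)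
        ≤ cj j * ((C.card : ℝ) / (P : ℝ)) ^ j / β ^ j)
    (l : ℕ) (hl : 2 ≤ l) (y : Fin l → ZMod P) (r : ℕ)
    (hr : Nat.card
      (SimpleGraph.fromRel (fun i j : Fin l => y i - y j ∈ S')).ConnectedComponent = r) :
    ((Finset.univ.filter (fun n : ZMod P => ∀ i, n + y i ∈ C)).card : ℝ)
      ≤ cj r * (P : ℝ) * ((C.card : ℝ) / (P : ℝ)) ^ r / β ^ r := by
  classical
  have hP : (0 : ℝ) < P := by exact_mod_cast (Fact.out : P.Prime).pos
  set G := SimpleGraph.fromRel (fun i j : Fin l => y i - y j ∈ S') with hG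
  haveI : Finite G.ConnectedComponent := Quot.finite _
  haveI : Nonempty G.ConnectedComponent := ⟨G.connectedComponentMk ⟨0, by omega⟩⟩
  have hr0 : 0 < r := hr ▸ Nat.card_pos
  rcases Nat.lt_or_ge r 2 with h2 | h2
  · obtain rfl : r = 1 := by omega
    have h1 : (Finset.univ.filter (fun n : ZMod P => ∀ i, n + y i ∈ C)).card ≤ C.card := by
      apply Finset.card_le_card_of_injOn (fun n => n + y ⟨0, by omega⟩)
      · intro n hn
        have := (Finset.mem_filter.mp hn).2
        exact this _
      · intro a _ b _ hab
        exact add_right_cancel hab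
    have h1' : ((Finset.univ.filter (fun n : ZMod P => ∀ i, n + y i ∈ C)).card : ℝ) ≤ C.card := by
      exact_mod_cast h1
    have e : cj 1 * (P : ℝ) * ((C.card : ℝ) / (P : ℝ)) ^ 1 / β ^ 1 = C.card / β := by
      rw [hcj1]; field_simp
    rw [e]
    exact h1'.trans (le_div_self (Nat.cast_nonneg _) hβ hβ1)
  · have e : Fin r ≃ G.ConnectedComponent := (Finite.equivFinOfCardEq hr).symm
    have hrep : ∀ k : Fin r, ∃ i : Fin l, G.connectedComponentMk i = e k :=
      fun k => Quot.exists_rep (e k)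
    choose g hg using hrep
    have key := hyp r h2 (fun k => - y (g k)) (by
      intro i u hiu hmem
      have hc : e i ≠ e u := fun h => hiu (e.injective h)
      apply hc
      rw [← hg i, ← hg u]
      apply SimpleGraph.ConnectedComponent.sound
      have hne : g i ≠ g u := fun h => hc (by rw [← hg i, ← hg u, h])
      apply SimpleGraph.Adj.reachable
      rw [hG, SimpleGraph.fromRel_adj]
      refine ⟨hne, Or.inr ?_⟩
      have : y (g u) - y (g i) = - y (g i) - - y (g u) := by ring
      rw [this]; exact hmem)
    have hle : (Finset.univ.filter (fun n : ZMod P => ∀ i, n + y i ∈ C)).card ≤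
        (Finset.univ.filter (fun n : ZMod P => ∀ k : Fin r, n - - y (g k) ∈ C)).card := by
      apply Finset.card_le_card
      intro n hn
      have := (Finset.mem_filter.mp hn).2
      refine Finset.mem_filter.mpr ⟨Finset.mem_univ _, fun k => ?_⟩
      rw [sub_neg_eq_add]; exact this _
    rw [div_le_iff₀ hP] at key
    refine (Nat.cast_le.mpr hle).trans (le_of_le_of_eq ?_ (?_ : cj r * ((C.card : ℝ) / (P : ℝ)) ^ r / β ^ r * P = _))
    · convert key
    · ring
end

section
/- Let P be a prime, let S' ⊆ ℤ/Pℤ with 0 ∈ S', S' = −S' and |S'| ≤ t, let B ⊆ ℤ/Pℤ, let l ≥ 2 be an integer and let 1 ≤ r ≤ l. Then the number of tuples (y_1, …, y_l) ∈ B^l such that the graph on {1,…,l} with an edge between i and j if and only if y_i − y_j ∈ S' has exactly r connected components is at most C(l,r)·(rt)^{2l²}·|B|^r, where C(l,r) denotes the binomial coefficient l choose r. -/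
theorem walk_aux {P : ℕ} (S' : Finset (ZMod P)) (h0 : (0 : ZMod P) ∈ S')
    (hneg : ∀ x ∈ S', -x ∈ S') {l : ℕ} (y : Fin l → ZMod P) (n : ℕ) :
    ∀ (u v : Fin l) (p : (SimpleGraph.fromRel
          (fun i j : Fin l => y i - y j ∈ S')).Walk u v), p.length ≤ n →
      ∃ s : Fin n → S', y u = y v + ∑ k, (s k : ZMod P) := by
  induction n with
  | zero =>
    intro u v p hp
    have := SimpleGraph.Walk.eq_of_length_eq_zero (p := p) (by omega)
    subst this
    exact ⟨fun k => k.elim0, by simp⟩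
  | succ n ih =>
    intro u v p hp
    cases p with
    | nil => exact ⟨fun _ => ⟨0, h0⟩, by simp⟩
    | @cons _ w _ h q =>
      obtain ⟨s, hs⟩ := ih w v q (by simpa using hp)
      have hm : y u - y w ∈ S' := by
        rw [SimpleGraph.fromRel_adj] at h
        rcases h.2 with h | h
        · exact h
        · simpa using hneg _ h
      refine ⟨Fin.cons ⟨_, hm⟩ s, ?_⟩
      rw [Fin.sum_univ_succ]
      simp only [Fin.cons_zero, Fin.cons_succ]
      linear_combination hs

theorem stmt14
    (P : ℕ) [Fact P.Prime] (t : ℕ) (S' : Finset (ZMod P))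
    (h0 : (0 : ZMod P) ∈ S') (hneg : ∀ x ∈ S', -x ∈ S') (hcard : S'.card ≤ t)
    (B : Finset (ZMod P)) (l : ℕ) (hl : 2 ≤ l) (r : ℕ) (hr1 : 1 ≤ r) (hrl : r ≤ l) :
    Set.ncard {y : Fin l → ZMod P | (∀ i, y i ∈ B) ∧
        Nat.card (SimpleGraph.fromRel
          (fun i j : Fin l => y i - y j ∈ S')).ConnectedComponent = r}
      ≤ Nat.choose l r * (r * t) ^ (2 * l ^ 2) * B.card ^ r := by
  let F : ((Fin r → B) × (Fin l → Fin r) × (Fin l → Fin l → S')) → (Fin l → ZMod P) :=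
    fun x i => (x.1 (x.2.1 i) : ZMod P) + ∑ k, (x.2.2 i k : ZMod P)
  have hsub : {y : Fin l → ZMod P | (∀ i, y i ∈ B) ∧
        Nat.card (SimpleGraph.fromRel
          (fun i j : Fin l => y i - y j ∈ S')).ConnectedComponent = r} ⊆ F '' Set.univ := by
    rintro y ⟨hB, hc⟩
    let e := Finite.equivFinOfCardEq hc
    have key : ∀ i, ∃ s : Fin l → S', y i = y ((SimpleGraph.fromRel
          (fun i j : Fin l => y i - y j ∈ S')).connectedComponentMk i).out
            + ∑ k, (s k : ZMod P) := by
      intro i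
      have hre : (SimpleGraph.fromRel (fun i j : Fin l => y i - y j ∈ S')).Reachable i
          ((SimpleGraph.fromRel
          (fun i j : Fin l => y i - y j ∈ S')).connectedComponentMk i).out := by
        rw [← SimpleGraph.ConnectedComponent.eq]
        exact (Quot.out_eq _).symm
      obtain ⟨p, hp⟩ := hre.exists_isPath
      have := hp.length_lt
      rw [Fintype.card_fin] at this
      exact walk_aux S' h0 hneg y l _ _ p this.le
    choose s hs using key
    refine ⟨(fun k => ⟨y (e.symm k).out, hB _⟩, fun i => e (SimpleGraph.connectedComponentMk _ i),
      s), trivial, ?_⟩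
    funext i
    simp only [F, Equiv.symm_apply_apply]
    exact (hs i).symm
  have h1 := (Set.ncard_le_ncard hsub (Set.toFinite _)).trans (Set.ncard_image_le (Set.toFinite _))
  rw [Set.ncard_univ, Nat.card_eq_fintype_card] at h1
  simp only [Fintype.card_prod, Fintype.card_fun, Fintype.card_fin, Fintype.card_coe] at h1
  have ht : 1 ≤ t := (Finset.card_pos.mpr ⟨0, h0⟩).trans_le hcard
  have h2 : r ^ l * (S'.card ^ l) ^ l ≤ (r * t) ^ (2 * l ^ 2) := by
    rw [mul_pow, ← pow_mul]
    refine Nat.mul_le_mul (Nat.pow_le_pow_right hr1 (by nlinarith)) ?_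
    exact (Nat.pow_le_pow_left hcard _).trans (Nat.pow_le_pow_right ht (by nlinarith))
  have h3 : 1 ≤ Nat.choose l r := Nat.choose_pos hrl
  calc _ ≤ _ := h1
    _ ≤ B.card ^ r * (r * t) ^ (2 * l ^ 2) := Nat.mul_le_mul_left _ h2
    _ = 1 * (r * t) ^ (2 * l ^ 2) * B.card ^ r := by ring
    _ ≤ _ := by gcongr
end

section
/- (Varnavides-type theorem.) Let L be a translation invariant linear equation in s variables and let g_L be a function as described. Let η ∈ (0,1], let P be a prime, and let D ⊆ ℤ/Pℤ with |D| ≥ ηP. Then the number of tuples (x_1, …, x_s) ∈ D^s with c_1x_1 + ⋯ + c_sx_s = 0 in ℤ/Pℤ is at least (η/2)·P(P−1)/(g_L^{*−1}(η/2))². -/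
theorem stmt15
    (s : ℕ) (cc : Fin s → ℤ) (hcc : ∀ i, cc i ≠ 0) (hti : ∑ i, cc i = 0)
    (gL : ℕ → ℝ) (hg0 : ∀ N, 0 ≤ gL N) (hganti : Antitone gL)
    (hglim : Filter.Tendsto gL Filter.atTop (nhds 0))
    (hgprop : ∀ N : ℕ, 1 ≤ N → ∀ A : Finset ℕ, A ⊆ Finset.Icc 1 N →
      gL N * (N : ℝ) ≤ (A.card : ℝ) →
      ∃ x : Fin s → ℕ, (∀ i, x i ∈ A) ∧
        (∑ i, cc i * (x i : ℤ)) = 0 ∧ ∃ i j, x i ≠ x j)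
    (η : ℝ) (hη : 0 < η) (hη1 : η ≤ 1)
    (P : ℕ) [Fact P.Prime] (D : Finset (ZMod P)) (hD : η * (P : ℝ) ≤ (D.card : ℝ)) :
    (η / 2) * ((P : ℝ) * ((P : ℝ) - 1)) /
        ((sInf {m : ℕ | gL m ≤ η / 2} : ℕ) : ℝ) ^ 2
      ≤ ((Finset.univ.filter (fun x : Fin s → ZMod P =>
          (∀ i, x i ∈ D) ∧ ∑ i, (cc i : ZMod P) * x i = 0)).card : ℝ) := by
  classical
  have hP : P.Prime := Fact.out
  have hPpos : (1:ℝ) ≤ P := by exact_mod_cast hP.one_lt.le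
  set M := sInf {m : ℕ | gL m ≤ η / 2} with hM
  have hne : {m : ℕ | gL m ≤ η / 2}.Nonempty := by
    have := hglim.eventually (ge_mem_nhds (show (0:ℝ) < η/2 by linarith))
    exact this.exists
  have hMg : gL M ≤ η / 2 := Nat.sInf_mem hne
  rcases Nat.eq_zero_or_pos M with h0 | hMpos
  · rw [h0]; simp
  have hMr : (1:ℝ) ≤ M := by exact_mod_cast hMpos
  set S := Finset.univ.filter (fun x : Fin s → ZMod P =>
          (∀ i, x i ∈ D) ∧ ∑ i, (cc i : ZMod P) * x i = 0) with hS
  have htz : ∑ i, (cc i : ZMod P) = 0 := by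
    have := congrArg (Int.cast : ℤ → ZMod P) hti
    simpa using this
  rw [div_le_iff₀ (by positivity)]
  rcases le_or_gt P M with hPM | hMP
  · -- trivial solutions
    obtain ⟨x, -, -, i0, -⟩ := hgprop M hMpos (Finset.Icc 1 M) (Finset.Subset.refl _) (by
      simp only [Nat.card_Icc, Nat.add_sub_cancel]
      nlinarith)
    have hc : D.card ≤ S.card := by
      apply Finset.card_le_card_of_injOn (fun d => fun _ : Fin s => d)
      · intro d hd
        have hd' : d ∈ D := by simpa using hd
        simp [hS, ← Finset.sum_mul, htz, hd']
      · intro a _ b _ h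
        exact congrFun h i0
    have hc' : (D.card : ℝ) ≤ S.card := by exact_mod_cast hc
    have hPM' : (P:ℝ) ≤ M := by exact_mod_cast hPM
    have h1 : η * P ≤ S.card := hD.trans hc'
    have h2 : (P:ℝ) - 1 ≤ (M:ℝ)^2 := by nlinarith
    have h3 : 0 ≤ η * P := by positivity
    calc η / 2 * ((P:ℝ) * (P - 1)) = (η * P) * ((P - 1)/2) := by ring
      _ ≤ (η * P) * (M:ℝ)^2 := by
        apply mul_le_mul_of_nonneg_left _ h3
        linarith
      _ ≤ _ := by gcongr
  let A : ZMod P × ZMod P → Finset ℕ := fun p =>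
    (Finset.Icc 1 M).filter (fun j => p.1 + (j : ZMod P) * p.2 ∈ D)
  let G : Finset (ZMod P × ZMod P) :=
    Finset.univ.filter (fun p => p.2 ≠ 0 ∧ η / 2 * M ≤ ((A p).card : ℝ))
  -- every good pair yields a solution
  have hsol : ∀ p : ZMod P × ZMod P, ∃ x : Fin s → ℕ, p ∈ G →
      (∀ i, x i ∈ A p) ∧ (∑ i, cc i * (x i : ℤ)) = 0 ∧ ∃ i j, x i ≠ x j := by
    intro p
    by_cases hp : p ∈ G
    · obtain ⟨x, hx⟩ := hgprop M hMpos (A p) (Finset.filter_subset _ _) (by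
        have := (Finset.mem_filter.1 hp).2.2
        nlinarith)
      exact ⟨x, fun _ => hx⟩
    · exact ⟨fun _ => 0, fun h => absurd h hp⟩
  choose X hX using hsol
  let F : ZMod P × ZMod P → (Fin s → ZMod P) := fun p i => p.1 + (X p i : ZMod P) * p.2
  have hXA : ∀ p ∈ G, ∀ i, X p i ∈ Finset.Icc 1 M ∧ F p i ∈ D := by
    intro p hp i
    exact Finset.mem_filter.1 ((hX p hp).1 i)
  have hmaps : ∀ p ∈ G, F p ∈ S := by
    intro p hp
    refine Finset.mem_filter.2 ⟨Finset.mem_univ _, fun i => (hXA p hp i).2, ?_⟩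
    have h1 := congrArg (Int.cast : ℤ → ZMod P) (hX p hp).2.1
    push_cast at h1
    calc ∑ i, (cc i : ZMod P) * (p.1 + (X p i : ZMod P) * p.2)
        = (∑ i, (cc i : ZMod P)) * p.1 + (∑ i, (cc i : ZMod P) * (X p i : ZMod P)) * p.2 := by
          rw [Finset.sum_mul, Finset.sum_mul, ← Finset.sum_add_distrib]
          exact Finset.sum_congr rfl fun i _ => by ring
      _ = 0 := by rw [htz, h1]; ring
  have hfib : ∀ y ∈ S, (G.filter (fun p => F p = y)).card ≤ M ^ 2 := by
    intro y _
    rcases (G.filter (fun p => F p = y)).eq_empty_or_nonempty with he | ⟨q, hq⟩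
    · rw [he]; simp
    obtain ⟨hqG, hqy⟩ := Finset.mem_filter.1 hq
    obtain ⟨i, j, hij⟩ := (hX q hqG).2.2
    have hq2 : q.2 ≠ 0 := (Finset.mem_filter.1 hqG).2.1
    have hyij : y i ≠ y j := by
      rw [← hqy]
      intro h
      have h' : (X q i : ZMod P) = X q j := by
        have h2 : q.1 + (X q i : ZMod P) * q.2 = q.1 + (X q j : ZMod P) * q.2 := h
        exact mul_right_cancel₀ hq2 (add_left_cancel h2)
      rw [ZMod.natCast_eq_natCast_iff] at h'
      have hi := Finset.mem_Icc.1 (hXA q hqG i).1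
      have hj := Finset.mem_Icc.1 (hXA q hqG j).1
      exact hij (Nat.ModEq.eq_of_lt_of_lt h' (by omega) (by omega))
    have : (G.filter (fun p => F p = y)).card ≤ (Finset.Icc 1 M ×ˢ Finset.Icc 1 M).card := by
      apply Finset.card_le_card_of_injOn (fun p => (X p i, X p j))
      · intro p hp
        have hpG := (Finset.mem_filter.1 hp).1
        exact Finset.mem_product.2 ⟨(hXA p hpG i).1, (hXA p hpG j).1⟩
      · intro p hp r hr hpr
        have hpy := (Finset.mem_filter.1 hp).2
        have hry := (Finset.mem_filter.1 hr).2
        have e1 : X p i = X r i := congrArg Prod.fst hpr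
        have e2 : X p j = X r j := congrArg Prod.snd hpr
        have a1 : p.1 + (X p i : ZMod P) * p.2 = y i := congrFun hpy i
        have a2 : p.1 + (X p j : ZMod P) * p.2 = y j := congrFun hpy j
        have b1 : r.1 + (X r i : ZMod P) * r.2 = y i := congrFun hry i
        have b2 : r.1 + (X r j : ZMod P) * r.2 = y j := congrFun hry j
        rw [← e1] at b1
        rw [← e2] at b2
        have hne0 : (X p i : ZMod P) - X p j ≠ 0 := by
          intro h
          apply hyij
          linear_combination (-1 : ZMod P) * a1 + a2 + p.2 * h
        have d2 : p.2 = r.2 := by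
          apply mul_left_cancel₀ hne0
          linear_combination a1 - a2 - b1 + b2
        have d1 : p.1 = r.1 := by
          rw [d2] at a1
          linear_combination a1 - b1
        exact Prod.ext d1 d2
    simpa [sq] using this
  have hGS : G.card ≤ M ^ 2 * S.card :=
    Finset.card_le_mul_card_image_of_maps_to hmaps _ hfib
  have hGS' : (G.card : ℝ) ≤ (M:ℝ) ^ 2 * S.card := by exact_mod_cast hGS
  -- lower bound for good pairs
  have hrow : ∀ d : ZMod P, η / 2 * P ≤
      ((Finset.univ.filter (fun a : ZMod P => η / 2 * M ≤ ((A (a, d)).card : ℝ))).card : ℝ) := by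
    intro d
    set B := Finset.univ.filter (fun a : ZMod P => η / 2 * M ≤ ((A (a, d)).card : ℝ)) with hB
    have hsum : ∑ a : ZMod P, (A (a, d)).card = M * D.card := by
      have : ∀ a : ZMod P, (A (a, d)).card
          = ∑ j ∈ Finset.Icc 1 M, if a + (j : ZMod P) * d ∈ D then 1 else 0 := by
        intro a
        exact Finset.card_filter _ _
      simp_rw [this]
      rw [Finset.sum_comm]
      have h2 : ∀ j ∈ Finset.Icc 1 M,
          (∑ a : ZMod P, if a + (j : ZMod P) * d ∈ D then 1 else 0) = D.card := by
        intro j _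
        refine (Equiv.sum_comp (Equiv.addRight ((j : ZMod P) * d))
          (fun a => if a ∈ D then (1 : ℕ) else 0)).trans ?_
        simp
      rw [Finset.sum_congr rfl h2]
      simp
    have hsum' : ∑ a : ZMod P, ((A (a, d)).card : ℝ) = M * D.card := by exact_mod_cast hsum
    have hle : ∑ a : ZMod P, ((A (a, d)).card : ℝ) ≤
        ∑ a : ZMod P, (η / 2 * M + if a ∈ B then (M:ℝ) else 0) := by
      apply Finset.sum_le_sum
      intro a _
      have hAM : ((A (a, d)).card : ℝ) ≤ M := by
        have : (A (a, d)).card ≤ (Finset.Icc 1 M).card := Finset.card_filter_le _ _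
        simp only [Nat.card_Icc, Nat.add_sub_cancel] at this
        exact_mod_cast this
      split_ifs with ha
      · have : 0 ≤ η / 2 * M := by positivity
        linarith
      · have : ¬ (η / 2 * M ≤ ((A (a, d)).card : ℝ)) := fun h => ha (by simp [hB, h])
        linarith
    rw [hsum', Finset.sum_add_distrib] at hle
    simp only [Finset.sum_const, Finset.card_univ, ZMod.card, nsmul_eq_mul,
      Finset.sum_ite_mem, Finset.univ_inter] at hle
    have hMD : (M:ℝ) * (η * P) ≤ M * D.card := by gcongr
    have : (M:ℝ) * (η / 2 * P) ≤ M * B.card := by nlinarith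
    exact le_of_mul_le_mul_left this (by linarith)
  have hGcard : (G.card : ℝ) = ∑ d ∈ (Finset.univ : Finset (ZMod P)).erase 0,
      ((Finset.univ.filter (fun a : ZMod P => η / 2 * M ≤ ((A (a, d)).card : ℝ))).card : ℝ) := by
    have h := Finset.card_eq_sum_card_fiberwise (s := G) (f := Prod.snd)
      (t := (Finset.univ : Finset (ZMod P)).erase 0) (by
        intro p hp
        have := (Finset.mem_filter.1 hp).2.1
        simpa using this)
    rw [h, Nat.cast_sum]
    apply Finset.sum_congr rfl
    intro d hd
    congr 1
    symm
    apply Finset.card_bij (fun a _ => (a, d))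
    · intro a ha
      have hd0 : d ≠ 0 := (Finset.mem_erase.1 hd).1
      have := (Finset.mem_filter.1 ha).2
      simp [G, hd0, this]
    · intro a _ b _ h
      exact congrArg Prod.fst h
    · rintro ⟨a, e⟩ hp
      obtain ⟨hp1, hp2⟩ := Finset.mem_filter.1 hp
      have he : e = d := hp2
      subst he
      exact ⟨a, by simpa using (Finset.mem_filter.1 hp1).2.2, rfl⟩
  have hlow : η / 2 * ((P:ℝ) * (P - 1)) ≤ G.card := by
    rw [hGcard]
    have := Finset.card_nsmul_le_sum ((Finset.univ : Finset (ZMod P)).erase 0) _ _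
      (fun d _ => hrow d)
    rw [Finset.card_erase_of_mem (Finset.mem_univ _), Finset.card_univ, ZMod.card,
      nsmul_eq_mul, Nat.cast_sub hP.one_lt.le] at this
    push_cast at this
    linarith
  linarith
end

section
/- Let L be a translation invariant linear equation in s = 3 variables and let g_L be a function as described. Define h_L(η) = η/(2·g_L^{*−1}(η/2))² for η ∈ (0,1]. Then for every η ∈ (0,1], every prime P and every A ⊆ ℤ/Pℤ with |A| ≥ ηP, the number of triples (x_1, x_2, x_3) ∈ A³ with c_1x_1 + c_2x_2 + c_3x_3 = 0 in ℤ/Pℤ is at least h_L(η)·P². -/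
lemma aux_good (P : ℕ) [Fact P.Prime] (A : Finset (ZMod P)) (η : ℝ) (hη : 0 < η)
    (m : ℕ) (hm : 1 ≤ m) (hA : η * (P : ℝ) ≤ (A.card : ℝ)) (d : ZMod P) :
    η / 2 * (P : ℝ) ≤ ((Finset.univ.filter (fun a : ZMod P => η / 2 * (m : ℝ) ≤
      (((Finset.Icc 1 m).filter (fun j : ℕ => a + (j : ZMod P) * d ∈ A)).card : ℝ))).card : ℝ) := by
  classical
  set B : ZMod P → Finset ℕ := fun a =>
    (Finset.Icc 1 m).filter (fun j : ℕ => a + (j : ZMod P) * d ∈ A) with hB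
  set G := Finset.univ.filter (fun a : ZMod P => η / 2 * (m : ℝ) ≤ ((B a).card : ℝ)) with hG
  have hsum : ∑ a : ZMod P, (B a).card = m * A.card := by
    have h1 : ∀ a, (B a).card = ∑ j ∈ Finset.Icc 1 m, if a + (j : ZMod P) * d ∈ A then 1 else 0 := by
      intro a
      rw [hB, Finset.card_filter]
    simp_rw [h1]
    rw [Finset.sum_comm]
    have h2 : ∀ j ∈ Finset.Icc 1 m,
        (∑ a : ZMod P, if a + (j : ZMod P) * d ∈ A then 1 else 0) = A.card := by
      intro j _
      refine (Equiv.sum_comp (Equiv.addRight ((j : ZMod P) * d)) (fun a => if a ∈ A then 1 else 0)).trans ?_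
      simp
    rw [Finset.sum_congr rfl h2]
    simp
  have hbd : ∑ a : ZMod P, ((B a).card : ℝ) ≤
      ∑ a : ZMod P, ((if a ∈ G then (m : ℝ) else 0) + η / 2 * m) := by
    apply Finset.sum_le_sum
    intro a _
    have hle : ((B a).card : ℝ) ≤ m := by
      have := Finset.card_filter_le (Finset.Icc 1 m) (fun j : ℕ => a + (j : ZMod P) * d ∈ A)
      rw [Nat.card_Icc] at this
      exact_mod_cast (by simpa using this)
    by_cases ha : a ∈ G
    · simp only [ha, if_true]
      have : 0 ≤ η / 2 * (m : ℝ) := by positivity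
      linarith
    · simp only [ha, if_false]
      simp only [hG, Finset.mem_filter, Finset.mem_univ, true_and, not_le] at ha
      linarith
  have hsum' : ∑ a : ZMod P, ((B a).card : ℝ) = m * A.card := by exact_mod_cast hsum
  rw [hsum', Finset.sum_add_distrib] at hbd
  simp only [Finset.sum_ite_mem, Finset.univ_inter, Finset.sum_const, Finset.card_univ,
    ZMod.card, nsmul_eq_mul] at hbd
  have hm' : (0 : ℝ) < m := by exact_mod_cast hm
  have : (m : ℝ) * (η * P) ≤ m * A.card := by gcongr
  have h3 : (m : ℝ) * (η / 2 * P) ≤ m * G.card := by nlinarith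
  exact le_of_mul_le_mul_left h3 hm'

theorem stmt16
    (cc : Fin 3 → ℤ) (hcc : ∀ i, cc i ≠ 0) (hti : ∑ i, cc i = 0)
    (gL : ℕ → ℝ) (hg0 : ∀ N, 0 ≤ gL N) (hganti : Antitone gL)
    (hglim : Filter.Tendsto gL Filter.atTop (nhds 0))
    (hgprop : ∀ N : ℕ, 1 ≤ N → ∀ A : Finset ℕ, A ⊆ Finset.Icc 1 N →
      gL N * (N : ℝ) ≤ (A.card : ℝ) →
      ∃ x : Fin 3 → ℕ, (∀ i, x i ∈ A) ∧
        (∑ i, cc i * (x i : ℤ)) = 0 ∧ ∃ i j, x i ≠ x j)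
    (η : ℝ) (hη : 0 < η) (hη1 : η ≤ 1)
    (P : ℕ) [Fact P.Prime] (A : Finset (ZMod P)) (hA : η * (P : ℝ) ≤ (A.card : ℝ)) :
    η / (2 * ((sInf {m : ℕ | gL m ≤ η / 2} : ℕ) : ℝ)) ^ 2 * (P : ℝ) ^ 2
      ≤ ((Finset.univ.filter (fun x : Fin 3 → ZMod P =>
          (∀ i, x i ∈ A) ∧ ∑ i, (cc i : ZMod P) * x i = 0)).card : ℝ) := by
  classical
  set m := sInf {m : ℕ | gL m ≤ η / 2} with hmdef
  have hmem : gL m ≤ η / 2 := by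
    have hne : {m : ℕ | gL m ≤ η / 2}.Nonempty := by
      obtain ⟨n, hn⟩ := (hglim.eventually (gt_mem_nhds (show (0 : ℝ) < η / 2 by positivity))).exists
      exact ⟨n, hn.le⟩
    exact Nat.sInf_mem hne
  clear_value m
  set Sol := Finset.univ.filter (fun x : Fin 3 → ZMod P =>
          (∀ i, x i ∈ A) ∧ ∑ i, (cc i : ZMod P) * x i = 0) with hSol
  have hPp : P.Prime := Fact.out
  have hP2 : (2 : ℝ) ≤ P := by exact_mod_cast hPp.two_le
  have htiP : ∑ i, (cc i : ZMod P) = 0 := by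
    have := congrArg (Int.cast : ℤ → ZMod P) hti
    simpa using this
  rcases Nat.eq_zero_or_pos m with h0 | hm
  · subst h0
    simp
  have hm' : (1 : ℝ) ≤ m := by exact_mod_cast hm
  rcases lt_or_ge P m with hPm | hmP
  · have hle : A.card ≤ Sol.card := by
      apply Finset.card_le_card_of_injOn (fun a => fun _ => a)
      · intro a ha
        have ha : a ∈ A := ha
        simp [hSol, ha, ← Finset.sum_mul, htiP]
      · intro a _ b _ h
        exact congrFun h 0
    have hle' : (A.card : ℝ) ≤ Sol.card := by exact_mod_cast hle
    have hPm' : (P : ℝ) ≤ m := by exact_mod_cast hPm.le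
    have : η / (2 * (m : ℝ)) ^ 2 * (P : ℝ) ^ 2 ≤ η * P := by
      rw [div_mul_eq_mul_div, div_le_iff₀ (by positivity)]
      have : (P : ℝ) ^ 2 ≤ P * (2 * (m : ℝ)) ^ 2 := by nlinarith
      nlinarith
    linarith
  set G : ZMod P → Finset (ZMod P) := fun d =>
    Finset.univ.filter (fun a : ZMod P => η / 2 * (m : ℝ) ≤
      (((Finset.Icc 1 m).filter (fun j : ℕ => a + (j : ZMod P) * d ∈ A)).card : ℝ)) with hG
  set S : Finset (Σ _ : ZMod P, ZMod P) := (Finset.univ.erase (0 : ZMod P)).sigma G with hS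
  have hScard : ((P : ℝ) - 1) * (η / 2 * P) ≤ S.card := by
    rw [hS, Finset.card_sigma]
    push_cast
    have : ∑ d ∈ Finset.univ.erase (0 : ZMod P), (η / 2 * (P : ℝ)) ≤
        ∑ d ∈ Finset.univ.erase (0 : ZMod P), ((G d).card : ℝ) :=
      Finset.sum_le_sum (fun d _ => aux_good P A η hη m hm hA d)
    rw [Finset.sum_const, Finset.card_erase_of_mem (Finset.mem_univ _), Finset.card_univ,
      ZMod.card, nsmul_eq_mul, Nat.cast_sub hPp.one_le] at this
    simpa using this
  have hex : ∀ p : (Σ _ : ZMod P, ZMod P), ∃ x : Fin 3 → ℕ, p ∈ S →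
      (∀ i, x i ∈ Finset.Icc 1 m) ∧ (fun i => p.2 + (x i : ZMod P) * p.1) ∈ Sol ∧
      ∃ i j, p.2 + (x i : ZMod P) * p.1 ≠ p.2 + (x j : ZMod P) * p.1 := by
    intro p
    by_cases hp : p ∈ S
    swap
    · exact ⟨fun _ => 0, fun h => absurd h hp⟩
    obtain ⟨d, a⟩ := p
    simp only [hS, hG, Finset.mem_sigma, Finset.mem_erase, Finset.mem_univ, and_true,
      Finset.mem_filter, true_and, ne_eq] at hp
    obtain ⟨hd, ha⟩ := hp
    obtain ⟨x, hx, hx0, i, j, hij⟩ := hgprop m hm _ (Finset.filter_subset _ _)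
      (le_trans (mul_le_mul_of_nonneg_right hmem (by positivity)) ha)
    refine ⟨x, fun _ => ⟨fun i => (Finset.mem_filter.1 (hx i)).1, ?_, i, j, ?_⟩⟩
    · simp only [hSol, Finset.mem_filter, Finset.mem_univ, true_and]
      refine ⟨fun i => (Finset.mem_filter.1 (hx i)).2, ?_⟩
      have h1 := congrArg (Int.cast : ℤ → ZMod P) hx0
      push_cast at h1
      have h2 : ∑ i, (cc i : ZMod P) * (a + (x i : ZMod P) * d) =
          (∑ i, (cc i : ZMod P)) * a + (∑ i, (cc i : ZMod P) * (x i : ZMod P)) * d := by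
        rw [Finset.sum_mul, Finset.sum_mul, ← Finset.sum_add_distrib]
        exact Finset.sum_congr rfl (fun i _ => by ring)
      rw [h2, htiP, h1]
      ring
    · intro h
      have h1 : (x i : ZMod P) = x j := mul_right_cancel₀ hd (add_left_cancel h)
      rw [ZMod.natCast_eq_natCast_iff] at h1
      have hi := Finset.mem_Icc.1 (Finset.mem_filter.1 (hx i)).1
      have hj := Finset.mem_Icc.1 (Finset.mem_filter.1 (hx j)).1
      have h2 := (Nat.modEq_iff_dvd.1 h1)
      have h3 : ((x j : ℤ) - x i) = 0 := by
        apply Int.eq_zero_of_abs_lt_dvd h2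
        rw [abs_lt]
        constructor <;> omega
      omega
  choose X hX using hex
  have hpair : ∀ y : Fin 3 → ZMod P, ∃ q : Fin 3 × Fin 3,
      (∃ i j, y i ≠ y j) → y q.1 ≠ y q.2 := by
    intro y
    by_cases h : ∃ i j, y i ≠ y j
    · obtain ⟨i, j, h⟩ := h
      exact ⟨(i, j), fun _ => h⟩
    · exact ⟨(0, 0), fun h' => absurd h' h⟩
  choose Q hQ using hpair
  let Y : (Σ _ : ZMod P, ZMod P) → Fin 3 → ZMod P := fun p i => p.2 + (X p i : ZMod P) * p.1
  have hcard : S.card ≤ (Sol ×ˢ (Finset.Icc 1 m ×ˢ Finset.Icc 1 m)).card := by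
    apply Finset.card_le_card_of_injOn
      (fun p => (Y p, (X p (Q (Y p)).1, X p (Q (Y p)).2)))
    · intro p hp
      obtain ⟨h1, h2, _⟩ := hX p hp
      exact Finset.mem_product.2 ⟨h2, Finset.mem_product.2 ⟨h1 _, h1 _⟩⟩
    · intro p hp p' hp' h
      simp only [Prod.mk.injEq] at h
      obtain ⟨hy, hi, hj⟩ := h
      have hne := hQ (Y p) (hX p hp).2.2
      rw [← hy] at hi hj
      have e1 := congrFun hy (Q (Y p)).1
      have e2 := congrFun hy (Q (Y p)).2
      generalize Q (Y p) = q at *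
      simp only [Y] at e1 e2 hne
      rw [← hi] at e1
      rw [← hj] at e2
      have hd : p.1 = p'.1 := by
        have h5 : ((X p q.1 : ZMod P) - X p q.2) * (p.1 - p'.1) = 0 := by
          linear_combination e1 - e2
        rcases mul_eq_zero.1 h5 with h | h
        · exact absurd (by rw [sub_eq_zero.1 h]) hne
        · exact sub_eq_zero.1 h
      have ha : p.2 = p'.2 := by
        rw [hd] at e1
        exact add_right_cancel e1
      obtain ⟨d, a⟩ := p
      obtain ⟨d', a'⟩ := p'
      simp only at hd ha
      subst hd ha
      rfl
  rw [Finset.card_product, Finset.card_product, Nat.card_Icc, Nat.add_sub_cancel] at hcard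
  have hcard' : (S.card : ℝ) ≤ Sol.card * (m * m) := by exact_mod_cast hcard
  rw [div_mul_eq_mul_div, div_le_iff₀ (by positivity)]
  have : η * (P : ℝ) ^ 2 ≤ 4 * (((P : ℝ) - 1) * (η / 2 * P)) := by
    have : 0 ≤ η * P * ((P : ℝ) - 2) := mul_nonneg (by positivity) (by linarith)
    nlinarith
  nlinarith
end
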